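/- arXiv:2401.10093 — 4 statements merged into one kernel-verified Lean document; each statement's English description precedes it below -/
import Mathlib

section
/- Let Z : ℤ⁴ → ℂ be a central charge whose values on the four standard basis vectors lie in ℍ, set θ := φ(1,1,0,0), and assume: (a) for every nonzero d ∈ ℕ⁴ one has φ(d) = θ if and only if d lies in the subgroup of ℤ⁴ generated by (1,1,0,0) and (0,0,1,1); (b) φ(0,1,0,0) < θ < φ(0,0,1,0); (c) φ(0,0,0,1) < θ < φ(1,0,0,0). Then a nonzero representation of the quiver with potential (Q, W) whose phase equals θ is stable if and only if it is isomorphic to M(b₁), M(c₂) or M(b₂a₃c₁); in particular, up to isomorphism there are precisely three stable representations of phase θ. -/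
/-!
# Statement 1

Work over `ℂ`.  Let `Q` be the quiver with vertices `A, B, C, D` and arrows
`a₁, a₂ : D → A`, `b₁ : A → B`, `b₂ : A → C`, `a₃ : C → B`, `c₁ : B → D`, `c₂ : C → D`,
with potential `W = a₁b₁c₁ + a₂b₂c₂`, whose Jacobian relations are `f_{b₁}∘f_{a₁} = 0`,
`f_{c₁}∘f_{b₁} = 0`, `f_{a₁}∘f_{c₁} = 0`, `f_{b₂}∘f_{a₂} = 0`, `f_{c₂}∘f_{b₂} = 0`,
`f_{a₂}∘f_{c₂} = 0`.

Let `Z : ℤ⁴ → ℂ` be a central charge whose values on the four standard basis vectors lie in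
`ℍ`, set `θ := φ(1,1,0,0)`, and assume: (a) for every nonzero `d ∈ ℕ⁴` one has `φ(d) = θ`
iff `d` lies in the subgroup of `ℤ⁴` generated by `(1,1,0,0)` and `(0,0,1,1)`;
(b) `φ(0,1,0,0) < θ < φ(0,0,1,0)`; (c) `φ(0,0,0,1) < θ < φ(1,0,0,0)`.  Then a nonzero
representation of `(Q, W)` whose phase equals `θ` is stable if and only if it is isomorphic
to `M(b₁)`, `M(c₂)` or `M(b₂a₃c₁)`; in particular, up to isomorphism there are precisely
three stable representations of phase `θ`.

(Dimension vectors are ordered `(dim V_A, dim V_B, dim V_C, dim V_D)`.)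
-/

noncomputable section
open Module

/-- The set `ℍ = {r·exp(iπφ) : r > 0, 0 < φ ≤ 1} ⊆ ℂ`. -/
def UpperH : Set ℂ :=
  {z | ∃ r φ : ℝ, 0 < r ∧ 0 < φ ∧ φ ≤ 1 ∧ z = (r : ℂ) * Complex.exp ((Real.pi * φ : ℝ) * Complex.I)}

/-- The phase `φ ∈ (0, 1]` of a complex number `z ∈ ℍ`: if `z = r·exp(iπφ)` with `r > 0` and
`0 < φ ≤ 1`, then `Complex.arg z = π·φ`, so that `phase z = φ` is the unique `φ ∈ (0,1]`
with `z ∈ ℝ_{>0}·exp(iπφ)`. -/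
def phase (z : ℂ) : ℝ := Complex.arg z / Real.pi

/-- A representation of the quiver `Q` (vertices `A, B, C, D`; arrows `a₁, a₂ : D → A`,
`b₁ : A → B`, `b₂ : A → C`, `a₃ : C → B`, `c₁ : B → D`, `c₂ : C → D`) satisfying the
Jacobian relations of the potential `W = a₁b₁c₁ + a₂b₂c₂`. -/
structure Rep4 where
  VA : Type
  VB : Type
  VC : Type
  VD : Type
  [acgA : AddCommGroup VA]
  [acgB : AddCommGroup VB]
  [acgC : AddCommGroup VC]
  [acgD : AddCommGroup VD]
  [modA : Module ℂ VA]
  [modB : Module ℂ VB]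
  [modC : Module ℂ VC]
  [modD : Module ℂ VD]
  [fdA : FiniteDimensional ℂ VA]
  [fdB : FiniteDimensional ℂ VB]
  [fdC : FiniteDimensional ℂ VC]
  [fdD : FiniteDimensional ℂ VD]
  fa1 : VD →ₗ[ℂ] VA
  fa2 : VD →ₗ[ℂ] VA
  fb1 : VA →ₗ[ℂ] VB
  fb2 : VA →ₗ[ℂ] VC
  fa3 : VC →ₗ[ℂ] VB
  fc1 : VB →ₗ[ℂ] VD
  fc2 : VC →ₗ[ℂ] VD
  rel_ba1 : fb1 ∘ₗ fa1 = 0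
  rel_cb1 : fc1 ∘ₗ fb1 = 0
  rel_ac1 : fa1 ∘ₗ fc1 = 0
  rel_ba2 : fb2 ∘ₗ fa2 = 0
  rel_cb2 : fc2 ∘ₗ fb2 = 0
  rel_ac2 : fa2 ∘ₗ fc2 = 0

attribute [instance] Rep4.acgA Rep4.acgB Rep4.acgC Rep4.acgD Rep4.modA Rep4.modB Rep4.modC
  Rep4.modD Rep4.fdA Rep4.fdB Rep4.fdC Rep4.fdD

namespace Rep4

/-- The dimension vector `(dim V_A, dim V_B, dim V_C, dim V_D)`. -/
def dimVec (M : Rep4) : ℕ × ℕ × ℕ × ℕ :=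
  (finrank ℂ M.VA, finrank ℂ M.VB, finrank ℂ M.VC, finrank ℂ M.VD)

/-- A subrepresentation: a quadruple of submodules closed under the seven structure maps. -/
structure Sub (M : Rep4) where
  SA : Submodule ℂ M.VA
  SB : Submodule ℂ M.VB
  SC : Submodule ℂ M.VC
  SD : Submodule ℂ M.VD
  mapsto_a1 : ∀ x ∈ SD, M.fa1 x ∈ SA
  mapsto_a2 : ∀ x ∈ SD, M.fa2 x ∈ SA
  mapsto_b1 : ∀ x ∈ SA, M.fb1 x ∈ SB
  mapsto_b2 : ∀ x ∈ SA, M.fb2 x ∈ SC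
  mapsto_a3 : ∀ x ∈ SC, M.fa3 x ∈ SB
  mapsto_c1 : ∀ x ∈ SB, M.fc1 x ∈ SD
  mapsto_c2 : ∀ x ∈ SC, M.fc2 x ∈ SD

/-- The dimension vector of a subrepresentation. -/
def Sub.dimVec {M : Rep4} (L : M.Sub) : ℕ × ℕ × ℕ × ℕ :=
  (finrank ℂ L.SA, finrank ℂ L.SB, finrank ℂ L.SC, finrank ℂ L.SD)

/-- The subrepresentation is nonzero. -/
def Sub.Nonzero {M : Rep4} (L : M.Sub) : Prop :=
  L.SA ≠ ⊥ ∨ L.SB ≠ ⊥ ∨ L.SC ≠ ⊥ ∨ L.SD ≠ ⊥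

/-- The subrepresentation is proper. -/
def Sub.Proper {M : Rep4} (L : M.Sub) : Prop :=
  L.SA ≠ ⊤ ∨ L.SB ≠ ⊤ ∨ L.SC ≠ ⊤ ∨ L.SD ≠ ⊤

end Rep4

/-- The value of the central charge on a dimension vector in `ℕ⁴`. -/
def chargeOf4 (Z : ℤ × ℤ × ℤ × ℤ →+ ℂ) (d : ℕ × ℕ × ℕ × ℕ) : ℂ :=
  Z ((d.1 : ℤ), (d.2.1 : ℤ), (d.2.2.1 : ℤ), (d.2.2.2 : ℤ))

/-- A nonzero representation `M` is stable if `φ(dim L) < φ(dim M)` for every nonzero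
proper subrepresentation `L` of `M`. -/
def IsStable4 (Z : ℤ × ℤ × ℤ × ℤ →+ ℂ) (M : Rep4) : Prop :=
  M.dimVec ≠ (0, 0, 0, 0) ∧
    ∀ L : M.Sub, L.Nonzero → L.Proper →
      phase (chargeOf4 Z L.dimVec) < phase (chargeOf4 Z M.dimVec)

/-- Isomorphism of representations. -/
def RepIso4 (M N : Rep4) : Prop :=
  ∃ (eA : M.VA ≃ₗ[ℂ] N.VA) (eB : M.VB ≃ₗ[ℂ] N.VB) (eC : M.VC ≃ₗ[ℂ] N.VC)
    (eD : M.VD ≃ₗ[ℂ] N.VD),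
    (∀ x, eA (M.fa1 x) = N.fa1 (eD x)) ∧ (∀ x, eA (M.fa2 x) = N.fa2 (eD x)) ∧
    (∀ x, eB (M.fb1 x) = N.fb1 (eA x)) ∧ (∀ x, eC (M.fb2 x) = N.fb2 (eA x)) ∧
    (∀ x, eB (M.fa3 x) = N.fa3 (eC x)) ∧ (∀ x, eD (M.fc1 x) = N.fc1 (eB x)) ∧
    (∀ x, eD (M.fc2 x) = N.fc2 (eC x))

/-- The string module `M(b₁)`: `V_A = V_B = ℂ`, `V_C = V_D = 0`, `f_{b₁} = id`, all other
data zero. -/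
def Mb1 : Rep4 where
  VA := ℂ
  VB := ℂ
  VC := Fin 0 → ℂ
  VD := Fin 0 → ℂ
  fa1 := 0
  fa2 := 0
  fb1 := LinearMap.id
  fb2 := 0
  fa3 := 0
  fc1 := 0
  fc2 := 0
  rel_ba1 := by simp
  rel_cb1 := by simp
  rel_ac1 := by simp
  rel_ba2 := by simp
  rel_cb2 := by simp
  rel_ac2 := by simp

/-- The string module `M(c₂)`: `V_C = V_D = ℂ`, `V_A = V_B = 0`, `f_{c₂} = id`, all other
data zero. -/
def Mc2 : Rep4 where
  VA := Fin 0 → ℂ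
  VB := Fin 0 → ℂ
  VC := ℂ
  VD := ℂ
  fa1 := 0
  fa2 := 0
  fb1 := 0
  fb2 := 0
  fa3 := 0
  fc1 := 0
  fc2 := LinearMap.id
  rel_ba1 := by simp
  rel_cb1 := by simp
  rel_ac1 := by simp
  rel_ba2 := by simp
  rel_cb2 := by simp
  rel_ac2 := by simp

/-- The string module `M(b₂a₃c₁)`: `V_A = V_B = V_C = V_D = ℂ`,
`f_{b₂} = f_{a₃} = f_{c₁} = id`, all other maps zero. -/
def Mb2a3c1 : Rep4 where
  VA := ℂ
  VB := ℂ
  VC := ℂ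
  VD := ℂ
  fa1 := 0
  fa2 := 0
  fb1 := 0
  fb2 := LinearMap.id
  fa3 := LinearMap.id
  fc1 := LinearMap.id
  fc2 := 0
  rel_ba1 := by simp
  rel_cb1 := by simp
  rel_ac1 := by simp
  rel_ba2 := by simp
  rel_cb2 := by simp
  rel_ac2 := by simp


theorem arg_pos_of_mem {z : ℂ} (h : z ∈ UpperH) : 0 < z.arg := by
  obtain ⟨r, φ, hr, h0, h1, rfl⟩ := h
  have hp := Real.pi_pos
  rw [Complex.exp_mul_I, Complex.arg_mul_cos_add_sin_mul_I hr]
  · positivity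
  · constructor
    · nlinarith
    · nlinarith

theorem arg_pos_iff {z : ℂ} : 0 < z.arg ↔ (0 < z.im ∨ (z.im = 0 ∧ z.re < 0)) := by
  constructor
  · intro h
    have h1 : 0 ≤ z.im := Complex.arg_nonneg_iff.mp h.le
    rcases h1.lt_or_eq with h2 | h2
    · exact Or.inl h2
    · refine Or.inr ⟨h2.symm, ?_⟩
      by_contra h3
      have : z.arg = 0 := Complex.arg_eq_zero_iff.mpr ⟨not_lt.mp h3, h2.symm⟩
      exact h.ne' this
  · intro h
    have h1 : 0 ≤ z.arg := Complex.arg_nonneg_iff.mpr (by rcases h with h | h <;> linarith [h])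
    rcases h1.lt_or_eq with h2 | h2
    · exact h2
    · have := Complex.arg_eq_zero_iff.mp h2.symm
      rcases h with h | h <;> linarith [this.1, this.2, h]

theorem arg_pos_add {z w : ℂ} (hz : 0 < z.arg) (hw : 0 < w.arg) : 0 < (z + w).arg := by
  rw [arg_pos_iff] at *
  simp only [Complex.add_im, Complex.add_re]
  rcases hz with hz | hz <;> rcases hw with hw | hw
  · left; linarith
  · left; linarith [hw.1]
  · left; linarith [hz.1]
  · right; constructor <;> linarith [hz.1, hz.2, hw.1, hw.2]

/-- The cross product. -/
def eta (w z : ℂ) : ℝ := z.im * w.re - z.re * w.im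

theorem eta_add (w z z' : ℂ) : eta w (z + z') = eta w z + eta w z' := by
  simp [eta]; ring

theorem eta_eq (w z : ℂ) : eta w z = ‖z‖ * ‖w‖ * Real.sin (z.arg - w.arg) := by
  rw [Real.sin_sub, eta]
  conv_lhs => rw [← Complex.norm_mul_cos_arg z, ← Complex.norm_mul_sin_arg z,
    ← Complex.norm_mul_cos_arg w, ← Complex.norm_mul_sin_arg w]
  ring

theorem ne_zero_of_arg_pos {z : ℂ} (h : 0 < z.arg) : 0 < ‖z‖ := by
  rw [norm_pos_iff]; rintro rfl; simp at h

theorem phase_lt_iff' {z w : ℂ} : phase z < phase w ↔ z.arg < w.arg := by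
  unfold phase
  exact div_lt_div_iff_of_pos_right Real.pi_pos

theorem eta_neg_of_lt {z w : ℂ} (hz : 0 < z.arg) (hw : 0 < w.arg) (h : phase z < phase w) :
    eta w z < 0 := by
  rw [phase_lt_iff'] at h
  rw [eta_eq]
  have h1 := ne_zero_of_arg_pos hz
  have h2 := ne_zero_of_arg_pos hw
  have := Real.sin_neg_of_neg_of_neg_pi_lt (x := z.arg - w.arg) (by linarith)
    (by linarith [Complex.arg_le_pi w])
  exact mul_neg_of_pos_of_neg (by positivity) this

theorem eta_pos_of_lt {z w : ℂ} (hz : 0 < z.arg) (hw : 0 < w.arg) (h : phase w < phase z) :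
    0 < eta w z := by
  have := eta_neg_of_lt hw hz h
  unfold eta at *; linarith

theorem eta_zero_of_eq {z w : ℂ} (h : phase z = phase w) :
    eta w z = 0 := by
  have : z.arg = w.arg := by
    unfold phase at h
    have := Real.pi_pos.ne'
    field_simp at h
    exact h
  rw [eta_eq, this]; simp

theorem phase_lt_iff {z w : ℂ} (hz : 0 < z.arg) (hw : 0 < w.arg) :
    phase z < phase w ↔ eta w z < 0 := by
  refine ⟨eta_neg_of_lt hz hw, fun h => ?_⟩
  rcases lt_trichotomy (phase z) (phase w) with h1 | h1 | h1
  · exact h1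
  · linarith [eta_zero_of_eq h1]
  · linarith [eta_pos_of_lt hz hw h1]

/-- linear stability form -/
def slp (s t : ℝ) (d : ℕ × ℕ × ℕ × ℕ) : ℝ :=
  s * ((d.1 : ℝ) - d.2.1) + t * ((d.2.2.1 : ℝ) - d.2.2.2)

theorem chargeOf4_eq (Z : ℤ × ℤ × ℤ × ℤ →+ ℂ) (d : ℕ × ℕ × ℕ × ℕ) :
    chargeOf4 Z d = d.1 • Z (1,0,0,0) + d.2.1 • Z (0,1,0,0) + d.2.2.1 • Z (0,0,1,0)
      + d.2.2.2 • Z (0,0,0,1) := by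
  unfold chargeOf4
  simp only [← map_nsmul, ← map_add]
  congr 1
  simp

theorem eta_nsmul (w z : ℂ) (n : ℕ) : eta w (n • z) = n * eta w z := by
  simp [eta]; ring

theorem arg_pos_nsmul {z : ℂ} (hz : 0 < z.arg) (n : ℕ) : n • z = 0 ∧ n = 0 ∨ 0 < (n • z).arg := by
  induction n with
  | zero => left; simp
  | succ n ih =>
    right
    rw [succ_nsmul]
    rcases ih with ih | ih
    · rw [ih.1, zero_add]; exact hz
    · exact arg_pos_add ih hz

theorem arg_charge_pos (Z : ℤ × ℤ × ℤ × ℤ →+ ℂ)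
    (hZA : Z (1, 0, 0, 0) ∈ UpperH) (hZB : Z (0, 1, 0, 0) ∈ UpperH)
    (hZC : Z (0, 0, 1, 0) ∈ UpperH) (hZD : Z (0, 0, 0, 1) ∈ UpperH)
    (d : ℕ × ℕ × ℕ × ℕ) (hd : d ≠ (0, 0, 0, 0)) : 0 < (chargeOf4 Z d).arg := by
  obtain ⟨a, b, c, e⟩ := d
  rw [chargeOf4_eq]
  simp only
  rcases arg_pos_nsmul (arg_pos_of_mem hZA) a with ⟨h1, h1'⟩ | h1 <;>
  rcases arg_pos_nsmul (arg_pos_of_mem hZB) b with ⟨h2, h2'⟩ | h2 <;>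
  rcases arg_pos_nsmul (arg_pos_of_mem hZC) c with ⟨h3, h3'⟩ | h3 <;>
  rcases arg_pos_nsmul (arg_pos_of_mem hZD) e with ⟨h4, h4'⟩ | h4 <;>
  first
  | (exfalso; apply hd; simp [h1', h2', h3', h4'])
  | (try rw [h1]
     try rw [h2]
     try rw [h3]
     try rw [h4]
     try simp only [zero_add, add_zero]
     repeat first | assumption | apply arg_pos_add)

namespace Rep4

/-- Stability for the linear form. -/
def Stab (s t : ℝ) (M : Rep4) : Prop :=
  ∀ L : M.Sub, L.Nonzero → L.Proper → slp s t L.dimVec < 0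

theorem Sub.nonzero_iff {M : Rep4} (L : M.Sub) : L.Nonzero ↔ L.dimVec ≠ (0,0,0,0) := by
  unfold Sub.Nonzero Sub.dimVec
  simp only [ne_eq, Prod.mk.injEq, Submodule.finrank_eq_zero]
  tauto

theorem Sub.proper_iff {M : Rep4} (L : M.Sub) : L.Proper ↔
    (finrank ℂ L.SA < finrank ℂ M.VA ∨ finrank ℂ L.SB < finrank ℂ M.VB ∨
      finrank ℂ L.SC < finrank ℂ M.VC ∨ finrank ℂ L.SD < finrank ℂ M.VD) := by
  have key : ∀ {V : Type} [AddCommGroup V] [Module ℂ V] [FiniteDimensional ℂ V]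
      (S : Submodule ℂ V), S ≠ ⊤ ↔ finrank ℂ S < finrank ℂ V := by
    intro V _ _ _ S
    constructor
    · intro h; exact Submodule.finrank_lt h
    · rintro h rfl; simp at h
  unfold Sub.Proper
  rw [key, key, key, key]

/-- Morphisms. -/
structure Hom4 (M N : Rep4) where
  gA : M.VA →ₗ[ℂ] N.VA
  gB : M.VB →ₗ[ℂ] N.VB
  gC : M.VC →ₗ[ℂ] N.VC
  gD : M.VD →ₗ[ℂ] N.VD
  ca1 : ∀ x, gA (M.fa1 x) = N.fa1 (gD x)
  ca2 : ∀ x, gA (M.fa2 x) = N.fa2 (gD x)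
  cb1 : ∀ x, gB (M.fb1 x) = N.fb1 (gA x)
  cb2 : ∀ x, gC (M.fb2 x) = N.fb2 (gA x)
  ca3 : ∀ x, gB (M.fa3 x) = N.fa3 (gC x)
  cc1 : ∀ x, gD (M.fc1 x) = N.fc1 (gB x)
  cc2 : ∀ x, gD (M.fc2 x) = N.fc2 (gC x)

/-- Kernel. -/
def Hom4.ker {M N : Rep4} (g : Hom4 M N) : M.Sub where
  SA := LinearMap.ker g.gA
  SB := LinearMap.ker g.gB
  SC := LinearMap.ker g.gC
  SD := LinearMap.ker g.gD
  mapsto_a1 x hx := by rw [LinearMap.mem_ker] at *; rw [g.ca1, hx, map_zero]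
  mapsto_a2 x hx := by rw [LinearMap.mem_ker] at *; rw [g.ca2, hx, map_zero]
  mapsto_b1 x hx := by rw [LinearMap.mem_ker] at *; rw [g.cb1, hx, map_zero]
  mapsto_b2 x hx := by rw [LinearMap.mem_ker] at *; rw [g.cb2, hx, map_zero]
  mapsto_a3 x hx := by rw [LinearMap.mem_ker] at *; rw [g.ca3, hx, map_zero]
  mapsto_c1 x hx := by rw [LinearMap.mem_ker] at *; rw [g.cc1, hx, map_zero]
  mapsto_c2 x hx := by rw [LinearMap.mem_ker] at *; rw [g.cc2, hx, map_zero]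

/-- Image of a sub. -/
def Hom4.map {M N : Rep4} (g : Hom4 M N) (L : M.Sub) : N.Sub where
  SA := L.SA.map g.gA
  SB := L.SB.map g.gB
  SC := L.SC.map g.gC
  SD := L.SD.map g.gD
  mapsto_a1 := by rintro _ ⟨x, hx, rfl⟩; exact ⟨_, L.mapsto_a1 x hx, g.ca1 x⟩
  mapsto_a2 := by rintro _ ⟨x, hx, rfl⟩; exact ⟨_, L.mapsto_a2 x hx, g.ca2 x⟩
  mapsto_b1 := by rintro _ ⟨x, hx, rfl⟩; exact ⟨_, L.mapsto_b1 x hx, g.cb1 x⟩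
  mapsto_b2 := by rintro _ ⟨x, hx, rfl⟩; exact ⟨_, L.mapsto_b2 x hx, g.cb2 x⟩
  mapsto_a3 := by rintro _ ⟨x, hx, rfl⟩; exact ⟨_, L.mapsto_a3 x hx, g.ca3 x⟩
  mapsto_c1 := by rintro _ ⟨x, hx, rfl⟩; exact ⟨_, L.mapsto_c1 x hx, g.cc1 x⟩
  mapsto_c2 := by rintro _ ⟨x, hx, rfl⟩; exact ⟨_, L.mapsto_c2 x hx, g.cc2 x⟩

/-- The top sub. -/
def topSub (M : Rep4) : M.Sub where
  SA := ⊤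
  SB := ⊤
  SC := ⊤
  SD := ⊤
  mapsto_a1 := by simp
  mapsto_a2 := by simp
  mapsto_b1 := by simp
  mapsto_b2 := by simp
  mapsto_a3 := by simp
  mapsto_c1 := by simp
  mapsto_c2 := by simp

/-- nonzero morphism -/
def Hom4.NZ {M N : Rep4} (g : Hom4 M N) : Prop :=
  g.gA ≠ 0 ∨ g.gB ≠ 0 ∨ g.gC ≠ 0 ∨ g.gD ≠ 0

theorem schur {s t : ℝ} {M N : Rep4} (hM : Stab s t M) (hN : Stab s t N)
    (h0 : slp s t M.dimVec = 0) (h0N : slp s t N.dimVec = 0)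
    (g : Hom4 M N) (hg : g.NZ) : RepIso4 M N := by
  have hkp : g.ker.Proper := by
    unfold Sub.Proper Hom4.ker
    simpa only [ne_eq, LinearMap.ker_eq_top] using (show _ ∨ _ ∨ _ ∨ _ from hg)
  have hin : (g.map M.topSub).Nonzero := by
    unfold Sub.Nonzero Hom4.map topSub
    simpa only [ne_eq, Submodule.map_top, LinearMap.range_eq_bot] using (show _ ∨ _ ∨ _ ∨ _ from hg)
  have hsum : slp s t (g.map M.topSub).dimVec + slp s t g.ker.dimVec = 0 := by
    rw [← h0]
    unfold slp Sub.dimVec Hom4.map topSub Hom4.ker Rep4.dimVec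
    have hr : ∀ {V W : Type} [AddCommGroup V] [Module ℂ V] [AddCommGroup W] [Module ℂ W]
        (f : V →ₗ[ℂ] W), finrank ℂ (Submodule.map f ⊤) = finrank ℂ f.range := by
      intro V W _ _ _ _ f
      rw [Submodule.map_top]
    simp only [hr]
    rw [← LinearMap.finrank_range_add_finrank_ker g.gA,
      ← LinearMap.finrank_range_add_finrank_ker g.gB,
      ← LinearMap.finrank_range_add_finrank_ker g.gC,
      ← LinearMap.finrank_range_add_finrank_ker g.gD]
    push_cast
    ring
  have htop : ¬ (g.map M.topSub).Proper → slp s t (g.map M.topSub).dimVec = 0 := by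
    intro hp
    rw [← h0N]
    unfold Sub.Proper at hp
    push Not at hp
    unfold Rep4.dimVec Sub.dimVec
    rw [hp.1, hp.2.1, hp.2.2.1, hp.2.2.2]
    simp
  have hkz : ¬ g.ker.Nonzero := by
    intro hk
    have h1 := hM _ hk hkp
    by_cases hp : (g.map M.topSub).Proper
    · have := hN _ hin hp
      linarith
    · have := htop hp
      linarith
  have hk0 : slp s t g.ker.dimVec = 0 := by
    rw [Sub.nonzero_iff, not_not] at hkz
    rw [hkz]; simp [slp]
  have hp : ¬ (g.map M.topSub).Proper := by
    intro hp
    have := hN _ hin hp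
    linarith
  unfold Sub.Nonzero Hom4.ker at hkz
  unfold Sub.Proper Hom4.map topSub at hp
  push Not at hkz hp
  simp only [Submodule.map_top, LinearMap.range_eq_top, LinearMap.ker_eq_bot] at hkz hp
  exact ⟨LinearEquiv.ofBijective g.gA ⟨hkz.1, hp.1⟩,
    LinearEquiv.ofBijective g.gB ⟨hkz.2.1, hp.2.1⟩,
    LinearEquiv.ofBijective g.gC ⟨hkz.2.2.1, hp.2.2.1⟩,
    LinearEquiv.ofBijective g.gD ⟨hkz.2.2.2, hp.2.2.2⟩,
    g.ca1, g.ca2, g.cb1, g.cb2, g.ca3, g.cc1, g.cc2⟩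

theorem iso_symm {M N : Rep4} (h : RepIso4 M N) : RepIso4 N M := by
  obtain ⟨eA, eB, eC, eD, h1, h2, h3, h4, h5, h6, h7⟩ := h
  refine ⟨eA.symm, eB.symm, eC.symm, eD.symm, ?_, ?_, ?_, ?_, ?_, ?_, ?_⟩ <;> intro x <;>
    rw [LinearEquiv.symm_apply_eq]
  · rw [h1, LinearEquiv.apply_symm_apply]
  · rw [h2, LinearEquiv.apply_symm_apply]
  · rw [h3, LinearEquiv.apply_symm_apply]
  · rw [h4, LinearEquiv.apply_symm_apply]
  · rw [h5, LinearEquiv.apply_symm_apply]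
  · rw [h6, LinearEquiv.apply_symm_apply]
  · rw [h7, LinearEquiv.apply_symm_apply]

theorem iso_dimVec {M N : Rep4} (h : RepIso4 M N) : M.dimVec = N.dimVec := by
  obtain ⟨eA, eB, eC, eD, -⟩ := h
  unfold Rep4.dimVec
  rw [eA.finrank_eq, eB.finrank_eq, eC.finrank_eq, eD.finrank_eq]

theorem stab_of_iso {s t : ℝ} {M N : Rep4} (h : RepIso4 M N) (hN : Stab s t N) : Stab s t M := by
  have hd := iso_dimVec h
  obtain ⟨eA, eB, eC, eD, h1, h2, h3, h4, h5, h6, h7⟩ := h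
  let g : Hom4 M N := ⟨eA, eB, eC, eD, h1, h2, h3, h4, h5, h6, h7⟩
  intro L hn hp
  have hL : (g.map L).dimVec = L.dimVec := by
    unfold Sub.dimVec Hom4.map
    simp only [g]
    rw [Prod.mk.injEq, Prod.mk.injEq, Prod.mk.injEq]
    exact ⟨eA.finrank_map_eq L.SA, eB.finrank_map_eq L.SB, eC.finrank_map_eq L.SC,
      eD.finrank_map_eq L.SD⟩
  rw [← hL]
  apply hN
  · rw [Sub.nonzero_iff] at *
    rwa [hL]
  · rw [Sub.proper_iff] at *
    unfold Sub.dimVec at hL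
    unfold Rep4.dimVec at hd
    simp only [Prod.mk.injEq] at hL hd
    rwa [hL.1, hL.2.1, hL.2.2.1, hL.2.2.2, ← hd.1, ← hd.2.1, ← hd.2.2.1, ← hd.2.2.2]

theorem finrank_le_of_inj {V W : Type} [AddCommGroup V] [Module ℂ V] [AddCommGroup W] [Module ℂ W]
    [FiniteDimensional ℂ W] (f : V →ₗ[ℂ] W) (hf : Function.Injective f)
    (S : Submodule ℂ V) (T : Submodule ℂ W) (h : ∀ x ∈ S, f x ∈ T) :
    finrank ℂ S ≤ finrank ℂ T :=
  LinearMap.finrank_le_finrank_of_injective (f := f.restrict h)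
    (fun x y hxy => Subtype.ext (hf (congrArg Subtype.val hxy)))

theorem dim_Mb1 : finrank ℂ Mb1.VA = 1 ∧ finrank ℂ Mb1.VB = 1 ∧ finrank ℂ Mb1.VC = 0 ∧
    finrank ℂ Mb1.VD = 0 :=
  ⟨Module.finrank_self ℂ, Module.finrank_self ℂ, Module.finrank_fin_fun (n := 0) ℂ,
    Module.finrank_fin_fun (n := 0) ℂ⟩

theorem dim_Mc2 : finrank ℂ Mc2.VA = 0 ∧ finrank ℂ Mc2.VB = 0 ∧ finrank ℂ Mc2.VC = 1 ∧
    finrank ℂ Mc2.VD = 1 :=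
  ⟨Module.finrank_fin_fun (n := 0) ℂ, Module.finrank_fin_fun (n := 0) ℂ, Module.finrank_self ℂ,
    Module.finrank_self ℂ⟩

theorem dim_Mb2a3c1 : finrank ℂ Mb2a3c1.VA = 1 ∧ finrank ℂ Mb2a3c1.VB = 1 ∧
    finrank ℂ Mb2a3c1.VC = 1 ∧ finrank ℂ Mb2a3c1.VD = 1 :=
  ⟨Module.finrank_self ℂ, Module.finrank_self ℂ, Module.finrank_self ℂ, Module.finrank_self ℂ⟩

theorem Sub.dim_le {M : Rep4} (L : M.Sub) : finrank ℂ L.SA ≤ finrank ℂ M.VA ∧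
    finrank ℂ L.SB ≤ finrank ℂ M.VB ∧ finrank ℂ L.SC ≤ finrank ℂ M.VC ∧
    finrank ℂ L.SD ≤ finrank ℂ M.VD :=
  ⟨Submodule.finrank_le _, Submodule.finrank_le _, Submodule.finrank_le _, Submodule.finrank_le _⟩

theorem stab_Mb1 {s t : ℝ} (hs : 0 < s) : Stab s t Mb1 := by
  intro L hn hp
  obtain ⟨d1, d2, d3, d4⟩ := dim_Mb1
  obtain ⟨l1, l2, l3, l4⟩ := L.dim_le
  have hab := finrank_le_of_inj Mb1.fb1 (fun _ _ h => h) L.SA L.SB L.mapsto_b1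
  rw [Sub.nonzero_iff] at hn
  rw [Sub.proper_iff] at hp
  unfold Sub.dimVec at *
  simp only [ne_eq, Prod.mk.injEq] at hn
  have e1 : finrank ℂ L.SA = 0 := by omega
  have e2 : finrank ℂ L.SB = 1 := by omega
  have e3 : finrank ℂ L.SC = 0 := by omega
  have e4 : finrank ℂ L.SD = 0 := by omega
  simp only [slp, e1, e2, e3, e4]
  norm_num
  exact hs

theorem stab_Mc2 {s t : ℝ} (ht : 0 < t) : Stab s t Mc2 := by
  intro L hn hp
  obtain ⟨d1, d2, d3, d4⟩ := dim_Mc2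
  obtain ⟨l1, l2, l3, l4⟩ := L.dim_le
  have hab := finrank_le_of_inj Mc2.fc2 (fun _ _ h => h) L.SC L.SD L.mapsto_c2
  rw [Sub.nonzero_iff] at hn
  rw [Sub.proper_iff] at hp
  unfold Sub.dimVec at *
  simp only [ne_eq, Prod.mk.injEq] at hn
  have e1 : finrank ℂ L.SA = 0 := by omega
  have e2 : finrank ℂ L.SB = 0 := by omega
  have e3 : finrank ℂ L.SC = 0 := by omega
  have e4 : finrank ℂ L.SD = 1 := by omega
  simp only [slp, e1, e2, e3, e4]
  norm_num
  exact ht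

theorem stab_Mb2a3c1 {s t : ℝ} (hs : 0 < s) (ht : 0 < t) : Stab s t Mb2a3c1 := by
  intro L hn hp
  obtain ⟨d1, d2, d3, d4⟩ := dim_Mb2a3c1
  obtain ⟨l1, l2, l3, l4⟩ := L.dim_le
  have h1 := finrank_le_of_inj Mb2a3c1.fb2 (fun _ _ h => h) L.SA L.SC L.mapsto_b2
  have h2 := finrank_le_of_inj Mb2a3c1.fa3 (fun _ _ h => h) L.SC L.SB L.mapsto_a3
  have h3 := finrank_le_of_inj Mb2a3c1.fc1 (fun _ _ h => h) L.SB L.SD L.mapsto_c1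
  rw [Sub.nonzero_iff] at hn
  rw [Sub.proper_iff] at hp
  unfold Sub.dimVec at *
  simp only [ne_eq, Prod.mk.injEq] at hn
  have e1 : finrank ℂ L.SA = 0 := by omega
  have e4 : finrank ℂ L.SD = 1 := by omega
  have e : finrank ℂ L.SC = 0 ∧ finrank ℂ L.SB = 0 ∨ finrank ℂ L.SC = 0 ∧ finrank ℂ L.SB = 1 ∨
    finrank ℂ L.SC = 1 ∧ finrank ℂ L.SB = 1 := by omega
  rcases e with ⟨e2, e3⟩ | ⟨e2, e3⟩ | ⟨e2, e3⟩ <;> simp only [slp, e1, e2, e3, e4] <;>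
    norm_num <;> linarith

theorem zero_of_comp_inj {U V W : Type} [AddCommGroup U] [Module ℂ U] [AddCommGroup V] [Module ℂ V]
    [AddCommGroup W] [Module ℂ W] {f : V →ₗ[ℂ] W} {g : U →ₗ[ℂ] V} (h : f ∘ₗ g = 0)
    (hf : Function.Injective f) : g = 0 := by
  ext x
  apply hf
  simpa using LinearMap.congr_fun h x

theorem zero_of_comp_surj {U V W : Type} [AddCommGroup U] [Module ℂ U] [AddCommGroup V] [Module ℂ V]
    [AddCommGroup W] [Module ℂ W] {f : V →ₗ[ℂ] W} {g : U →ₗ[ℂ] V} (h : f ∘ₗ g = 0)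
    (hg : Function.Surjective g) : f = 0 := by
  ext x
  obtain ⟨y, rfl⟩ := hg x
  simpa using LinearMap.congr_fun h y

theorem exists_functional {V W : Type} [AddCommGroup V] [Module ℂ V]
    [AddCommGroup W] [Module ℂ W] (f : V →ₗ[ℂ] W) (hf : ¬ Function.Surjective f) :
    ∃ g : W →ₗ[ℂ] ℂ, g ≠ 0 ∧ ∀ x, g (f x) = 0 := by
  rw [← LinearMap.range_eq_top] at hf
  obtain ⟨g, hg, hle⟩ := Submodule.exists_le_ker_of_lt_top _ (lt_top_iff_ne_top.mpr hf)
  exact ⟨g, hg, fun x => hle ⟨x, rfl⟩⟩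

theorem exists_ker {V W : Type} [AddCommGroup V] [Module ℂ V]
    [AddCommGroup W] [Module ℂ W] (f : V →ₗ[ℂ] W) (hf : ¬ Function.Injective f) :
    ∃ x, x ≠ 0 ∧ f x = 0 := by
  rw [← LinearMap.ker_eq_bot] at hf
  obtain ⟨x, hx, h0⟩ := Submodule.exists_mem_ne_zero_of_ne_bot hf
  exact ⟨x, h0, hx⟩

/-- The map `c ↦ c • x`. -/
abbrev sp {V : Type} [AddCommGroup V] [Module ℂ V] (x : V) : ℂ →ₗ[ℂ] V :=
  LinearMap.toSpanSingleton ℂ V x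

/-- Homs from `Mb1`. -/
def homFromMb1 (M : Rep4) (x : M.VA) (hx : M.fb2 x = 0) : Hom4 Mb1 M where
  gA := sp x
  gB := sp (M.fb1 x)
  gC := 0
  gD := 0
  ca1 y := by show sp x (0 : ℂ) = M.fa1 0; simp
  ca2 y := by show sp x (0 : ℂ) = M.fa2 0; simp
  cb1 (y : ℂ) := by show sp (M.fb1 x) y = M.fb1 (sp x y); simp
  cb2 (y : ℂ) := by show 0 = M.fb2 (sp x y); simp [hx]
  ca3 y := by show sp (M.fb1 x) (0 : ℂ) = M.fa3 0; simp
  cc1 (y : ℂ) := by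
    have := LinearMap.congr_fun M.rel_cb1 x
    simp only [LinearMap.comp_apply, LinearMap.zero_apply] at this
    show 0 = M.fc1 (sp (M.fb1 x) y)
    simp [this]
  cc2 y := by show 0 = M.fc2 0; simp

/-- Homs to `Mb1`. -/
def homToMb1 (M : Rep4) (f : M.VB →ₗ[ℂ] ℂ) (h2 : M.fa2 = 0) (hf : ∀ x, f (M.fa3 x) = 0) :
    Hom4 M Mb1 where
  gA := f ∘ₗ M.fb1
  gB := f
  gC := 0
  gD := 0
  ca1 y := by
    have := LinearMap.congr_fun M.rel_ba1 y
    simp only [LinearMap.comp_apply, LinearMap.zero_apply] at this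
    show f (M.fb1 (M.fa1 y)) = 0
    simp [this]
  ca2 y := by show f (M.fb1 (M.fa2 y)) = 0; simp [h2]
  cb1 y := rfl
  cb2 y := rfl
  ca3 y := hf y
  cc1 y := rfl
  cc2 y := rfl

/-- Homs from `Mc2`. -/
def homFromMc2 (M : Rep4) (x : M.VC) (hx : M.fa3 x = 0) (h1 : M.fa1 = 0) (h2 : M.fa2 = 0) :
    Hom4 Mc2 M where
  gA := 0
  gB := 0
  gC := sp x
  gD := sp (M.fc2 x)
  ca1 (y : ℂ) := by rw [h1]; rfl
  ca2 (y : ℂ) := by rw [h2]; rfl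
  cb1 y := by show 0 = M.fb1 0; simp
  cb2 y := by show sp x (0 : ℂ) = M.fb2 0; simp
  ca3 (y : ℂ) := by show 0 = M.fa3 (sp x y); simp [hx]
  cc1 y := by show sp (M.fc2 x) (0 : ℂ) = M.fc1 0; simp
  cc2 (y : ℂ) := by show sp (M.fc2 x) y = M.fc2 (sp x y); simp

/-- Homs to `Mc2`. -/
def homToMc2 (M : Rep4) (f : M.VD →ₗ[ℂ] ℂ) (hf : ∀ x, f (M.fc1 x) = 0) :
    Hom4 M Mc2 where
  gA := 0
  gB := 0
  gC := f ∘ₗ M.fc2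
  gD := f
  ca1 y := rfl
  ca2 y := rfl
  cb1 y := rfl
  cb2 y := by
    have := LinearMap.congr_fun M.rel_cb2 y
    simp only [LinearMap.comp_apply, LinearMap.zero_apply] at this
    show f (M.fc2 (M.fb2 y)) = 0
    simp [this]
  ca3 y := rfl
  cc1 y := hf y
  cc2 y := rfl

/-- Homs from the third module. -/
def homFromM3 (M : Rep4) (x : M.VA) (h1 : M.fa1 = 0) (h2 : M.fa2 = 0) (hb : M.fb1 = 0) :
    Hom4 Mb2a3c1 M where
  gA := sp x
  gB := sp (M.fa3 (M.fb2 x))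
  gC := sp (M.fb2 x)
  gD := sp (M.fc1 (M.fa3 (M.fb2 x)))
  ca1 (y : ℂ) := by rw [h1]; show sp x (0 : ℂ) = 0; simp
  ca2 (y : ℂ) := by rw [h2]; show sp x (0 : ℂ) = 0; simp
  cb1 (y : ℂ) := by rw [hb]; show sp (M.fa3 (M.fb2 x)) (0 : ℂ) = 0; simp
  cb2 (y : ℂ) := by show sp (M.fb2 x) y = M.fb2 (sp x y); simp
  ca3 (y : ℂ) := by show sp (M.fa3 (M.fb2 x)) y = M.fa3 (sp (M.fb2 x) y); simp
  cc1 (y : ℂ) := by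
    show sp (M.fc1 (M.fa3 (M.fb2 x))) y = M.fc1 (sp (M.fa3 (M.fb2 x)) y); simp
  cc2 (y : ℂ) := by
    have := LinearMap.congr_fun M.rel_cb2 x
    simp only [LinearMap.comp_apply, LinearMap.zero_apply] at this
    show sp (M.fc1 (M.fa3 (M.fb2 x))) (0 : ℂ) = M.fc2 (sp (M.fb2 x) y)
    simp [this]

theorem span_ne_zero {V : Type} [AddCommGroup V] [Module ℂ V] {x : V} (hx : x ≠ 0) :
    LinearMap.toSpanSingleton ℂ V x ≠ 0 := by
  intro h
  apply hx
  simpa using LinearMap.congr_fun h 1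

theorem classify {s t : ℝ} (hs : 0 < s) (ht : 0 < t) (M : Rep4) (hM : Stab s t M)
    (h0 : M.dimVec ≠ (0, 0, 0, 0))
    (hAB : finrank ℂ M.VA = finrank ℂ M.VB) (hCD : finrank ℂ M.VC = finrank ℂ M.VD) :
    RepIso4 M Mb1 ∨ RepIso4 M Mc2 ∨ RepIso4 M Mb2a3c1 := by
  have hMs : slp s t M.dimVec = 0 := by simp [slp, Rep4.dimVec, hAB, hCD]
  have s1 : slp s t Mb1.dimVec = 0 := by
    obtain ⟨d1, d2, d3, d4⟩ := dim_Mb1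
    simp [slp, Rep4.dimVec, d1, d2, d3, d4]
  have s2 : slp s t Mc2.dimVec = 0 := by
    obtain ⟨d1, d2, d3, d4⟩ := dim_Mc2
    simp [slp, Rep4.dimVec, d1, d2, d3, d4]
  have s3 : slp s t Mb2a3c1.dimVec = 0 := by
    obtain ⟨d1, d2, d3, d4⟩ := dim_Mb2a3c1
    simp [slp, Rep4.dimVec, d1, d2, d3, d4]
  by_cases hb2 : Function.Injective M.fb2
  swap
  · obtain ⟨x, hx, hx0⟩ := exists_ker _ hb2
    exact Or.inl (iso_symm (schur (stab_Mb1 hs) hM s1 hMs (homFromMb1 M x hx0)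
      (Or.inl (span_ne_zero hx))))
  have ha2 := zero_of_comp_inj M.rel_ba2 hb2
  by_cases hc1 : Function.Surjective M.fc1
  swap
  · obtain ⟨f, hf, hf0⟩ := exists_functional _ hc1
    exact Or.inr (Or.inl (schur hM (stab_Mc2 ht) hMs s2 (homToMc2 M f hf0)
      (Or.inr (Or.inr (Or.inr hf)))))
  have ha1 := zero_of_comp_surj M.rel_ac1 hc1
  by_cases ha3 : Function.Injective M.fa3
  swap
  · obtain ⟨x, hx, hx0⟩ := exists_ker _ ha3
    exact Or.inr (Or.inl (iso_symm (schur (stab_Mc2 ht) hM s2 hMs (homFromMc2 M x hx0 ha1 ha2)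
      (Or.inr (Or.inr (Or.inl (span_ne_zero hx)))))))
  by_cases ha3' : Function.Surjective M.fa3
  swap
  · obtain ⟨f, hf, hf0⟩ := exists_functional _ ha3'
    exact Or.inl (schur hM (stab_Mb1 hs) hMs s1 (homToMb1 M f ha2 hf0)
      (Or.inr (Or.inl hf)))
  have hCB : finrank ℂ M.VC = finrank ℂ M.VB :=
    (LinearEquiv.ofBijective M.fa3 ⟨ha3, ha3'⟩).finrank_eq
  have hc1' : Function.Injective M.fc1 :=
    (LinearMap.injective_iff_surjective_of_finrank_eq_finrank (by omega)).mpr hc1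
  have hb1 := zero_of_comp_inj M.rel_cb1 hc1'
  have hApos : 0 < finrank ℂ M.VA := by
    by_contra h
    apply h0
    unfold Rep4.dimVec
    simp only [Prod.mk.injEq]
    omega
  have := Module.finrank_pos_iff.mp hApos
  obtain ⟨x, hx⟩ := exists_ne (0 : M.VA)
  exact Or.inr (Or.inr (iso_symm (schur (stab_Mb2a3c1 hs ht) hM s3 hMs (homFromM3 M x ha1 ha2 hb1)
    (Or.inl (span_ne_zero hx)))))

end Rep4

/-- Let `Z : ℤ⁴ → ℂ` be a central charge whose values on the four
standard basis vectors lie in `ℍ`, set `θ := φ(1,1,0,0)`, and assume (a), (b), (c) as in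
the docstring.  Then a nonzero representation of `(Q, W)` whose phase equals `θ` is stable
if and only if it is isomorphic to `M(b₁)`, `M(c₂)` or `M(b₂a₃c₁)`; and these three are
pairwise non-isomorphic, so that up to isomorphism there are precisely three stable
representations of phase `θ`. -/
theorem three_stables_of_phase_theta
    (Z : ℤ × ℤ × ℤ × ℤ →+ ℂ)
    (hZA : Z (1, 0, 0, 0) ∈ UpperH) (hZB : Z (0, 1, 0, 0) ∈ UpperH)
    (hZC : Z (0, 0, 1, 0) ∈ UpperH) (hZD : Z (0, 0, 0, 1) ∈ UpperH)
    (ha : ∀ d : ℕ × ℕ × ℕ × ℕ, d ≠ (0, 0, 0, 0) →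
      (phase (chargeOf4 Z d) = phase (Z (1, 1, 0, 0)) ↔
        ((d.1 : ℤ), (d.2.1 : ℤ), (d.2.2.1 : ℤ), (d.2.2.2 : ℤ)) ∈
          AddSubgroup.closure
            ({((1 : ℤ), (1 : ℤ), (0 : ℤ), (0 : ℤ)), ((0 : ℤ), (0 : ℤ), (1 : ℤ), (1 : ℤ))} :
              Set (ℤ × ℤ × ℤ × ℤ))))
    (hb1 : phase (Z (0, 1, 0, 0)) < phase (Z (1, 1, 0, 0)))
    (hb2 : phase (Z (1, 1, 0, 0)) < phase (Z (0, 0, 1, 0)))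
    (hc1 : phase (Z (0, 0, 0, 1)) < phase (Z (1, 1, 0, 0)))
    (hc2 : phase (Z (1, 1, 0, 0)) < phase (Z (1, 0, 0, 0))) :
    (∀ M : Rep4, M.dimVec ≠ (0, 0, 0, 0) →
      phase (chargeOf4 Z M.dimVec) = phase (Z (1, 1, 0, 0)) →
      (IsStable4 Z M ↔ (RepIso4 M Mb1 ∨ RepIso4 M Mc2 ∨ RepIso4 M Mb2a3c1))) ∧
    ¬ RepIso4 Mb1 Mc2 ∧ ¬ RepIso4 Mb1 Mb2a3c1 ∧ ¬ RepIso4 Mc2 Mb2a3c1 := by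
  have hw : 0 < (Z (1, 1, 0, 0)).arg := by
    have := arg_charge_pos Z hZA hZB hZC hZD (1, 1, 0, 0) (by simp)
    simpa [chargeOf4] using this
  set w := Z (1, 1, 0, 0) with hwdef
  obtain ⟨s, hsdef⟩ : ∃ s, s = eta w (Z (1, 0, 0, 0)) := ⟨_, rfl⟩
  obtain ⟨t, htdef⟩ : ∃ t, t = eta w (Z (0, 0, 1, 0)) := ⟨_, rfl⟩
  have hs : 0 < s := hsdef ▸ eta_pos_of_lt (arg_pos_of_mem hZA) hw hc2
  have ht : 0 < t := htdef ▸ eta_pos_of_lt (arg_pos_of_mem hZC) hw hb2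
  have hB : eta w (Z (0, 1, 0, 0)) = - s := by
    have h1 : eta w w = 0 := eta_zero_of_eq rfl
    have h2 : w = Z (1, 0, 0, 0) + Z (0, 1, 0, 0) := by rw [hwdef, ← map_add]; simp
    have h3 := eta_add w (Z (1, 0, 0, 0)) (Z (0, 1, 0, 0))
    rw [← h2] at h3
    linarith
  have hD : eta w (Z (0, 0, 0, 1)) = - t := by
    have h1 := (ha (0, 0, 1, 1) (by simp)).mpr (AddSubgroup.subset_closure (by simp))
    have h1 := eta_zero_of_eq h1
    have h2 : chargeOf4 Z (0, 0, 1, 1) = Z (0, 0, 1, 0) + Z (0, 0, 0, 1) := by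
      rw [chargeOf4_eq]; simp
    rw [h2, eta_add] at h1
    linarith
  have heta : ∀ d, eta w (chargeOf4 Z d) = slp s t d := by
    intro d
    rw [chargeOf4_eq]
    simp only [eta_add, eta_nsmul, hB, hD, ← hsdef, ← htdef, slp]
    ring
  have hkey : ∀ d, d ≠ (0, 0, 0, 0) → (phase (chargeOf4 Z d) < phase w ↔ slp s t d < 0) := by
    intro d hd
    rw [phase_lt_iff (arg_charge_pos Z hZA hZB hZC hZD d hd) hw, heta]
  refine ⟨?_, ?_, ?_, ?_⟩
  · intro M hM0 hMθ
    have hst : IsStable4 Z M ↔ M.Stab s t := by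
      unfold IsStable4 Rep4.Stab
      rw [hMθ]
      constructor
      · intro h L hn hp
        exact (hkey _ (L.nonzero_iff.mp hn)).mp (h.2 L hn hp)
      · intro h
        exact ⟨hM0, fun L hn hp => (hkey _ (L.nonzero_iff.mp hn)).mpr (h L hn hp)⟩
    rw [hst]
    constructor
    · intro h
      have hmem := (ha _ hM0).mp hMθ
      rw [AddSubgroup.mem_closure_pair] at hmem
      obtain ⟨m, n, hmn⟩ := hmem
      simp only [Rep4.dimVec, Prod.smul_mk, Prod.mk_add_mk, Prod.mk.injEq, smul_eq_mul, mul_one,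
        mul_zero, add_zero, zero_add] at hmn
      exact Rep4.classify hs ht M h hM0 (by omega) (by omega)
    · rintro (h | h | h)
      · exact Rep4.stab_of_iso h (Rep4.stab_Mb1 hs)
      · exact Rep4.stab_of_iso h (Rep4.stab_Mc2 ht)
      · exact Rep4.stab_of_iso h (Rep4.stab_Mb2a3c1 hs ht)
  · rintro ⟨e, -⟩
    have := e.finrank_eq
    rw [Rep4.dim_Mb1.1, Rep4.dim_Mc2.1] at this
    omega
  · rintro ⟨_, _, e, -⟩
    have := e.finrank_eq
    rw [Rep4.dim_Mb1.2.2.1, Rep4.dim_Mb2a3c1.2.2.1] at this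
    omega
  · rintro ⟨e, -⟩
    have := e.finrank_eq
    rw [Rep4.dim_Mc2.1, Rep4.dim_Mb2a3c1.1] at this
    omega
end
end

section
/- Let M₁ = M(c₂), M₂ = M(b₁) and M₃ = M(b₂a₃c₁) in the category of representations of the quiver with potential (Q, W). Then: (i) for each of the ordered pairs (X, Y) ∈ {(M₁, M₂), (M₁, M₃), (M₃, M₂)} there exists a non-split short exact sequence 0 → Y → E → X → 0, and the Yoneda extension group Ext¹(X, Y) (equivalence classes of short exact sequences 0 → Y → E → X → 0 with the Baer-sum ℂ-vector space structure) is one-dimensional over ℂ; (ii) for each of the remaining six ordered pairs (X, Y) with X, Y ∈ {M₁, M₂, M₃}, including all pairs (Mᵢ, Mᵢ), every short exact sequence 0 → Y → E → X → 0 splits. -/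
/-!
# Statement 3

Work over `ℂ`.  Let `Q` be the quiver with vertices `A, B, C, D` and arrows
`a₁, a₂ : D → A`, `b₁ : A → B`, `b₂ : A → C`, `a₃ : C → B`, `c₁ : B → D`, `c₂ : C → D`,
with potential `W = a₁b₁c₁ + a₂b₂c₂`.  Let `M₁ = M(c₂)`, `M₂ = M(b₁)` and
`M₃ = M(b₂a₃c₁)` in the category of representations of `(Q, W)`.  Then:
(i) for each of the ordered pairs `(X, Y) ∈ {(M₁,M₂), (M₁,M₃), (M₃,M₂)}` there exists a
non-split short exact sequence `0 → Y → E → X → 0`, and the Yoneda extension group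
`Ext¹(X, Y)` (equivalence classes of short exact sequences `0 → Y → E → X → 0` with the
Baer-sum `ℂ`-vector space structure) is one-dimensional over `ℂ`;
(ii) for each of the remaining six ordered pairs `(X, Y)` with `X, Y ∈ {M₁, M₂, M₃}`,
including all pairs `(Mᵢ, Mᵢ)`, every short exact sequence `0 → Y → E → X → 0` splits.

One-dimensionality of the Yoneda `Ext¹` is expressed without constructing the Baer-sum
structure: a class is nonzero iff its short exact sequences are non-split, and for `λ ≠ 0`
the class `λ·[ξ₁]` is represented by `(E₁, i₁ ∘ (λ⁻¹ • id), p₁)`; hence `[ξ₂] = λ·[ξ₁]` iff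
there is an isomorphism `e : E₁ ≅ E₂` of representations with `e ∘ i₁ = i₂ ∘ (λ • id)` and
`p₂ ∘ e = p₁`.  A vector space is one-dimensional iff it has a nonzero vector and any two
nonzero vectors are proportional by a nonzero scalar.
-/

noncomputable section
open Module

/-- A morphism of representations: a quadruple of linear maps commuting with the seven
structure maps. -/
structure Hom4 (M N : Rep4) where
  gA : M.VA →ₗ[ℂ] N.VA
  gB : M.VB →ₗ[ℂ] N.VB
  gC : M.VC →ₗ[ℂ] N.VC
  gD : M.VD →ₗ[ℂ] N.VD
  comm_a1 : ∀ x, gA (M.fa1 x) = N.fa1 (gD x)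
  comm_a2 : ∀ x, gA (M.fa2 x) = N.fa2 (gD x)
  comm_b1 : ∀ x, gB (M.fb1 x) = N.fb1 (gA x)
  comm_b2 : ∀ x, gC (M.fb2 x) = N.fb2 (gA x)
  comm_a3 : ∀ x, gB (M.fa3 x) = N.fa3 (gC x)
  comm_c1 : ∀ x, gD (M.fc1 x) = N.fc1 (gB x)
  comm_c2 : ∀ x, gD (M.fc2 x) = N.fc2 (gC x)

/-- A (componentwise) short exact sequence `0 → Y → E → X → 0` of representations. -/
structure SES4 (Y X : Rep4) where
  E : Rep4
  i : Hom4 Y E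
  p : Hom4 E X
  injA : Function.Injective i.gA
  injB : Function.Injective i.gB
  injC : Function.Injective i.gC
  injD : Function.Injective i.gD
  surjA : Function.Surjective p.gA
  surjB : Function.Surjective p.gB
  surjC : Function.Surjective p.gC
  surjD : Function.Surjective p.gD
  exactA : LinearMap.range i.gA = LinearMap.ker p.gA
  exactB : LinearMap.range i.gB = LinearMap.ker p.gB
  exactC : LinearMap.range i.gC = LinearMap.ker p.gC
  exactD : LinearMap.range i.gD = LinearMap.ker p.gD

/-- A short exact sequence `0 → Y → E → X → 0` splits if the projection admits a section
which is a morphism of representations. -/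
def SES4.IsSplit {Y X : Rep4} (ξ : SES4 Y X) : Prop :=
  ∃ s : Hom4 X ξ.E,
    (∀ x, ξ.p.gA (s.gA x) = x) ∧ (∀ x, ξ.p.gB (s.gB x) = x) ∧
    (∀ x, ξ.p.gC (s.gC x) = x) ∧ (∀ x, ξ.p.gD (s.gD x) = x)

/-- `ScaledEquiv4 lam ξ₁ ξ₂` says that the Yoneda class of `ξ₂` equals `lam` times the
Yoneda class of `ξ₁`: there is an isomorphism of representations `e : E₁ ≅ E₂` such that
`e(i₁ y) = i₂ (lam • y)` and `p₂ ∘ e = p₁`. -/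
def ScaledEquiv4 {Y X : Rep4} (lam : ℂ) (ξ₁ ξ₂ : SES4 Y X) : Prop :=
  ∃ (eA : ξ₁.E.VA ≃ₗ[ℂ] ξ₂.E.VA) (eB : ξ₁.E.VB ≃ₗ[ℂ] ξ₂.E.VB)
    (eC : ξ₁.E.VC ≃ₗ[ℂ] ξ₂.E.VC) (eD : ξ₁.E.VD ≃ₗ[ℂ] ξ₂.E.VD),
    (∀ x, eA (ξ₁.E.fa1 x) = ξ₂.E.fa1 (eD x)) ∧ (∀ x, eA (ξ₁.E.fa2 x) = ξ₂.E.fa2 (eD x)) ∧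
    (∀ x, eB (ξ₁.E.fb1 x) = ξ₂.E.fb1 (eA x)) ∧ (∀ x, eC (ξ₁.E.fb2 x) = ξ₂.E.fb2 (eA x)) ∧
    (∀ x, eB (ξ₁.E.fa3 x) = ξ₂.E.fa3 (eC x)) ∧ (∀ x, eD (ξ₁.E.fc1 x) = ξ₂.E.fc1 (eB x)) ∧
    (∀ x, eD (ξ₁.E.fc2 x) = ξ₂.E.fc2 (eC x)) ∧
    (∀ y, eA (ξ₁.i.gA y) = ξ₂.i.gA (lam • y)) ∧ (∀ y, eB (ξ₁.i.gB y) = ξ₂.i.gB (lam • y)) ∧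
    (∀ y, eC (ξ₁.i.gC y) = ξ₂.i.gC (lam • y)) ∧ (∀ y, eD (ξ₁.i.gD y) = ξ₂.i.gD (lam • y)) ∧
    (∀ v, ξ₂.p.gA (eA v) = ξ₁.p.gA v) ∧ (∀ v, ξ₂.p.gB (eB v) = ξ₁.p.gB v) ∧
    (∀ v, ξ₂.p.gC (eC v) = ξ₁.p.gC v) ∧ (∀ v, ξ₂.p.gD (eD v) = ξ₁.p.gD v)

/-- The Yoneda extension group `Ext¹(X, Y)` (equivalence classes of short exact sequences
`0 → Y → E → X → 0` with the Baer-sum `ℂ`-vector space structure) is one-dimensional over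
`ℂ`: there is a nonzero class (a non-split sequence), and any two nonzero classes are
proportional by a nonzero scalar. -/
def ExtOneDimensional4 (X Y : Rep4) : Prop :=
  (∃ ξ : SES4 Y X, ¬ ξ.IsSplit) ∧
    ∀ ξ₁ ξ₂ : SES4 Y X, ¬ ξ₁.IsSplit → ¬ ξ₂.IsSplit →
      ∃ lam : ℂ, lam ≠ 0 ∧ ScaledEquiv4 lam ξ₁ ξ₂

namespace Ext4

section vertex
variable {Y E X Y' E' X' E₁ E₂ : Type} [AddCommGroup Y] [AddCommGroup E] [AddCommGroup X]
  [AddCommGroup Y'] [AddCommGroup E'] [AddCommGroup X'] [AddCommGroup E₁] [AddCommGroup E₂]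
  [Module ℂ Y] [Module ℂ E] [Module ℂ X] [Module ℂ Y'] [Module ℂ E'] [Module ℂ X']
  [Module ℂ E₁] [Module ℂ E₂]

theorem exact_zero {i : Y →ₗ[ℂ] E} {p : E →ₗ[ℂ] X}
    (he : LinearMap.range i = LinearMap.ker p) (y : Y) : p (i y) = 0 := by
  have : i y ∈ LinearMap.ker p := he ▸ LinearMap.mem_range_self i y
  simpa using this

theorem exact_lift {i : Y →ₗ[ℂ] E} {p : E →ₗ[ℂ] X}
    (he : LinearMap.range i = LinearMap.ker p) (v : E) (hv : p v = 0) : ∃ y, i y = v := by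
  have : v ∈ LinearMap.range i := he ▸ (LinearMap.mem_ker.2 hv)
  simpa using this

theorem exists_section {p : E →ₗ[ℂ] X} (hp : Function.Surjective p) :
    ∃ s : X →ₗ[ℂ] E, ∀ x, p (s x) = x := by
  obtain ⟨s, hs⟩ := p.exists_rightInverse_of_surjective (LinearMap.range_eq_top.2 hp)
  exact ⟨s, fun x => by simpa using LinearMap.congr_fun hs x⟩

theorem exists_coc {i : Y →ₗ[ℂ] E} {p : E →ₗ[ℂ] X} (hi : Function.Injective i)
    (he : LinearMap.range i = LinearMap.ker p) (g : X' →ₗ[ℂ] E) (hg : ∀ x, p (g x) = 0) :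
    ∃ φ : X' →ₗ[ℂ] Y, ∀ x, g x = i (φ x) := by
  choose f hf using fun x => exact_lift he (g x) (hg x)
  refine ⟨⟨⟨f, fun a b => hi ?_⟩, fun a b => hi ?_⟩, fun x => (hf x).symm⟩
  · simp [hf]
  · simp [hf]

/-- The cocycle of one arrow. -/
theorem arrow_coc {i' : Y' →ₗ[ℂ] E'} {p : E →ₗ[ℂ] X} {p' : E' →ₗ[ℂ] X'}
    (hi : Function.Injective i') (he : LinearMap.range i' = LinearMap.ker p')
    {s : X →ₗ[ℂ] E} {s' : X' →ₗ[ℂ] E'} (hs : ∀ x, p (s x) = x) (hs' : ∀ x, p' (s' x) = x)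
    (fE : E →ₗ[ℂ] E') (fX : X →ₗ[ℂ] X') (hc : ∀ v, p' (fE v) = fX (p v)) :
    ∃ φ : X →ₗ[ℂ] Y', ∀ x, fE (s x) = s' (fX x) + i' (φ x) := by
  obtain ⟨φ, hφ⟩ := exists_coc hi he (fE ∘ₗ s - s' ∘ₗ fX) (fun x => by simp [hc, hs, hs'])
  refine ⟨φ, fun x => ?_⟩
  have := hφ x
  simp at this
  rw [← this]; abel

/-- The cocycle relation attached to a zero relation `g ∘ f = 0`. -/
theorem rel_coc {Y'' E'' X'' : Type} [AddCommGroup Y''] [AddCommGroup E''] [AddCommGroup X'']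
    [Module ℂ Y''] [Module ℂ E''] [Module ℂ X'']
    {i' : Y' →ₗ[ℂ] E'} {i'' : Y'' →ₗ[ℂ] E''} (hi : Function.Injective i'')
    {s : X →ₗ[ℂ] E} {s' : X' →ₗ[ℂ] E'} {s'' : X'' →ₗ[ℂ] E''}
    {f : E →ₗ[ℂ] E'} {g : E' →ₗ[ℂ] E''} {fX : X →ₗ[ℂ] X'} {gX : X' →ₗ[ℂ] X''}
    {gY : Y' →ₗ[ℂ] Y''} {φ : X →ₗ[ℂ] Y'} {ψ : X' →ₗ[ℂ] Y''}
    (hφ : ∀ x, f (s x) = s' (fX x) + i' (φ x)) (hψ : ∀ x, g (s' x) = s'' (gX x) + i'' (ψ x))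
    (hY : ∀ y, i'' (gY y) = g (i' y)) (hE : g ∘ₗ f = 0) (hX : gX ∘ₗ fX = 0) (x : X) :
    gY (φ x) + ψ (fX x) = 0 := by
  apply hi
  have h1 : g (f (s x)) = 0 := LinearMap.congr_fun hE (s x)
  have h2 : gX (fX x) = 0 := LinearMap.congr_fun hX x
  rw [hφ, map_add, hψ, h2, ← hY] at h1
  rw [map_add, map_zero, ← h1]
  simp [add_comm]

theorem shift_coc {i : Y →ₗ[ℂ] E} {i' : Y' →ₗ[ℂ] E'} 
    {s : X →ₗ[ℂ] E} {s' : X' →ₗ[ℂ] E'} {f : E →ₗ[ℂ] E'} {fX : X →ₗ[ℂ] X'} {fY : Y →ₗ[ℂ] Y'}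
    {φ φ' : X →ₗ[ℂ] Y'} (hφ : ∀ x, f (s x) = s' (fX x) + i' (φ x))
    (hY : ∀ y, i' (fY y) = f (i y)) (h : X →ₗ[ℂ] Y) (h' : X' →ₗ[ℂ] Y')
    (hh : ∀ x, φ' x = φ x + fY (h x) - h' (fX x)) (x : X) :
    f ((s + i ∘ₗ h) x) = (s' + i' ∘ₗ h') (fX x) + i' (φ' x) := by
  simp [hφ, hh, hY]; abel

theorem vertex_equiv {i : Y →ₗ[ℂ] E} {p : E →ₗ[ℂ] X} (hi : Function.Injective i)
    (he : LinearMap.range i = LinearMap.ker p) {s : X →ₗ[ℂ] E} (hs : ∀ x, p (s x) = x) :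
    ∃ e : (Y × X) ≃ₗ[ℂ] E, ∀ z, e z = i z.1 + s z.2 := by
  refine ⟨LinearEquiv.ofBijective (i.coprod s) ⟨?_, ?_⟩, fun z => rfl⟩
  · rw [injective_iff_map_eq_zero]
    rintro ⟨y, x⟩ h
    simp at h
    have hx : x = 0 := by
      have := congrArg p h
      simpa [exact_zero he, hs] using this
    subst hx
    have : y = 0 := hi (by simpa using h)
    simp [this]
  · intro v
    obtain ⟨y, hy⟩ := exact_lift he (v - s (p v)) (by simp [hs])
    exact ⟨(y, p v), by simp [hy]⟩

theorem vertex_scaled {i₁ : Y →ₗ[ℂ] E₁} {p₁ : E₁ →ₗ[ℂ] X} (hi₁ : Function.Injective i₁)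
    (he₁ : LinearMap.range i₁ = LinearMap.ker p₁) {s₁ : X →ₗ[ℂ] E₁} (hs₁ : ∀ x, p₁ (s₁ x) = x)
    {i₂ : Y →ₗ[ℂ] E₂} {p₂ : E₂ →ₗ[ℂ] X} (hi₂ : Function.Injective i₂)
    (he₂ : LinearMap.range i₂ = LinearMap.ker p₂) {s₂ : X →ₗ[ℂ] E₂} (hs₂ : ∀ x, p₂ (s₂ x) = x)
    {lam : ℂ} (hl : lam ≠ 0) :
    ∃ e : E₁ ≃ₗ[ℂ] E₂, (∀ y, e (i₁ y) = i₂ (lam • y)) ∧ (∀ x, e (s₁ x) = s₂ x) ∧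
      (∀ v, p₂ (e v) = p₁ v) ∧ (∀ v, ∃ y x, v = i₁ y + s₁ x) := by
  obtain ⟨e₁, h₁⟩ := vertex_equiv hi₁ he₁ hs₁
  obtain ⟨e₂, h₂⟩ := vertex_equiv hi₂ he₂ hs₂
  have key : ∀ v, ∃ y x, v = i₁ y + s₁ x := fun v =>
    ⟨(e₁.symm v).1, (e₁.symm v).2, by rw [← h₁]; simp⟩
  let e : E₁ ≃ₗ[ℂ] E₂ := e₁.symm ≪≫ₗ
    ((LinearEquiv.smulOfNeZero ℂ Y lam hl).prodCongr (LinearEquiv.refl ℂ X)) ≪≫ₗ e₂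
  have h3 : ∀ y x, e (i₁ y + s₁ x) = i₂ (lam • y) + s₂ x := by
    intro y x
    have : e₁.symm (i₁ y + s₁ x) = (y, x) := by
      rw [LinearEquiv.symm_apply_eq, h₁]
    simp only [e, LinearEquiv.trans_apply, this, h₂]
    simp
  have hA : ∀ y, e (i₁ y) = i₂ (lam • y) := fun y => by simpa using h3 y 0
  have hB : ∀ x, e (s₁ x) = s₂ x := fun x => by simpa using h3 0 x
  refine ⟨e, hA, hB, fun v => ?_, key⟩
  obtain ⟨y, x, rfl⟩ := key v
  rw [h3]
  simp only [map_add, exact_zero he₁, exact_zero he₂, hs₁, hs₂]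

theorem arrow_scaled {E₁' E₂' : Type} [AddCommGroup E₁'] [AddCommGroup E₂'] [Module ℂ E₁']
    [Module ℂ E₂'] {i₁ : Y →ₗ[ℂ] E₁} {i₂ : Y →ₗ[ℂ] E₂} {i₁' : Y' →ₗ[ℂ] E₁'} {i₂' : Y' →ₗ[ℂ] E₂'}
    {s₁ : X →ₗ[ℂ] E₁} {s₂ : X →ₗ[ℂ] E₂} {s₁' : X' →ₗ[ℂ] E₁'} {s₂' : X' →ₗ[ℂ] E₂'}
    {f₁ : E₁ →ₗ[ℂ] E₁'} {f₂ : E₂ →ₗ[ℂ] E₂'} {fX : X →ₗ[ℂ] X'} {fY : Y →ₗ[ℂ] Y'}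
    {φ₁ φ₂ : X →ₗ[ℂ] Y'} {lam : ℂ}
    {e : E₁ ≃ₗ[ℂ] E₂} {e' : E₁' ≃ₗ[ℂ] E₂'}
    (ei : ∀ y, e (i₁ y) = i₂ (lam • y)) (es : ∀ x, e (s₁ x) = s₂ x)
    (key : ∀ v, ∃ y x, v = i₁ y + s₁ x)
    (ei' : ∀ y, e' (i₁' y) = i₂' (lam • y)) (es' : ∀ x, e' (s₁' x) = s₂' x)
    (hφ₁ : ∀ x, f₁ (s₁ x) = s₁' (fX x) + i₁' (φ₁ x))
    (hφ₂ : ∀ x, f₂ (s₂ x) = s₂' (fX x) + i₂' (φ₂ x))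
    (hY₁ : ∀ y, i₁' (fY y) = f₁ (i₁ y)) (hY₂ : ∀ y, i₂' (fY y) = f₂ (i₂ y))
    (hl : ∀ x, φ₂ x = lam • φ₁ x) (v : E₁) : e' (f₁ v) = f₂ (e v) := by
  obtain ⟨y, x, rfl⟩ := key v
  simp only [map_add, ei, es, hφ₁, hφ₂, ← hY₁, ← hY₂, ei', es', hl, map_smul]

end vertex

/-- Cochains. -/
structure Coc (Y X : Rep4) where
  a1 : X.VD →ₗ[ℂ] Y.VA
  a2 : X.VD →ₗ[ℂ] Y.VA
  b1 : X.VA →ₗ[ℂ] Y.VB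
  b2 : X.VA →ₗ[ℂ] Y.VC
  a3 : X.VC →ₗ[ℂ] Y.VB
  c1 : X.VB →ₗ[ℂ] Y.VD
  c2 : X.VC →ₗ[ℂ] Y.VD

structure Coc.Rel {Y X : Rep4} (c : Coc Y X) : Prop where
  ba1 : ∀ x, Y.fb1 (c.a1 x) + c.b1 (X.fa1 x) = 0
  cb1 : ∀ x, Y.fc1 (c.b1 x) + c.c1 (X.fb1 x) = 0
  ac1 : ∀ x, Y.fa1 (c.c1 x) + c.a1 (X.fc1 x) = 0
  ba2 : ∀ x, Y.fb2 (c.a2 x) + c.b2 (X.fa2 x) = 0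
  cb2 : ∀ x, Y.fc2 (c.b2 x) + c.c2 (X.fb2 x) = 0
  ac2 : ∀ x, Y.fa2 (c.c2 x) + c.a2 (X.fc2 x) = 0

structure Cobd (Y X : Rep4) where
  A : X.VA →ₗ[ℂ] Y.VA
  B : X.VB →ₗ[ℂ] Y.VB
  C : X.VC →ₗ[ℂ] Y.VC
  D : X.VD →ₗ[ℂ] Y.VD

structure Cohom {Y X : Rep4} (c c' : Coc Y X) (h : Cobd Y X) : Prop where
  a1 : ∀ x, c'.a1 x = c.a1 x + Y.fa1 (h.D x) - h.A (X.fa1 x)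
  a2 : ∀ x, c'.a2 x = c.a2 x + Y.fa2 (h.D x) - h.A (X.fa2 x)
  b1 : ∀ x, c'.b1 x = c.b1 x + Y.fb1 (h.A x) - h.B (X.fb1 x)
  b2 : ∀ x, c'.b2 x = c.b2 x + Y.fb2 (h.A x) - h.C (X.fb2 x)
  a3 : ∀ x, c'.a3 x = c.a3 x + Y.fa3 (h.C x) - h.B (X.fa3 x)
  c1 : ∀ x, c'.c1 x = c.c1 x + Y.fc1 (h.B x) - h.D (X.fc1 x)
  c2 : ∀ x, c'.c2 x = c.c2 x + Y.fc2 (h.C x) - h.D (X.fc2 x)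

structure HasCoc {Y X : Rep4} (ξ : SES4 Y X) (c : Coc Y X) where
  sA : X.VA →ₗ[ℂ] ξ.E.VA
  sB : X.VB →ₗ[ℂ] ξ.E.VB
  sC : X.VC →ₗ[ℂ] ξ.E.VC
  sD : X.VD →ₗ[ℂ] ξ.E.VD
  hA : ∀ x, ξ.p.gA (sA x) = x
  hB : ∀ x, ξ.p.gB (sB x) = x
  hC : ∀ x, ξ.p.gC (sC x) = x
  hD : ∀ x, ξ.p.gD (sD x) = x
  a1 : ∀ x, ξ.E.fa1 (sD x) = sA (X.fa1 x) + ξ.i.gA (c.a1 x)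
  a2 : ∀ x, ξ.E.fa2 (sD x) = sA (X.fa2 x) + ξ.i.gA (c.a2 x)
  b1 : ∀ x, ξ.E.fb1 (sA x) = sB (X.fb1 x) + ξ.i.gB (c.b1 x)
  b2 : ∀ x, ξ.E.fb2 (sA x) = sC (X.fb2 x) + ξ.i.gC (c.b2 x)
  a3 : ∀ x, ξ.E.fa3 (sC x) = sB (X.fa3 x) + ξ.i.gB (c.a3 x)
  c1 : ∀ x, ξ.E.fc1 (sB x) = sD (X.fc1 x) + ξ.i.gD (c.c1 x)
  c2 : ∀ x, ξ.E.fc2 (sC x) = sD (X.fc2 x) + ξ.i.gD (c.c2 x)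

theorem exists_hasCoc {Y X : Rep4} (ξ : SES4 Y X) :
    ∃ c : Coc Y X, c.Rel ∧ Nonempty (HasCoc ξ c) := by
  obtain ⟨sA, hA⟩ := exists_section ξ.surjA
  obtain ⟨sB, hB⟩ := exists_section ξ.surjB
  obtain ⟨sC, hC⟩ := exists_section ξ.surjC
  obtain ⟨sD, hD⟩ := exists_section ξ.surjD
  obtain ⟨a1, ha1⟩ := arrow_coc ξ.injA ξ.exactA hD hA ξ.E.fa1 X.fa1 ξ.p.comm_a1
  obtain ⟨a2, ha2⟩ := arrow_coc ξ.injA ξ.exactA hD hA ξ.E.fa2 X.fa2 ξ.p.comm_a2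
  obtain ⟨b1, hb1⟩ := arrow_coc ξ.injB ξ.exactB hA hB ξ.E.fb1 X.fb1 ξ.p.comm_b1
  obtain ⟨b2, hb2⟩ := arrow_coc ξ.injC ξ.exactC hA hC ξ.E.fb2 X.fb2 ξ.p.comm_b2
  obtain ⟨a3, ha3⟩ := arrow_coc ξ.injB ξ.exactB hC hB ξ.E.fa3 X.fa3 ξ.p.comm_a3
  obtain ⟨c1, hc1⟩ := arrow_coc ξ.injD ξ.exactD hB hD ξ.E.fc1 X.fc1 ξ.p.comm_c1
  obtain ⟨c2, hc2⟩ := arrow_coc ξ.injD ξ.exactD hC hD ξ.E.fc2 X.fc2 ξ.p.comm_c2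
  refine ⟨⟨a1, a2, b1, b2, a3, c1, c2⟩, ⟨?_, ?_, ?_, ?_, ?_, ?_⟩,
    ⟨⟨sA, sB, sC, sD, hA, hB, hC, hD, ha1, ha2, hb1, hb2, ha3, hc1, hc2⟩⟩⟩
  · exact rel_coc ξ.injB ha1 hb1 ξ.i.comm_b1 ξ.E.rel_ba1 X.rel_ba1
  · exact rel_coc ξ.injD hb1 hc1 ξ.i.comm_c1 ξ.E.rel_cb1 X.rel_cb1
  · exact rel_coc ξ.injA hc1 ha1 ξ.i.comm_a1 ξ.E.rel_ac1 X.rel_ac1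
  · exact rel_coc ξ.injC ha2 hb2 ξ.i.comm_b2 ξ.E.rel_ba2 X.rel_ba2
  · exact rel_coc ξ.injD hb2 hc2 ξ.i.comm_c2 ξ.E.rel_cb2 X.rel_cb2
  · exact rel_coc ξ.injA hc2 ha2 ξ.i.comm_a2 ξ.E.rel_ac2 X.rel_ac2

def HasCoc.shift {Y X : Rep4} {ξ : SES4 Y X} {c c' : Coc Y X} (H : HasCoc ξ c)
    {h : Cobd Y X} (hh : Cohom c c' h) : HasCoc ξ c' where
  sA := H.sA + ξ.i.gA ∘ₗ h.A
  sB := H.sB + ξ.i.gB ∘ₗ h.B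
  sC := H.sC + ξ.i.gC ∘ₗ h.C
  sD := H.sD + ξ.i.gD ∘ₗ h.D
  hA x := by simp [H.hA, exact_zero ξ.exactA]
  hB x := by simp [H.hB, exact_zero ξ.exactB]
  hC x := by simp [H.hC, exact_zero ξ.exactC]
  hD x := by simp [H.hD, exact_zero ξ.exactD]
  a1 := shift_coc H.a1 ξ.i.comm_a1 h.D h.A hh.a1
  a2 := shift_coc H.a2 ξ.i.comm_a2 h.D h.A hh.a2
  b1 := shift_coc H.b1 ξ.i.comm_b1 h.A h.B hh.b1
  b2 := shift_coc H.b2 ξ.i.comm_b2 h.A h.C hh.b2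
  a3 := shift_coc H.a3 ξ.i.comm_a3 h.C h.B hh.a3
  c1 := shift_coc H.c1 ξ.i.comm_c1 h.B h.D hh.c1
  c2 := shift_coc H.c2 ξ.i.comm_c2 h.C h.D hh.c2

def zeroCoc (Y X : Rep4) : Coc Y X := ⟨0, 0, 0, 0, 0, 0, 0⟩

theorem HasCoc.split {Y X : Rep4} {ξ : SES4 Y X} (H : HasCoc ξ (zeroCoc Y X)) : ξ.IsSplit := by
  refine ⟨⟨H.sA, H.sB, H.sC, H.sD, fun x => ?_, fun x => ?_, fun x => ?_, fun x => ?_,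
    fun x => ?_, fun x => ?_, fun x => ?_⟩, H.hA, H.hB, H.hC, H.hD⟩
  · simp [H.a1, zeroCoc]
  · simp [H.a2, zeroCoc]
  · simp [H.b1, zeroCoc]
  · simp [H.b2, zeroCoc]
  · simp [H.a3, zeroCoc]
  · simp [H.c1, zeroCoc]
  · simp [H.c2, zeroCoc]

structure IsScaled {Y X : Rep4} (lam : ℂ) (c c' : Coc Y X) : Prop where
  a1 : ∀ x, c'.a1 x = lam • c.a1 x
  a2 : ∀ x, c'.a2 x = lam • c.a2 x
  b1 : ∀ x, c'.b1 x = lam • c.b1 x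
  b2 : ∀ x, c'.b2 x = lam • c.b2 x
  a3 : ∀ x, c'.a3 x = lam • c.a3 x
  c1 : ∀ x, c'.c1 x = lam • c.c1 x
  c2 : ∀ x, c'.c2 x = lam • c.c2 x

theorem HasCoc.scaled {Y X : Rep4} {ξ₁ ξ₂ : SES4 Y X} {c₁ c₂ : Coc Y X} (H₁ : HasCoc ξ₁ c₁)
    (H₂ : HasCoc ξ₂ c₂) {lam : ℂ} (hl : lam ≠ 0) (h : IsScaled lam c₁ c₂) :
    ScaledEquiv4 lam ξ₁ ξ₂ := by
  obtain ⟨eA, iA, sA, pA, kA⟩ := vertex_scaled ξ₁.injA ξ₁.exactA H₁.hA ξ₂.injA ξ₂.exactA H₂.hA hl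
  obtain ⟨eB, iB, sB, pB, kB⟩ := vertex_scaled ξ₁.injB ξ₁.exactB H₁.hB ξ₂.injB ξ₂.exactB H₂.hB hl
  obtain ⟨eC, iC, sC, pC, kC⟩ := vertex_scaled ξ₁.injC ξ₁.exactC H₁.hC ξ₂.injC ξ₂.exactC H₂.hC hl
  obtain ⟨eD, iD, sD, pD, kD⟩ := vertex_scaled ξ₁.injD ξ₁.exactD H₁.hD ξ₂.injD ξ₂.exactD H₂.hD hl
  refine ⟨eA, eB, eC, eD, ?_, ?_, ?_, ?_, ?_, ?_, ?_, iA, iB, iC, iD, pA, pB, pC, pD⟩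
  · exact arrow_scaled iD sD kD iA sA H₁.a1 H₂.a1 ξ₁.i.comm_a1 ξ₂.i.comm_a1 h.a1
  · exact arrow_scaled iD sD kD iA sA H₁.a2 H₂.a2 ξ₁.i.comm_a2 ξ₂.i.comm_a2 h.a2
  · exact arrow_scaled iA sA kA iB sB H₁.b1 H₂.b1 ξ₁.i.comm_b1 ξ₂.i.comm_b1 h.b1
  · exact arrow_scaled iA sA kA iC sC H₁.b2 H₂.b2 ξ₁.i.comm_b2 ξ₂.i.comm_b2 h.b2
  · exact arrow_scaled iC sC kC iB sB H₁.a3 H₂.a3 ξ₁.i.comm_a3 ξ₂.i.comm_a3 h.a3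
  · exact arrow_scaled iB sB kB iD sD H₁.c1 H₂.c1 ξ₁.i.comm_c1 ξ₂.i.comm_c1 h.c1
  · exact arrow_scaled iC sC kC iD sD H₁.c2 H₂.c2 ξ₁.i.comm_c2 ξ₂.i.comm_c2 h.c2

section tri
variable {Y X Y' X' Y'' X'' : Type} [AddCommGroup Y] [AddCommGroup X]
  [AddCommGroup Y'] [AddCommGroup X'] [AddCommGroup Y''] [AddCommGroup X'']
  [Module ℂ Y] [Module ℂ X] [Module ℂ Y'] [Module ℂ X'] [Module ℂ Y''] [Module ℂ X'']

/-- Upper triangular map. -/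
def tri (f : Y →ₗ[ℂ] Y') (φ : X →ₗ[ℂ] Y') (g : X →ₗ[ℂ] X') : (Y × X) →ₗ[ℂ] (Y' × X') :=
  (f.coprod φ).prod (g ∘ₗ LinearMap.snd ℂ Y X)

theorem tri_apply (f : Y →ₗ[ℂ] Y') (φ : X →ₗ[ℂ] Y') (g : X →ₗ[ℂ] X') (z : Y × X) :
    tri f φ g z = (f z.1 + φ z.2, g z.2) := rfl

theorem tri_comp {f : Y →ₗ[ℂ] Y'} {φ : X →ₗ[ℂ] Y'} {g : X →ₗ[ℂ] X'}
    {f' : Y' →ₗ[ℂ] Y''} {φ' : X' →ₗ[ℂ] Y''} {g' : X' →ₗ[ℂ] X''}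
    (hf : f' ∘ₗ f = 0) (hg : g' ∘ₗ g = 0) (h : ∀ x, f' (φ x) + φ' (g x) = 0) :
    tri f' φ' g' ∘ₗ tri f φ g = 0 := by
  refine LinearMap.ext fun z => ?_
  have h1 : f' (f z.1) = 0 := LinearMap.congr_fun hf z.1
  have h2 : g' (g z.2) = 0 := LinearMap.congr_fun hg z.2
  simp [tri_apply, h1, h2, h]

theorem inl_snd : LinearMap.range (LinearMap.inl ℂ Y X) = LinearMap.ker (LinearMap.snd ℂ Y X) := by
  ext z
  constructor
  · rintro ⟨y, rfl⟩; simp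
  · intro hz; exact ⟨z.1, Prod.ext rfl (by simpa using hz.symm)⟩

end tri

/-- The extension defined by a cocycle. -/
def Coc.rep {Y X : Rep4} (c : Coc Y X) (h : c.Rel) : Rep4 where
  VA := Y.VA × X.VA
  VB := Y.VB × X.VB
  VC := Y.VC × X.VC
  VD := Y.VD × X.VD
  fa1 := tri Y.fa1 c.a1 X.fa1
  fa2 := tri Y.fa2 c.a2 X.fa2
  fb1 := tri Y.fb1 c.b1 X.fb1
  fb2 := tri Y.fb2 c.b2 X.fb2
  fa3 := tri Y.fa3 c.a3 X.fa3
  fc1 := tri Y.fc1 c.c1 X.fc1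
  fc2 := tri Y.fc2 c.c2 X.fc2
  rel_ba1 := tri_comp Y.rel_ba1 X.rel_ba1 h.ba1
  rel_cb1 := tri_comp Y.rel_cb1 X.rel_cb1 h.cb1
  rel_ac1 := tri_comp Y.rel_ac1 X.rel_ac1 h.ac1
  rel_ba2 := tri_comp Y.rel_ba2 X.rel_ba2 h.ba2
  rel_cb2 := tri_comp Y.rel_cb2 X.rel_cb2 h.cb2
  rel_ac2 := tri_comp Y.rel_ac2 X.rel_ac2 h.ac2

theorem tri_inl {Y X Y' X' : Type} [AddCommGroup Y] [AddCommGroup X]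
    [AddCommGroup Y'] [AddCommGroup X'] [Module ℂ Y] [Module ℂ X] [Module ℂ Y'] [Module ℂ X']
    (f : Y →ₗ[ℂ] Y') (φ : X →ₗ[ℂ] Y') (g : X →ₗ[ℂ] X') (y : Y) :
    LinearMap.inl ℂ Y' X' (f y) = tri f φ g (LinearMap.inl ℂ Y X y) := by
  simp [tri_apply]

def Coc.ses {Y X : Rep4} (c : Coc Y X) (h : c.Rel) : SES4 Y X where
  E := c.rep h
  i := 
    { gA := LinearMap.inl ℂ Y.VA X.VA
      gB := LinearMap.inl ℂ Y.VB X.VB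
      gC := LinearMap.inl ℂ Y.VC X.VC
      gD := LinearMap.inl ℂ Y.VD X.VD
      comm_a1 := tri_inl _ _ _
      comm_a2 := tri_inl _ _ _
      comm_b1 := tri_inl _ _ _
      comm_b2 := tri_inl _ _ _
      comm_a3 := tri_inl _ _ _
      comm_c1 := tri_inl _ _ _
      comm_c2 := tri_inl _ _ _ }
  p := 
    { gA := LinearMap.snd ℂ Y.VA X.VA
      gB := LinearMap.snd ℂ Y.VB X.VB
      gC := LinearMap.snd ℂ Y.VC X.VC
      gD := LinearMap.snd ℂ Y.VD X.VD
      comm_a1 := fun _ => rfl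
      comm_a2 := fun _ => rfl
      comm_b1 := fun _ => rfl
      comm_b2 := fun _ => rfl
      comm_a3 := fun _ => rfl
      comm_c1 := fun _ => rfl
      comm_c2 := fun _ => rfl }
  injA := LinearMap.inl_injective
  injB := LinearMap.inl_injective
  injC := LinearMap.inl_injective
  injD := LinearMap.inl_injective
  surjA := LinearMap.snd_surjective
  surjB := LinearMap.snd_surjective
  surjC := LinearMap.snd_surjective
  surjD := LinearMap.snd_surjective
  exactA := inl_snd
  exactB := inl_snd
  exactC := inl_snd
  exactD := inl_snd

theorem split_aux {Y X Y' X' : Type} [AddCommGroup Y] [AddCommGroup X]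
    [AddCommGroup Y'] [AddCommGroup X'] [Module ℂ Y] [Module ℂ X] [Module ℂ Y'] [Module ℂ X']
    {f : Y →ₗ[ℂ] Y'} {φ : X →ₗ[ℂ] Y'} {g : X →ₗ[ℂ] X'} {s : X →ₗ[ℂ] Y × X}
    {s' : X' →ₗ[ℂ] Y' × X'} (hs : ∀ x, (s x).2 = x)
    (hc : ∀ x, s' (g x) = tri f φ g (s x)) (x : X) :
    (0 : X →ₗ[ℂ] Y') x = φ x + f ((LinearMap.fst ℂ Y X ∘ₗ s) x)
      - (LinearMap.fst ℂ Y' X' ∘ₗ s') (g x) := by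
  simp [hc, tri_apply, hs]; abel

theorem Coc.ses_split {Y X : Rep4} (c : Coc Y X) (h : c.Rel) (hs : (c.ses h).IsSplit) :
    ∃ k : Cobd Y X, Cohom c (zeroCoc Y X) k := by
  obtain ⟨s, hA, hB, hC, hD⟩ := hs
  refine ⟨⟨LinearMap.fst ℂ Y.VA X.VA ∘ₗ s.gA, LinearMap.fst ℂ Y.VB X.VB ∘ₗ s.gB,
    LinearMap.fst ℂ Y.VC X.VC ∘ₗ s.gC, LinearMap.fst ℂ Y.VD X.VD ∘ₗ s.gD⟩, ?_, ?_, ?_, ?_, ?_, ?_, ?_⟩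
  · exact split_aux hD s.comm_a1
  · exact split_aux hD s.comm_a2
  · exact split_aux hA s.comm_b1
  · exact split_aux hA s.comm_b2
  · exact split_aux hC s.comm_a3
  · exact split_aux hB s.comm_c1
  · exact split_aux hC s.comm_c2

/-- Criterion for one-dimensionality: a one-parameter family of cocycles. -/
theorem oneDim {X Y : Rep4} (F : ℂ → Coc Y X) (hrel : (F 1).Rel)
    (hns : ∀ k, ¬ Cohom (F 1) (zeroCoc Y X) k) (h0 : F 0 = zeroCoc Y X)
    (hsc : ∀ l t, IsScaled l (F t) (F (l * t)))
    (hn : ∀ c : Coc Y X, c.Rel → ∃ t h, Cohom c (F t) h) : ExtOneDimensional4 X Y := by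
  refine ⟨⟨(F 1).ses hrel, fun h => ?_⟩, fun ξ₁ ξ₂ n₁ n₂ => ?_⟩
  · obtain ⟨k, hk⟩ := (F 1).ses_split hrel h
    exact hns k hk
  · have key : ∀ ξ : SES4 Y X, ¬ ξ.IsSplit → ∃ t, t ≠ 0 ∧ Nonempty (HasCoc ξ (F t)) := by
      intro ξ hξ
      obtain ⟨c, hc, ⟨H⟩⟩ := exists_hasCoc ξ
      obtain ⟨t, h, hh⟩ := hn c hc
      refine ⟨t, ?_, ⟨H.shift hh⟩⟩
      rintro rfl
      rw [h0] at hh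
      exact hξ (H.shift hh).split
    obtain ⟨t₁, ht₁, ⟨H₁⟩⟩ := key ξ₁ n₁
    obtain ⟨t₂, ht₂, ⟨H₂⟩⟩ := key ξ₂ n₂
    have := hsc (t₂ / t₁) t₁
    rw [div_mul_cancel₀ _ ht₁] at this
    exact ⟨t₂ / t₁, div_ne_zero ht₂ ht₁, H₁.scaled H₂ (div_ne_zero ht₂ ht₁) this⟩

theorem allSplit {X Y : Rep4} (hn : ∀ c : Coc Y X, c.Rel → ∃ h, Cohom c (zeroCoc Y X) h)
    (ξ : SES4 Y X) : ξ.IsSplit := by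
  obtain ⟨c, hc, ⟨H⟩⟩ := exists_hasCoc ξ
  obtain ⟨h, hh⟩ := hn c hc
  exact (H.shift hh).split

instance : Subsingleton Mb1.VC := inferInstanceAs (Subsingleton (Fin 0 → ℂ))
instance : Subsingleton Mb1.VD := inferInstanceAs (Subsingleton (Fin 0 → ℂ))
instance : Subsingleton Mc2.VA := inferInstanceAs (Subsingleton (Fin 0 → ℂ))
instance : Subsingleton Mc2.VB := inferInstanceAs (Subsingleton (Fin 0 → ℂ))

def mu (t : ℂ) : ℂ →ₗ[ℂ] ℂ := t • LinearMap.id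

theorem lin (f : ℂ →ₗ[ℂ] ℂ) : ∃ t : ℂ, f = mu t :=
  ⟨f 1, by ext; simp [mu]⟩

theorem mu_zero : mu 0 = 0 := by simp [mu]

theorem split_33 : ∀ ξ : SES4 Mb2a3c1 Mb2a3c1, ξ.IsSplit := by
  refine allSplit ?_
  rintro ⟨a1, a2, b1, b2, a3, c1, c2⟩ ⟨r1, r2, r3, r4, r5, r6⟩
  obtain ⟨a1, rfl⟩ := lin a1
  obtain ⟨a2, rfl⟩ := lin a2
  obtain ⟨b1, rfl⟩ := lin b1
  obtain ⟨b2, rfl⟩ := lin b2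
  obtain ⟨a3, rfl⟩ := lin a3
  obtain ⟨c1, rfl⟩ := lin c1
  obtain ⟨c2, rfl⟩ := lin c2
  have q2 : b1 * 1 + c1 * 0 = 0 := r2 (1 : ℂ)
  have q3 : 0 + a1 * 1 = 0 := r3 (1 : ℂ)
  have q4 : a2 * 1 + b2 * 0 = 0 := r4 (1 : ℂ)
  have q5 : 0 + c2 * 1 = 0 := r5 (1 : ℂ)
  refine ⟨⟨mu 0, mu (b2 + a3), mu b2, mu (b2 + a3 + c1)⟩, ?_, ?_, ?_, ?_, ?_, ?_, ?_⟩ <;>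
    intro (x : ℂ)
  · show (0 : ℂ) = a1 * x + 0 - 0 * 0
    linear_combination (-x) * q3
  · show (0 : ℂ) = a2 * x + 0 - 0 * 0
    linear_combination (-x) * q4
  · show (0 : ℂ) = b1 * x + 0 - (b2 + a3) * 0
    linear_combination (-x) * q2
  · show (0 : ℂ) = b2 * x + 0 * x - b2 * x
    ring
  · show (0 : ℂ) = a3 * x + b2 * x - (b2 + a3) * x
    ring
  · show (0 : ℂ) = c1 * x + (b2 + a3) * x - (b2 + a3 + c1) * x
    ring
  · show (0 : ℂ) = c2 * x + 0 - (b2 + a3 + c1) * 0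
    linear_combination (-x) * q5

theorem split_22 : ∀ ξ : SES4 Mb1 Mb1, ξ.IsSplit := by
  refine allSplit ?_
  rintro ⟨a1, a2, b1, b2, a3, c1, c2⟩ -
  obtain ⟨b1, rfl⟩ := lin b1
  refine ⟨⟨mu 0, mu b1, 0, 0⟩, ?_, ?_, ?_, ?_, ?_, ?_, ?_⟩ <;> intro x
  · rw [Subsingleton.elim x 0]; simp <;> exact map_zero (mu _)
  · rw [Subsingleton.elim x 0]; simp <;> exact map_zero (mu _)
  · change ℂ at x
    show (0 : ℂ) = b1 * x + 0 * x - b1 * x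
    ring
  · exact Subsingleton.elim _ _
  · rw [Subsingleton.elim x 0]; simp <;> exact map_zero (mu _)
  · exact Subsingleton.elim _ _
  · exact Subsingleton.elim _ _

theorem split_11 : ∀ ξ : SES4 Mc2 Mc2, ξ.IsSplit := by
  refine allSplit ?_
  rintro ⟨a1, a2, b1, b2, a3, c1, c2⟩ -
  obtain ⟨c2, rfl⟩ := lin c2
  refine ⟨⟨0, 0, mu 0, mu c2⟩, ?_, ?_, ?_, ?_, ?_, ?_, ?_⟩ <;> intro x
  · exact Subsingleton.elim _ _
  · exact Subsingleton.elim _ _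
  · exact Subsingleton.elim _ _
  · rw [Subsingleton.elim x 0]; simp <;> exact map_zero (mu _)
  · exact Subsingleton.elim _ _
  · rw [Subsingleton.elim x 0]; simp <;> exact map_zero (mu _)
  · change ℂ at x
    show (0 : ℂ) = c2 * x + 0 * x - c2 * x
    ring

theorem split_21 : ∀ ξ : SES4 Mc2 Mb1, ξ.IsSplit := by
  refine allSplit ?_
  rintro ⟨a1, a2, b1, b2, a3, c1, c2⟩ ⟨r1, r2, r3, r4, r5, r6⟩
  obtain ⟨b2, rfl⟩ := lin b2
  obtain ⟨c1, rfl⟩ := lin c1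
  obtain rfl : c2 = 0 := Subsingleton.elim _ _
  have q2 : 0 + c1 * 1 = 0 := r2 (1 : ℂ)
  have q5 : b2 * 1 + 0 = 0 := r5 (1 : ℂ)
  refine ⟨⟨0, 0, 0, 0⟩, ?_, ?_, ?_, ?_, ?_, ?_, ?_⟩ <;> intro x
  · exact Subsingleton.elim _ _
  · exact Subsingleton.elim _ _
  · exact Subsingleton.elim _ _
  · change ℂ at x
    show (0 : ℂ) = b2 * x + 0 - 0
    linear_combination (-x) * q5
  · exact Subsingleton.elim _ _
  · change ℂ at x
    show (0 : ℂ) = c1 * x + 0 - 0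
    linear_combination (-x) * q2
  · rw [Subsingleton.elim x 0]; simp <;> exact map_zero (mu _)

theorem split_31 : ∀ ξ : SES4 Mc2 Mb2a3c1, ξ.IsSplit := by
  refine allSplit ?_
  rintro ⟨a1, a2, b1, b2, a3, c1, c2⟩ ⟨r1, r2, r3, r4, r5, r6⟩
  obtain ⟨b2, rfl⟩ := lin b2
  obtain ⟨c1, rfl⟩ := lin c1
  obtain ⟨c2, rfl⟩ := lin c2
  have q5 : b2 * 1 + c2 * 1 = 0 := r5 (1 : ℂ)
  refine ⟨⟨0, 0, mu b2, mu c1⟩, ?_, ?_, ?_, ?_, ?_, ?_, ?_⟩ <;> intro x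
  · exact Subsingleton.elim _ _
  · exact Subsingleton.elim _ _
  · exact Subsingleton.elim _ _
  · change ℂ at x
    show (0 : ℂ) = b2 * x + 0 - b2 * x
    ring
  · exact Subsingleton.elim _ _
  · change ℂ at x
    show (0 : ℂ) = c1 * x + 0 - c1 * x
    ring
  · change ℂ at x
    show (0 : ℂ) = c2 * x + b2 * x - c1 * 0
    linear_combination (-x) * q5

theorem split_23 : ∀ ξ : SES4 Mb2a3c1 Mb1, ξ.IsSplit := by
  refine allSplit ?_
  rintro ⟨a1, a2, b1, b2, a3, c1, c2⟩ ⟨r1, r2, r3, r4, r5, r6⟩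
  obtain ⟨b1, rfl⟩ := lin b1
  obtain ⟨b2, rfl⟩ := lin b2
  obtain ⟨c1, rfl⟩ := lin c1
  have q2 : b1 * 1 + c1 * 1 = 0 := r2 (1 : ℂ)
  refine ⟨⟨mu (-b2), mu b1, 0, 0⟩, ?_, ?_, ?_, ?_, ?_, ?_, ?_⟩ <;> intro x
  · rw [Subsingleton.elim x 0]; simp <;> exact map_zero (mu _)
  · rw [Subsingleton.elim x 0]; simp <;> exact map_zero (mu _)
  · change ℂ at x
    show (0 : ℂ) = b1 * x + 0 - b1 * x
    ring
  · change ℂ at x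
    show (0 : ℂ) = b2 * x + (-b2) * x - 0
    ring
  · rw [Subsingleton.elim x 0]; simp <;> exact map_zero (mu _)
  · change ℂ at x
    show (0 : ℂ) = c1 * x + b1 * x - 0
    linear_combination (-x) * q2
  · rw [Subsingleton.elim x 0]; simp <;> exact map_zero (mu _)

def F12 (m : ℂ →ₗ[ℂ] ℂ) : Coc Mb1 Mc2 := ⟨0, 0, 0, 0, m, 0, 0⟩
def F13 (m : ℂ →ₗ[ℂ] ℂ) : Coc Mb2a3c1 Mc2 := ⟨m, 0, 0, 0, 0, 0, 0⟩
def F32 (m : ℂ →ₗ[ℂ] ℂ) : Coc Mb1 Mb2a3c1 := ⟨0, m, 0, 0, 0, 0, 0⟩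

theorem ext_12 : ExtOneDimensional4 Mc2 Mb1 := by
  refine oneDim (fun t => F12 (mu t)) ?_ ?_ (congrArg F12 mu_zero) ?_ ?_
  · refine ⟨?_, ?_, ?_, ?_, ?_, ?_⟩ <;> intro x
    · exact add_zero (0 : ℂ)
    · exact Subsingleton.elim _ _
    · exact add_zero (0 : ℂ)
    · exact Subsingleton.elim _ _
    · exact Subsingleton.elim _ _
    · exact add_zero (0 : ℂ)
  · rintro ⟨A, B, C, D⟩ hk
    obtain rfl : B = 0 := Subsingleton.elim _ _
    have h : (0 : ℂ) = 1 * 1 + 0 - 0 := hk.a3 (1 : ℂ)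
    norm_num at h
  · intro l t
    exact ⟨fun x => (smul_zero l).symm, fun x => (smul_zero l).symm, fun x => (smul_zero l).symm,
      fun x => (smul_zero l).symm, fun x => mul_assoc l t x, fun x => (smul_zero l).symm,
      fun x => (smul_zero l).symm⟩
  · rintro ⟨a1, a2, b1, b2, a3, c1, c2⟩ ⟨r1, r2, r3, r4, r5, r6⟩
    obtain ⟨a1, rfl⟩ := lin a1
    obtain ⟨a2, rfl⟩ := lin a2
    obtain ⟨a3, rfl⟩ := lin a3
    obtain rfl : b1 = 0 := Subsingleton.elim _ _
    have q1 : a1 * 1 + 0 = 0 := r1 (1 : ℂ)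
    have q6 : 0 + a2 * 1 = 0 := r6 (1 : ℂ)
    refine ⟨a3, ⟨0, 0, 0, 0⟩, ?_, ?_, ?_, ?_, ?_, ?_, ?_⟩ <;> intro x
    · change ℂ at x
      show (0 : ℂ) = a1 * x + 0 - 0
      linear_combination (-x) * q1
    · change ℂ at x
      show (0 : ℂ) = a2 * x + 0 - 0
      linear_combination (-x) * q6
    · rw [Subsingleton.elim x 0]; simp <;> exact map_zero (mu _)
    · exact Subsingleton.elim _ _
    · change ℂ at x
      show a3 * x = a3 * x + 0 - 0
      ring
    · exact Subsingleton.elim _ _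
    · exact Subsingleton.elim _ _

theorem ext_13 : ExtOneDimensional4 Mc2 Mb2a3c1 := by
  refine oneDim (fun t => F13 (mu t)) ?_ ?_ (congrArg F13 mu_zero) ?_ ?_
  · refine ⟨?_, ?_, ?_, ?_, ?_, ?_⟩ <;> intro x
    · exact add_zero (0 : ℂ)
    · exact add_zero (0 : ℂ)
    · rw [Subsingleton.elim x 0]; simp <;> exact map_zero (mu _)
    · exact add_zero (0 : ℂ)
    · exact add_zero (0 : ℂ)
    · exact add_zero (0 : ℂ)
  · rintro ⟨A, B, C, D⟩ hk
    obtain rfl : A = 0 := Subsingleton.elim _ _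
    have h : (0 : ℂ) = 1 * 1 + 0 - 0 := hk.a1 (1 : ℂ)
    norm_num at h
  · intro l t
    exact ⟨fun x => mul_assoc l t x, fun x => (smul_zero l).symm, fun x => (smul_zero l).symm,
      fun x => (smul_zero l).symm, fun x => (smul_zero l).symm, fun x => (smul_zero l).symm,
      fun x => (smul_zero l).symm⟩
  · rintro ⟨a1, a2, b1, b2, a3, c1, c2⟩ ⟨r1, r2, r3, r4, r5, r6⟩
    obtain ⟨a1, rfl⟩ := lin a1
    obtain ⟨a2, rfl⟩ := lin a2
    obtain ⟨a3, rfl⟩ := lin a3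
    obtain ⟨c2, rfl⟩ := lin c2
    have q6 : 0 + a2 * 1 = 0 := r6 (1 : ℂ)
    refine ⟨a1, ⟨0, 0, mu (-a3), mu c2⟩, ?_, ?_, ?_, ?_, ?_, ?_, ?_⟩ <;> intro x
    · change ℂ at x
      show a1 * x = a1 * x + 0 - 0
      ring
    · change ℂ at x
      show (0 : ℂ) = a2 * x + 0 - 0
      linear_combination (-x) * q6
    · rw [Subsingleton.elim x 0]; simp <;> exact map_zero (mu _)
    · rw [Subsingleton.elim x 0]; simp <;> exact map_zero (mu _)
    · change ℂ at x
      show (0 : ℂ) = a3 * x + (-a3) * x - 0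
      ring
    · rw [Subsingleton.elim x 0]; simp <;> exact map_zero (mu _)
    · change ℂ at x
      show (0 : ℂ) = c2 * x + 0 - c2 * x
      ring

theorem ext_32 : ExtOneDimensional4 Mb2a3c1 Mb1 := by
  refine oneDim (fun t => F32 (mu t)) ?_ ?_ (congrArg F32 mu_zero) ?_ ?_
  · refine ⟨?_, ?_, ?_, ?_, ?_, ?_⟩ <;> intro x
    · exact add_zero (0 : ℂ)
    · exact Subsingleton.elim _ _
    · exact add_zero (0 : ℂ)
    · exact Subsingleton.elim _ _
    · exact Subsingleton.elim _ _
    · show (0 : ℂ) + 1 * 0 = 0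
      norm_num
  · rintro ⟨A, B, C, D⟩ hk
    obtain ⟨A, rfl⟩ := lin A
    have h : (0 : ℂ) = 1 * 1 + 0 - A * 0 := hk.a2 (1 : ℂ)
    norm_num at h
  · intro l t
    exact ⟨fun x => (smul_zero l).symm, fun x => mul_assoc l t x, fun x => (smul_zero l).symm,
      fun x => (smul_zero l).symm, fun x => (smul_zero l).symm, fun x => (smul_zero l).symm,
      fun x => (smul_zero l).symm⟩
  · rintro ⟨a1, a2, b1, b2, a3, c1, c2⟩ ⟨r1, r2, r3, r4, r5, r6⟩
    obtain ⟨a1, rfl⟩ := lin a1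
    obtain ⟨a2, rfl⟩ := lin a2
    obtain ⟨b1, rfl⟩ := lin b1
    obtain ⟨a3, rfl⟩ := lin a3
    have q1 : a1 * 1 + b1 * 0 = 0 := r1 (1 : ℂ)
    refine ⟨a2, ⟨mu (-b1), mu a3, 0, 0⟩, ?_, ?_, ?_, ?_, ?_, ?_, ?_⟩ <;> intro x
    · change ℂ at x
      show (0 : ℂ) = a1 * x + 0 - (-b1) * 0
      linear_combination (-x) * q1
    · change ℂ at x
      show a2 * x = a2 * x + 0 - (-b1) * 0
      ring
    · change ℂ at x
      show (0 : ℂ) = b1 * x + (-b1) * x - a3 * 0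
      ring
    · exact Subsingleton.elim _ _
    · change ℂ at x
      show (0 : ℂ) = a3 * x + 0 - a3 * x
      ring
    · exact Subsingleton.elim _ _
    · exact Subsingleton.elim _ _

end Ext4

/-- Let `M₁ = M(c₂)`, `M₂ = M(b₁)` and `M₃ = M(b₂a₃c₁)`.
(i) For `(X, Y) ∈ {(M₁,M₂), (M₁,M₃), (M₃,M₂)}` there is a non-split short exact sequence
`0 → Y → E → X → 0` and `Ext¹(X, Y)` is one-dimensional over `ℂ` (both contained in
`ExtOneDimensional4 X Y`).
(ii) For the remaining six ordered pairs `(X, Y)`, including all pairs `(Mᵢ, Mᵢ)`, every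
short exact sequence `0 → Y → E → X → 0` splits. -/
theorem ext_groups_of_three_stables :
    (ExtOneDimensional4 Mc2 Mb1 ∧ ExtOneDimensional4 Mc2 Mb2a3c1 ∧
      ExtOneDimensional4 Mb2a3c1 Mb1) ∧
    ((∀ ξ : SES4 Mc2 Mb1, ξ.IsSplit) ∧
     (∀ ξ : SES4 Mc2 Mb2a3c1, ξ.IsSplit) ∧
     (∀ ξ : SES4 Mb2a3c1 Mb1, ξ.IsSplit) ∧
     (∀ ξ : SES4 Mc2 Mc2, ξ.IsSplit) ∧
     (∀ ξ : SES4 Mb1 Mb1, ξ.IsSplit) ∧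
     (∀ ξ : SES4 Mb2a3c1 Mb2a3c1, ξ.IsSplit)) := by
  exact ⟨⟨Ext4.ext_12, Ext4.ext_13, Ext4.ext_32⟩, Ext4.split_21, Ext4.split_31, Ext4.split_23,
    Ext4.split_11, Ext4.split_22, Ext4.split_33⟩
end
end

section
/- Fix a central charge Z : ℤ² → ℂ with φ(0,1) < φ(1,0). A representation M of the barbell quiver with potential with dimension vector (d, d), d ≥ 1, is semistable if and only if M is isomorphic to a direct sum M' ⊕ M'' in which the map f_c of M' is an isomorphism and M'' is a finite (possibly empty) direct sum of string modules M(acb(c⁻¹acb)ⁿ) with n ≥ 0. In particular every representation whose map f_c is an isomorphism is semistable, and each string module M(acb(c⁻¹acb)ⁿ) is semistable. -/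
/-!
# Statement 5

Work over `ℂ`.  The barbell quiver has vertices `1` and `2`, a loop `a` at vertex `1`, a loop
`b` at vertex `2`, and an arrow `c : 1 → 2`; its potential is `W = a³ + b³`, whose Jacobian
relations are `a² = 0` and `b² = 0`.  Fix a central charge `Z : ℤ² → ℂ` with
`φ(0,1) < φ(1,0)`.  A representation `M` of the barbell quiver with potential with dimension
vector `(d, d)`, `d ≥ 1`, is semistable if and only if `M` is isomorphic to a direct sum
`M' ⊕ M''` in which the map `f_c` of `M'` is an isomorphism and `M''` is a finite (possibly
empty) direct sum of string modules `M(acb(c⁻¹acb)ⁿ)` with `n ≥ 0`.  In particular every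
representation whose map `f_c` is an isomorphism is semistable, and each string module
`M(acb(c⁻¹acb)ⁿ)` is semistable.
-/

noncomputable section
open Module

/-- A representation of the barbell quiver with potential `W = a³ + b³`: finite-dimensional
`ℂ`-vector spaces `V1, V2` and linear maps `fa : V1 → V1`, `fb : V2 → V2`, `fc : V1 → V2`
satisfying the Jacobian relations `fa ∘ fa = 0` and `fb ∘ fb = 0`. -/
structure BarbellRep where
  V1 : Type
  V2 : Type
  [acg1 : AddCommGroup V1]
  [acg2 : AddCommGroup V2]
  [mod1 : Module ℂ V1]
  [mod2 : Module ℂ V2]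
  [fd1 : FiniteDimensional ℂ V1]
  [fd2 : FiniteDimensional ℂ V2]
  fa : V1 →ₗ[ℂ] V1
  fb : V2 →ₗ[ℂ] V2
  fc : V1 →ₗ[ℂ] V2
  rel_a : fa ∘ₗ fa = 0
  rel_b : fb ∘ₗ fb = 0

attribute [instance] BarbellRep.acg1 BarbellRep.acg2 BarbellRep.mod1 BarbellRep.mod2
  BarbellRep.fd1 BarbellRep.fd2

namespace BarbellRep

/-- The dimension vector `(dim V1, dim V2)`. -/
def dimVec (M : BarbellRep) : ℕ × ℕ := (finrank ℂ M.V1, finrank ℂ M.V2)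

/-- A subrepresentation: a pair of submodules closed under the structure maps. -/
structure Sub (M : BarbellRep) where
  S1 : Submodule ℂ M.V1
  S2 : Submodule ℂ M.V2
  mapsto_a : ∀ x ∈ S1, M.fa x ∈ S1
  mapsto_b : ∀ y ∈ S2, M.fb y ∈ S2
  mapsto_c : ∀ x ∈ S1, M.fc x ∈ S2

/-- The dimension vector of a subrepresentation. -/
def Sub.dimVec {M : BarbellRep} (L : M.Sub) : ℕ × ℕ := (finrank ℂ L.S1, finrank ℂ L.S2)

/-- The subrepresentation is nonzero. -/
def Sub.Nonzero {M : BarbellRep} (L : M.Sub) : Prop := L.S1 ≠ ⊥ ∨ L.S2 ≠ ⊥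

/-- The subrepresentation is proper. -/
def Sub.Proper {M : BarbellRep} (L : M.Sub) : Prop := L.S1 ≠ ⊤ ∨ L.S2 ≠ ⊤

end BarbellRep

/-- The value of the central charge on a dimension vector in `ℕ²`. -/
def chargeOf (Z : ℤ × ℤ →+ ℂ) (d : ℕ × ℕ) : ℂ := Z ((d.1 : ℤ), (d.2 : ℤ))

/-- A nonzero representation `M` is semistable if `φ(dim L) ≤ φ(dim M)` for every nonzero
proper subrepresentation `L` of `M`. -/
def IsSemistable (Z : ℤ × ℤ →+ ℂ) (M : BarbellRep) : Prop :=
  M.dimVec ≠ (0, 0) ∧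
    ∀ L : M.Sub, L.Nonzero → L.Proper →
      phase (chargeOf Z L.dimVec) ≤ phase (chargeOf Z M.dimVec)

/-- Isomorphism of barbell representations. -/
def RepIso (M N : BarbellRep) : Prop :=
  ∃ (e1 : M.V1 ≃ₗ[ℂ] N.V1) (e2 : M.V2 ≃ₗ[ℂ] N.V2),
    (∀ x, e1 (M.fa x) = N.fa (e1 x)) ∧ (∀ y, e2 (M.fb y) = N.fb (e2 y)) ∧
      (∀ x, e2 (M.fc x) = N.fc (e1 x))

/-- Componentwise direct sum of barbell representations. -/
def dsum (M N : BarbellRep) : BarbellRep where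
  V1 := M.V1 × N.V1
  V2 := M.V2 × N.V2
  fa := M.fa.prodMap N.fa
  fb := M.fb.prodMap N.fb
  fc := M.fc.prodMap N.fc
  rel_a := by
    apply LinearMap.ext
    rintro ⟨x, y⟩
    have h1 := LinearMap.congr_fun M.rel_a x
    have h2 := LinearMap.congr_fun N.rel_a y
    simp only [LinearMap.comp_apply, LinearMap.prodMap_apply, LinearMap.zero_apply] at h1 h2 ⊢
    simp [h1, h2]
  rel_b := by
    apply LinearMap.ext
    rintro ⟨x, y⟩
    have h1 := LinearMap.congr_fun M.rel_b x
    have h2 := LinearMap.congr_fun N.rel_b y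
    simp only [LinearMap.comp_apply, LinearMap.prodMap_apply, LinearMap.zero_apply] at h1 h2 ⊢
    simp [h1, h2]

/-- The zero representation. -/
def zeroRep : BarbellRep where
  V1 := Fin 0 → ℂ
  V2 := Fin 0 → ℂ
  fa := 0
  fb := 0
  fc := 0
  rel_a := by simp
  rel_b := by simp

/-- Direct sum of a finite list of barbell representations. -/
def dsumList (l : List BarbellRep) : BarbellRep := l.foldr dsum zeroRep

/-! ## The string modules `M(acb(c⁻¹acb)ⁿ)`

The walk `acb(c⁻¹acb)ⁿ` has length `4n + 3` and `4n + 4` vertex-instances `z₀, …, z_{4n+3}`,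
where `z_{4k}, z_{4k+1}` lie at vertex `1` and `z_{4k+2}, z_{4k+3}` lie at vertex `2`
(`0 ≤ k ≤ n`).  We realise the string module with
`V1 = V2 = (Fin (n+1) × Bool) → ℂ`, where `(k, false)` indexes `z_{4k}` in `V1` (resp.
`z_{4k+2}` in `V2`) and `(k, true)` indexes `z_{4k+1}` in `V1` (resp. `z_{4k+3}` in `V2`).
The structure maps of the string module are:
`f_a(z_{4k}) = z_{4k+1}`, `f_b(z_{4k+2}) = z_{4k+3}`, `f_c(z_{4k+1}) = z_{4k+2}` (letter `c`)
and `f_c(z_{4k+4}) = z_{4k+3}` (letter `c⁻¹`), all other basis vectors mapping to `0`. -/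

/-- The map sending the basis vector indexed `(k, false)` to the one indexed `(k, true)`
and killing the others; this is `f_a` (and also `f_b`) of the string module. -/
def strFa (n : ℕ) : ((Fin (n + 1) × Bool) → ℂ) →ₗ[ℂ] ((Fin (n + 1) × Bool) → ℂ) where
  toFun v p := if p.2 then v (p.1, false) else 0
  map_add' u v := by
    funext p
    by_cases h : p.2 <;> simp [h]
  map_smul' c v := by
    funext p
    by_cases h : p.2 <;> simp [h]

/-- The map `f_c` of the string module `M(acb(c⁻¹acb)ⁿ)`:
`f_c(z_{4k+1}) = z_{4k+2}` and `f_c(z_{4k+4}) = z_{4k+3}`, i.e. the coefficient of the output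
at `z_{4k+2}` is the input coefficient at `z_{4k+1}`, and the coefficient of the output at
`z_{4k+3}` is the input coefficient at `z_{4k+4}` (when `k + 1 ≤ n`). -/
def strFc (n : ℕ) : ((Fin (n + 1) × Bool) → ℂ) →ₗ[ℂ] ((Fin (n + 1) × Bool) → ℂ) where
  toFun v p :=
    if p.2 then
      (if h : (p.1 : ℕ) + 1 < n + 1 then v (⟨(p.1 : ℕ) + 1, h⟩, false) else 0)
    else v (p.1, true)
  map_add' u v := by
    funext p
    by_cases h : p.2
    · simp only [h, if_true, Pi.add_apply]
      split <;> simp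
    · simp [h]
  map_smul' c v := by
    funext p
    by_cases h : p.2
    · simp only [h, if_true, Pi.smul_apply, RingHom.id_apply]
      split <;> simp
    · simp [h]

/-- The string module `M(acb(c⁻¹acb)ⁿ)`. -/
def Mstring (n : ℕ) : BarbellRep where
  V1 := (Fin (n + 1) × Bool) → ℂ
  V2 := (Fin (n + 1) × Bool) → ℂ
  fa := strFa n
  fb := strFa n
  fc := strFc n
  rel_a := by
    apply LinearMap.ext
    intro v
    funext p
    by_cases h : p.2 <;> simp [strFa, h]
  rel_b := by
    apply LinearMap.ext
    intro v
    funext p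
    by_cases h : p.2 <;> simp [strFa, h]


/-! ## Phases -/

def cross (z w : ℂ) : ℝ := z.re * w.im - z.im * w.re

def PosH (z : ℂ) : Prop := 0 < z.im ∨ (z.im = 0 ∧ z.re < 0)

theorem posH_of_mem {z : ℂ} (hz : z ∈ UpperH) : PosH z := by
  obtain ⟨r, p, hr, hp, hp1, rfl⟩ := hz
  have him : ((r : ℂ) * Complex.exp ((Real.pi * p : ℝ) * Complex.I)).im
      = r * Real.sin (Real.pi * p) := by
    rw [Complex.im_ofReal_mul, Complex.exp_ofReal_mul_I_im]
  have hre : ((r : ℂ) * Complex.exp ((Real.pi * p : ℝ) * Complex.I)).re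
      = r * Real.cos (Real.pi * p) := by
    rw [Complex.re_ofReal_mul, Complex.exp_ofReal_mul_I_re]
  unfold PosH
  rw [him, hre]
  rcases hp1.lt_or_eq with h | h
  · left
    apply mul_pos hr
    apply Real.sin_pos_of_pos_of_lt_pi
    · positivity
    · nlinarith [Real.pi_pos]
  · right
    subst h
    simp [hr]

theorem PosH.arg_pos {z : ℂ} (hz : PosH z) : 0 < Complex.arg z := by
  rcases hz with h | ⟨h, h'⟩
  · have h1 : 0 ≤ Complex.arg z := Complex.arg_nonneg_iff.2 h.le
    rcases h1.lt_or_eq with h2 | h2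
    · exact h2
    · have := (Complex.arg_eq_zero_iff.1 h2.symm).2
      linarith
  · rw [Complex.arg_eq_pi_iff.2 ⟨h', h⟩]
    exact Real.pi_pos

theorem cross_eq (z w : ℂ) :
    cross z w = ‖z‖ * ‖w‖ * Real.sin (Complex.arg w - Complex.arg z) := by
  rw [Real.sin_sub]
  have h1 := Complex.norm_mul_cos_arg z
  have h2 := Complex.norm_mul_sin_arg z
  have h3 := Complex.norm_mul_cos_arg w
  have h4 := Complex.norm_mul_sin_arg w
  unfold cross
  rw [← h1, ← h2, ← h3, ← h4]
  ring

theorem PosH.norm_pos {z : ℂ} (hz : PosH z) : 0 < ‖z‖ := by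
  rw [_root_.norm_pos_iff]
  rintro rfl
  rcases hz with h | ⟨h, h'⟩ <;> simp at *

theorem phase_le_iff {z w : ℂ} (hz : PosH z) (hw : PosH w) :
    phase z ≤ phase w ↔ 0 ≤ cross z w := by
  unfold phase
  rw [div_le_div_iff_of_pos_right Real.pi_pos, cross_eq]
  have hn : 0 < ‖z‖ * ‖w‖ := mul_pos hz.norm_pos hw.norm_pos
  rw [mul_nonneg_iff_of_pos_left hn]
  have h1 := hz.arg_pos
  have h2 := hw.arg_pos
  have h3 := Complex.arg_le_pi z
  have h4 := Complex.arg_le_pi w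
  constructor
  · intro h
    apply Real.sin_nonneg_of_nonneg_of_le_pi <;> linarith
  · intro h
    by_contra! h'
    have : Real.sin (Complex.arg w - Complex.arg z) < 0 :=
      Real.sin_neg_of_neg_of_neg_pi_lt (by linarith) (by linarith)
    linarith

theorem posH_comb {z w : ℂ} (hz : PosH z) (hw : PosH w) (x y : ℕ) (h : x ≠ 0 ∨ y ≠ 0) :
    PosH (x * z + y * w) := by
  have key : ∀ (z : ℂ), PosH z → ∀ x : ℕ, x ≠ 0 → PosH (x * z) := by
    intro z hz x hx
    have : (0 : ℝ) < x := by positivity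
    rcases hz with h | ⟨h, h'⟩
    · left; simp; positivity
    · right; simp [h]; nlinarith
  have add : ∀ z w : ℂ, PosH z → PosH w → PosH (z + w) := by
    intro z w hz hw
    unfold PosH at *
    simp only [Complex.add_im, Complex.add_re]
    rcases hz with h | ⟨h, h'⟩ <;> rcases hw with g | ⟨g, g'⟩
    · left; linarith
    · left; linarith
    · left; linarith
    · right; constructor <;> linarith
  by_cases hx : x = 0
  · have hy : y ≠ 0 := by tauto
    subst hx
    simpa using key w hw y hy
  · by_cases hy : y = 0
    · subst hy
      simpa using key z hz x hx
    · exact add _ _ (key z hz x hx) (key w hw y hy)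

theorem chargeOf_eq (Z : ℤ × ℤ →+ ℂ) (x y : ℕ) :
    chargeOf Z (x, y) = x * Z (1, 0) + y * Z (0, 1) := by
  unfold chargeOf
  have : (((x : ℤ), (y : ℤ)) : ℤ × ℤ) = x • ((1, 0) : ℤ × ℤ) + y • ((0, 1) : ℤ × ℤ) := by
    ext <;> simp
  rw [this, map_add, map_nsmul, map_nsmul]
  simp

theorem phase_iff (Z : ℤ × ℤ →+ ℂ)
    (hZ10 : Z (1, 0) ∈ UpperH) (hZ01 : Z (0, 1) ∈ UpperH)
    (hph : phase (Z (0, 1)) < phase (Z (1, 0))) (x y d : ℕ) (hd : d ≠ 0)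
    (h : x ≠ 0 ∨ y ≠ 0) :
    phase (chargeOf Z (x, y)) ≤ phase (chargeOf Z (d, d)) ↔ x ≤ y := by
  have p1 := posH_of_mem hZ10
  have p2 := posH_of_mem hZ01
  rw [chargeOf_eq, chargeOf_eq,
    phase_le_iff (posH_comb p1 p2 x y h) (posH_comb p1 p2 d d (Or.inl hd))]
  have hc : cross (Z (1, 0)) (Z (0, 1)) < 0 := by
    have := phase_le_iff p1 p2
    by_contra! h'
    linarith [this.2 h']
  have e : cross (x * Z (1, 0) + y * Z (0, 1)) (d * Z (1, 0) + d * Z (0, 1))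
      = (d * (- cross (Z (1, 0)) (Z (0, 1)))) * ((y : ℝ) - x) := by
    unfold cross
    simp
    ring
  have hd' : (0 : ℝ) < d := by positivity
  rw [e, mul_nonneg_iff_of_pos_left (by apply mul_pos hd'; linarith), sub_nonneg]
  exact_mod_cast Iff.rfl

/-! ## The King condition -/

def King (M : BarbellRep) : Prop := ∀ L : M.Sub, finrank ℂ L.S1 ≤ finrank ℂ L.S2

theorem semistable_iff_king (Z : ℤ × ℤ →+ ℂ)
    (hZ10 : Z (1, 0) ∈ UpperH) (hZ01 : Z (0, 1) ∈ UpperH)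
    (hph : phase (Z (0, 1)) < phase (Z (1, 0))) (M : BarbellRep) (d : ℕ) (hd : d ≠ 0)
    (hM : M.dimVec = (d, d)) : IsSemistable Z M ↔ King M := by
  unfold IsSemistable King
  rw [hM]
  have key : ∀ L : M.Sub, L.Nonzero →
      (phase (chargeOf Z L.dimVec) ≤ phase (chargeOf Z (d, d)) ↔
        finrank ℂ L.S1 ≤ finrank ℂ L.S2) := by
    intro L hL
    apply phase_iff Z hZ10 hZ01 hph _ _ d hd
    rcases hL with h | h
    · left; rwa [Ne, Submodule.finrank_eq_zero]
    · right; rwa [Ne, Submodule.finrank_eq_zero]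
  constructor
  · rintro ⟨-, h⟩ L
    by_cases h0 : L.Nonzero
    · by_cases h1 : L.Proper
      · exact (key L h0).1 (h L h0 h1)
      · unfold BarbellRep.Sub.Proper at h1
        push Not at h1
        rw [h1.1, h1.2, finrank_top, finrank_top]
        simp only [BarbellRep.dimVec, Prod.mk.injEq] at hM
        omega
    · unfold BarbellRep.Sub.Nonzero at h0
      push Not at h0
      rw [h0.1]; simp
  · intro h
    refine ⟨by simp [hd], fun L h0 _ => (key L h0).2 (h L)⟩

theorem RepIso.symm {M N : BarbellRep} (h : RepIso M N) : RepIso N M := by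
  obtain ⟨e1, e2, ha, hb, hc⟩ := h
  refine ⟨e1.symm, e2.symm, fun x => ?_, fun x => ?_, fun x => ?_⟩
  · rw [LinearEquiv.symm_apply_eq, ha]; simp
  · rw [LinearEquiv.symm_apply_eq, hb]; simp
  · rw [LinearEquiv.symm_apply_eq, hc]; simp

theorem RepIso.trans {M N P : BarbellRep} (h : RepIso M N) (h' : RepIso N P) : RepIso M P := by
  obtain ⟨e1, e2, ha, hb, hc⟩ := h
  obtain ⟨f1, f2, ga, gb, gc⟩ := h'
  refine ⟨e1.trans f1, e2.trans f2, fun x => ?_, fun x => ?_, fun x => ?_⟩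
  · simp [ha, ga]
  · simp [hb, gb]
  · simp [hc, gc]

theorem RepIso.refl (M : BarbellRep) : RepIso M M :=
  ⟨LinearEquiv.refl _ _, LinearEquiv.refl _ _, fun _ => rfl, fun _ => rfl, fun _ => rfl⟩

theorem RepIso.dsum_congr {M N M' N' : BarbellRep} (h : RepIso M N) (h' : RepIso M' N') :
    RepIso (dsum M M') (dsum N N') := by
  obtain ⟨e1, e2, ha, hb, hc⟩ := h
  obtain ⟨f1, f2, ga, gb, gc⟩ := h'
  refine ⟨LinearEquiv.prodCongr e1 f1, LinearEquiv.prodCongr e2 f2, ?_, ?_, ?_⟩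
  · rintro ⟨x, y⟩
    exact Prod.ext (ha x) (ga y)
  · rintro ⟨x, y⟩
    exact Prod.ext (hb x) (gb y)
  · rintro ⟨x, y⟩
    exact Prod.ext (hc x) (gc y)

theorem King.of_iso {M N : BarbellRep} (h : RepIso M N) (hN : King N) : King M := by
  obtain ⟨e1, e2, ha, hb, hc⟩ := h
  intro L
  have := hN ⟨L.S1.map e1.toLinearMap, L.S2.map e2.toLinearMap, ?_, ?_, ?_⟩
  · simp only [] at this
    rwa [LinearEquiv.finrank_map_eq e1, LinearEquiv.finrank_map_eq e2] at this
  · rintro _ ⟨x, hx, rfl⟩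
    exact ⟨M.fa x, L.mapsto_a x hx, ha x⟩
  · rintro _ ⟨x, hx, rfl⟩
    exact ⟨M.fb x, L.mapsto_b x hx, hb x⟩
  · rintro _ ⟨x, hx, rfl⟩
    exact ⟨M.fc x, L.mapsto_c x hx, hc x⟩

theorem King.of_inj {M : BarbellRep} (h : Function.Injective M.fc) : King M := by
  intro L
  have e : finrank ℂ (L.S1.map M.fc) = finrank ℂ L.S1 :=
    (Submodule.equivMapOfInjective M.fc h L.S1).symm.finrank_eq
  rw [← e]
  apply Submodule.finrank_mono
  rintro _ ⟨x, hx, rfl⟩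
  exact L.mapsto_c x hx

theorem frk {V W : Type} [AddCommGroup V] [Module ℂ V] [FiniteDimensional ℂ V]
    [AddCommGroup W] [Module ℂ W] (X : Submodule ℂ V) (f : V →ₗ[ℂ] W) :
    finrank ℂ (X.map f) + finrank ℂ (X ⊓ LinearMap.ker f : Submodule ℂ V) = finrank ℂ X := by
  have h := LinearMap.finrank_range_add_finrank_ker (f.comp X.subtype)
  rw [LinearMap.range_comp, Submodule.range_subtype, LinearMap.ker_comp] at h
  rw [← h, ← Submodule.map_comap_subtype X]
  congr 1
  exact (Submodule.equivMapOfInjective _ X.injective_subtype _).finrank_eq.symm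

theorem frk_prod {V W : Type} [AddCommGroup V] [Module ℂ V] [FiniteDimensional ℂ V]
    [AddCommGroup W] [Module ℂ W] [FiniteDimensional ℂ W] (X : Submodule ℂ (V × W)) :
    finrank ℂ X = finrank ℂ (X.map (LinearMap.snd ℂ V W))
      + finrank ℂ (X.comap (LinearMap.inl ℂ V W)) := by
  rw [← frk X (LinearMap.snd ℂ V W)]
  congr 1
  have e : (X.comap (LinearMap.inl ℂ V W)).map (LinearMap.inl ℂ V W)
      = X ⊓ LinearMap.ker (LinearMap.snd ℂ V W) := by
    ext ⟨v, w⟩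
    simp only [Submodule.mem_map, Submodule.mem_comap, LinearMap.inl_apply, Submodule.mem_inf,
      LinearMap.mem_ker, LinearMap.snd_apply, Prod.mk.injEq]
    constructor
    · rintro ⟨y, hy, rfl, rfl⟩
      exact ⟨hy, rfl⟩
    · rintro ⟨hy, rfl⟩
      exact ⟨v, hy, rfl, rfl⟩
  rw [← e]
  exact (Submodule.equivMapOfInjective _ LinearMap.inl_injective _).finrank_eq.symm

theorem King.dsum {M N : BarbellRep} (hM : King M) (hN : King N) : King (dsum M N) := by
  rintro ⟨S1, S2, ha, hb, hc⟩
  change finrank ℂ S1 ≤ finrank ℂ S2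
  change Submodule ℂ (M.V1 × N.V1) at S1
  change Submodule ℂ (M.V2 × N.V2) at S2
  erw [frk_prod (V := M.V1) (W := N.V1) S1, frk_prod (V := M.V2) (W := N.V2) S2]
  refine Nat.add_le_add (hN ⟨S1.map (LinearMap.snd ℂ _ _), S2.map (LinearMap.snd ℂ _ _), ?_, ?_, ?_⟩)
    (hM ⟨S1.comap (LinearMap.inl ℂ _ _), S2.comap (LinearMap.inl ℂ _ _), ?_, ?_, ?_⟩)
  · rintro _ ⟨x, hx, rfl⟩
    exact ⟨_, ha x hx, rfl⟩
  · rintro _ ⟨x, hx, rfl⟩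
    exact ⟨_, hb x hx, rfl⟩
  · rintro _ ⟨x, hx, rfl⟩
    exact ⟨_, hc x hx, rfl⟩
  · intro x hx
    have h1 : (M.fa x, N.fa 0) ∈ S1 := ha _ hx
    rw [map_zero] at h1
    exact h1
  · intro x hx
    have h1 : (M.fb x, N.fb 0) ∈ S2 := hb _ hx
    rw [map_zero] at h1
    exact h1
  · intro x hx
    have h1 : (M.fc x, N.fc 0) ∈ S2 := hc _ hx
    rw [map_zero] at h1
    exact h1

/-! ## String-type representations attached to an endomorphism -/

def srep (U : Type) [AddCommGroup U] [Module ℂ U] [FiniteDimensional ℂ U] (Q : U →ₗ[ℂ] U) :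
    BarbellRep where
  V1 := U × U
  V2 := U × U
  fa := (LinearMap.inr ℂ U U).comp (LinearMap.fst ℂ U U)
  fb := (LinearMap.inr ℂ U U).comp (LinearMap.fst ℂ U U)
  fc := (LinearMap.snd ℂ U U).prod (Q.comp (LinearMap.fst ℂ U U))
  rel_a := by ext <;> simp
  rel_b := by ext <;> simp

theorem King.srep (U : Type) [AddCommGroup U] [Module ℂ U] [FiniteDimensional ℂ U]
    (Q : U →ₗ[ℂ] U) : King (srep U Q) := by
  rintro ⟨S1, S2, ha, hb, hc⟩
  change Submodule ℂ (U × U) at S1 S2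
  change finrank ℂ S1 ≤ finrank ℂ S2
  change ∀ x ∈ S1, ((0 : U), x.1) ∈ S1 at ha
  change ∀ x ∈ S2, ((0 : U), x.1) ∈ S2 at hb
  change ∀ x ∈ S1, (x.2, Q x.1) ∈ S2 at hc
  have h1 := frk S1 (LinearMap.fst ℂ U U)
  set I := S1.comap (LinearMap.inr ℂ U U) with hI
  have e : I.map (LinearMap.inr ℂ U U) = S1 ⊓ LinearMap.ker (LinearMap.fst ℂ U U) := by
    ext ⟨v, w⟩
    simp only [hI, Submodule.mem_map, Submodule.mem_comap, LinearMap.inr_apply, Submodule.mem_inf,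
      LinearMap.mem_ker, LinearMap.fst_apply, Prod.mk.injEq]
    constructor
    · rintro ⟨y, hy, rfl, rfl⟩
      exact ⟨hy, rfl⟩
    · rintro ⟨hy, rfl⟩
      exact ⟨w, hy, rfl, rfl⟩
  rw [← e] at h1
  have h2 : finrank ℂ (I.map (LinearMap.inr ℂ U U)) = finrank ℂ I :=
    (Submodule.equivMapOfInjective _ LinearMap.inr_injective _).finrank_eq.symm
  have h3 : S1.map (LinearMap.fst ℂ U U) ≤ I := by
    rintro _ ⟨x, hx, rfl⟩
    exact ha x hx
  have h4 := Submodule.finrank_mono h3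
  have h5 : ∀ w ∈ I, (w, (0 : U)) ∈ S2 := by
    intro w hw
    have := hc _ hw
    simpa using this
  have h6 : I.prod I ≤ S2 := by
    rintro ⟨v, w⟩ ⟨hv, hw⟩
    have := S2.add_mem (h5 v hv) (hb _ (h5 w hw))
    simpa using this
  have h7 := Submodule.finrank_mono h6
  have h8 : finrank ℂ (I.prod I) = finrank ℂ I + finrank ℂ I := by
    rw [frk_prod, Submodule.prod_map_snd, Submodule.prod_comap_inl]
  omega

theorem srep_iso {U W : Type} [AddCommGroup U] [Module ℂ U] [FiniteDimensional ℂ U]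
    [AddCommGroup W] [Module ℂ W] [FiniteDimensional ℂ W] (Q : U →ₗ[ℂ] U) (R : W →ₗ[ℂ] W)
    (e : U ≃ₗ[ℂ] W) (h : ∀ u, e (Q u) = R (e u)) : RepIso (srep U Q) (srep W R) := by
  refine ⟨LinearEquiv.prodCongr e e, LinearEquiv.prodCongr e e, ?_, ?_, ?_⟩
  · rintro ⟨x, y⟩
    exact Prod.ext (map_zero e) rfl
  · rintro ⟨x, y⟩
    exact Prod.ext (map_zero e) rfl
  · rintro ⟨x, y⟩
    exact Prod.ext rfl (h x)

theorem srep_prod {U W : Type} [AddCommGroup U] [Module ℂ U] [FiniteDimensional ℂ U]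
    [AddCommGroup W] [Module ℂ W] [FiniteDimensional ℂ W] (Q : U →ₗ[ℂ] U) (R : W →ₗ[ℂ] W) :
    RepIso (srep (U × W) (Q.prodMap R)) (dsum (srep U Q) (srep W R)) := by
  refine ⟨LinearEquiv.prodProdProdComm ℂ U W U W, LinearEquiv.prodProdProdComm ℂ U W U W,
    ?_, ?_, ?_⟩ <;> rintro ⟨⟨x, y⟩, ⟨z, w⟩⟩ <;> rfl

def shiftMap (n : ℕ) : (Fin (n + 1) → ℂ) →ₗ[ℂ] (Fin (n + 1) → ℂ) where
  toFun v k := if h : (k : ℕ) + 1 < n + 1 then v ⟨(k : ℕ) + 1, h⟩ else 0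
  map_add' u v := by
    funext k
    simp only [Pi.add_apply]
    split <;> simp
  map_smul' c v := by
    funext k
    simp only [Pi.smul_apply, RingHom.id_apply]
    split <;> simp

def strEquiv (n : ℕ) :
    ((Fin (n + 1) × Bool) → ℂ) ≃ₗ[ℂ] (Fin (n + 1) → ℂ) × (Fin (n + 1) → ℂ) where
  toFun v := (fun k => v (k, false), fun k => v (k, true))
  invFun w p := if p.2 then w.2 p.1 else w.1 p.1
  map_add' _ _ := rfl
  map_smul' _ _ := rfl
  left_inv v := by
    funext ⟨k, b⟩
    cases b <;> rfl
  right_inv w := rfl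

theorem Mstring_iso (n : ℕ) : RepIso (Mstring n) (srep (Fin (n + 1) → ℂ) (shiftMap n)) :=
  ⟨strEquiv n, strEquiv n, fun _ => rfl, fun _ => rfl, fun _ => rfl⟩

theorem King.list (l : List ℕ) : King (dsumList (l.map Mstring)) := by
  induction l with
  | nil =>
    apply King.of_inj
    intro x y _
    exact Subsingleton.elim (α := Fin 0 → ℂ) x y
  | cons n l ih => exact King.dsum (King.of_iso (Mstring_iso n) (King.srep _ _)) ih

/-- Splitting off a Jordan block. -/
theorem split_block {U : Type} [AddCommGroup U] [Module ℂ U] [FiniteDimensional ℂ U]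
    (Q : U →ₗ[ℂ] U) (n : ℕ) (hQ : Q ^ (n + 1) = 0) (hn : Q ^ n ≠ 0) :
    ∃ (K : Submodule ℂ U) (hK : ∀ x ∈ K, Q x ∈ K) (e : ((Fin (n + 1) → ℂ) × K) ≃ₗ[ℂ] U),
      ∀ v, e ((shiftMap n).prodMap (Q.restrict hK) v) = Q (e v) := by
  obtain ⟨x, hx⟩ : ∃ x, (Q ^ n) x ≠ 0 := by
    by_contra! h
    exact hn (LinearMap.ext h)
  obtain ⟨f, hf⟩ : ∃ f : Module.Dual ℂ U, f ((Q ^ n) x) ≠ 0 := by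
    by_contra! h
    exact hx ((Module.forall_dual_apply_eq_zero_iff ℂ _).1 h)
  have hQ' : ∀ m, n < m → ∀ y, (Q ^ m) y = 0 := by
    intro m hm y
    rw [pow_eq_zero_of_le (by omega : n + 1 ≤ m) hQ]; rfl
  let Φ : U →ₗ[ℂ] (Fin (n + 1) → ℂ) := LinearMap.pi (fun i => f ∘ₗ (Q ^ (i : ℕ)))
  have hΦ : ∀ y i, Φ y i = f ((Q ^ (i : ℕ)) y) := fun y i => rfl
  have hΦQ : ∀ y, Φ (Q y) = shiftMap n (Φ y) := by
    intro y
    funext i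
    change f ((Q ^ (i : ℕ)) (Q y)) = if h : (i : ℕ) + 1 < n + 1 then f ((Q ^ ((i : ℕ) + 1)) y) else 0
    rw [← Module.End.mul_apply, ← pow_succ]
    split
    · rfl
    · rw [hQ' _ (by omega), map_zero]
  let Ψ : (Fin (n + 1) → ℂ) →ₗ[ℂ] U :=
    ∑ i : Fin (n + 1), (LinearMap.proj i).smulRight ((Q ^ (n - (i : ℕ))) x)
  have hΨ : ∀ v, Ψ v = ∑ i : Fin (n + 1), v i • ((Q ^ (n - (i : ℕ))) x) := by
    intro v
    simp [Ψ]
  have hΨQ : ∀ v, Ψ (shiftMap n v) = Q (Ψ v) := by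
    intro v
    rw [hΨ, hΨ, map_sum, Fin.sum_univ_castSucc, Fin.sum_univ_succ]
    have e1 : shiftMap n v (Fin.last n) = 0 := by simp [shiftMap]
    have e2 : Q (v 0 • (Q ^ (n - ((0 : Fin (n + 1)) : ℕ))) x) = 0 := by
      rw [map_smul, ← Module.End.mul_apply, ← pow_succ', hQ' _ (by simp), smul_zero]
    rw [e1, e2, zero_smul, add_zero, zero_add]
    apply Finset.sum_congr rfl
    intro i _
    have e3 : shiftMap n v i.castSucc = v i.succ := by
      simp [shiftMap]
      rfl
    rw [e3, map_smul, ← Module.End.mul_apply, ← pow_succ']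
    congr 3
    have := i.2
    simp
    omega
  have hinj : Function.Injective (Φ ∘ₗ Ψ) := by
    rw [injective_iff_map_eq_zero]
    intro v hv
    by_contra hne
    have hs : (Finset.univ.filter (fun i => v i ≠ 0)).Nonempty := by
      by_contra h
      apply hne
      funext i
      by_contra hi
      exact h ⟨i, by simpa using hi⟩
    set i := (Finset.univ.filter (fun i => v i ≠ 0)).max' hs with hi
    have hvi : v i ≠ 0 := by
      have := Finset.max'_mem _ hs
      simpa using this
    have hgt : ∀ j, i < j → v j = 0 := by
      intro j hj
      by_contra hj'
      have := Finset.le_max' (Finset.univ.filter (fun i => v i ≠ 0)) j (by simpa using hj')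
      exact absurd hj (not_lt.2 this)
    have h1 := congrFun hv i
    rw [LinearMap.comp_apply, hΦ, hΨ, map_sum, map_sum, Finset.sum_eq_single i] at h1
    · rw [map_smul, map_smul, ← Module.End.mul_apply, ← pow_add] at h1
      have h2 : (i : ℕ) + (n - (i : ℕ)) = n := by have := i.2; omega
      rw [h2] at h1
      simp [hvi, hf] at h1
    · intro j _ hj
      rcases lt_or_gt_of_ne hj with h | h
      · rw [map_smul, map_smul, ← Module.End.mul_apply, ← pow_add, hQ', map_zero, smul_zero]
        have : (j : ℕ) < i := h
        have := i.2
        omega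
      · rw [hgt j h]; simp
    · simp
  have hsurj : Function.Surjective (Φ ∘ₗ Ψ) := LinearMap.injective_iff_surjective.1 hinj
  have hK : ∀ y ∈ LinearMap.ker Φ, Q y ∈ LinearMap.ker Φ := by
    intro y hy
    rw [LinearMap.mem_ker] at *
    rw [hΦQ, hy, map_zero]
  refine ⟨LinearMap.ker Φ, hK,
    LinearEquiv.ofBijective (Ψ.coprod (LinearMap.ker Φ).subtype) ⟨?_, ?_⟩, ?_⟩
  · rw [injective_iff_map_eq_zero]
    rintro ⟨v, ⟨k, hk⟩⟩ h
    simp only [LinearMap.coprod_apply, Submodule.subtype_apply] at h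
    rw [LinearMap.mem_ker] at hk
    have h1 : Φ (Ψ v) = 0 := by
      have := congrArg Φ h
      rwa [map_add, hk, add_zero, map_zero] at this
    have h2 : v = 0 := hinj (by simpa using h1)
    subst h2
    rw [map_zero, zero_add] at h
    subst h
    rfl
  · intro y
    obtain ⟨v, hv⟩ := hsurj (Φ y)
    refine ⟨(v, ⟨y - Ψ v, ?_⟩), ?_⟩
    · rw [LinearMap.mem_ker, map_sub, ← hv]; simp
    · simp
  · rintro ⟨v, k⟩
    change Ψ (shiftMap n v) + Q k = Q (Ψ v + k)
    rw [hΨQ, map_add]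

theorem srep_strings (m : ℕ) : ∀ (U : Type) [AddCommGroup U] [Module ℂ U] [FiniteDimensional ℂ U]
    (Q : U →ₗ[ℂ] U), IsNilpotent Q → finrank ℂ U = m →
    ∃ l : List ℕ, RepIso (srep U Q) (dsumList (l.map Mstring)) := by
  induction m using Nat.strong_induction_on with
  | _ m ih =>
    intro U _ _ _ Q hQ hm
    by_cases hU : Subsingleton U
    · refine ⟨[], ?_⟩
      let e : (U × U) ≃ₗ[ℂ] (Fin 0 → ℂ) :=
        { toFun := 0, invFun := 0, map_add' := by simp, map_smul' := by simp
          left_inv := fun _ => Subsingleton.elim _ _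
          right_inv := fun _ => Subsingleton.elim _ _ }
      exact ⟨e, e, fun _ => Subsingleton.elim (α := Fin 0 → ℂ) _ _,
        fun _ => Subsingleton.elim (α := Fin 0 → ℂ) _ _,
        fun _ => Subsingleton.elim (α := Fin 0 → ℂ) _ _⟩
    · have hne : Nontrivial U := not_subsingleton_iff_nontrivial.1 hU
      obtain ⟨n, hn⟩ : ∃ n, nilpotencyClass Q = n + 1 :=
        Nat.exists_eq_succ_of_ne_zero (pos_nilpotencyClass_iff.2 hQ).ne'
      have h1 : Q ^ (n + 1) = 0 := hn ▸ pow_nilpotencyClass hQ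
      have h2 : Q ^ n ≠ 0 := by
        have := pow_pred_nilpotencyClass hQ
        rwa [hn] at this
      obtain ⟨K, hK, e, he⟩ := split_block Q n h1 h2
      have hd := e.finrank_eq
      rw [Module.finrank_prod, Module.finrank_fin_fun] at hd
      have hnil : IsNilpotent (Q.restrict hK) := Module.End.isNilpotent.restrict hK hQ
      obtain ⟨l, hl⟩ := ih (finrank ℂ K) (by omega) K (Q.restrict hK) hnil rfl
      refine ⟨n :: l, ?_⟩
      exact ((srep_iso _ _ e he).symm.trans (srep_prod _ _)).trans
        (RepIso.dsum_congr (Mstring_iso n).symm hl)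

/-! ## Decomposition -/

/-- Semistability makes `b c a` injective on suitable subspaces. -/
theorem inj_of_king (M : BarbellRep) (hM : King M) (X : Submodule ℂ M.V1)
    (h : M.V1 →ₗ[ℂ] M.V2) (hh : ∀ x, h x = M.fb (M.fc (M.fa x)))
    (hX : ∀ x ∈ X, M.fc x ∈ X.map h) : ∀ x ∈ X, h x = 0 → x = 0 := by
  have haa : ∀ x, M.fa (M.fa x) = 0 := fun x => LinearMap.congr_fun M.rel_a x
  have hbb : ∀ x, M.fb (M.fb x) = 0 := fun x => LinearMap.congr_fun M.rel_b x
  have hbh : ∀ y ∈ X.map h, M.fb y = 0 := by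
    rintro _ ⟨x, -, rfl⟩
    rw [hh, hbb]
  set A := X.map M.fa with hA
  have hk := hM ⟨X ⊔ A, A.map M.fc ⊔ X.map h, ?_, ?_, ?_⟩
  · simp only [] at hk
    have d1 := Submodule.finrank_sup_add_finrank_inf_eq X A
    have d2 := Submodule.finrank_sup_add_finrank_inf_eq (A.map M.fc) (X.map h)
    have d3 := frk X h
    have d4 := frk A M.fc
    have hle : X ⊓ A ≤ X ⊓ LinearMap.ker h := by
      rintro x ⟨hx, hxA⟩
      refine ⟨hx, ?_⟩
      obtain ⟨y, hy, rfl⟩ := hxA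
      change h _ = 0
      rw [hh, haa]; simp
    have d5 := Submodule.finrank_mono hle
    have e1 : X ⊓ A = X ⊓ LinearMap.ker h := Submodule.eq_of_le_of_finrank_le hle (by omega)
    have e2 : A ⊓ LinearMap.ker M.fc = ⊥ := Submodule.finrank_eq_zero.1 (by omega)
    have e3 : A.map M.fc ⊓ X.map h = ⊥ := Submodule.finrank_eq_zero.1 (by omega)
    intro x hx hx0
    have hxA : x ∈ X ⊓ A := by rw [e1]; exact ⟨hx, hx0⟩
    have hc : M.fc x ∈ A.map M.fc ⊓ X.map h := ⟨⟨x, hxA.2, rfl⟩, hX x hx⟩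
    rw [e3, Submodule.mem_bot] at hc
    have : x ∈ A ⊓ LinearMap.ker M.fc := ⟨hxA.2, hc⟩
    rwa [e2, Submodule.mem_bot] at this
  · intro x hx
    obtain ⟨y, hy, z, hz, rfl⟩ := Submodule.mem_sup.1 hx
    obtain ⟨w, hw, rfl⟩ := hz
    rw [map_add, haa, add_zero]
    exact Submodule.mem_sup_right ⟨y, hy, rfl⟩
  · intro x hx
    obtain ⟨y, hy, z, hz, rfl⟩ := Submodule.mem_sup.1 hx
    rw [map_add, hbh z hz, add_zero]
    obtain ⟨_, ⟨w, hw, rfl⟩, rfl⟩ := hy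
    exact Submodule.mem_sup_right ⟨w, hw, hh w⟩
  · intro x hx
    obtain ⟨y, hy, z, hz, rfl⟩ := Submodule.mem_sup.1 hx
    rw [map_add]
    exact add_mem (Submodule.mem_sup_right (hX y hy)) (Submodule.mem_sup_left ⟨z, hz, rfl⟩)

theorem exists_regular (M : BarbellRep) (hM : King M) :
    ∃ t : ℂ, t ≠ 0 ∧
      Function.Injective (M.fc + t • (M.fb ∘ₗ M.fc ∘ₗ M.fa)) := by
  set h := M.fb ∘ₗ M.fc ∘ₗ M.fa with hdef
  by_contra! hcon
  have hx : ∀ t : ℂ, ∃ x : M.V1, t ≠ 0 → x ≠ 0 ∧ M.fc x = (-t) • h x := by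
    intro t
    by_cases ht : t = 0
    · exact ⟨0, fun h => absurd ht h⟩
    · have := hcon t ht
      rw [injective_iff_map_eq_zero] at this
      push Not at this
      obtain ⟨x, h1, h2⟩ := this
      refine ⟨x, fun _ => ⟨h2, ?_⟩⟩
      rw [LinearMap.add_apply, LinearMap.smul_apply] at h1
      rw [neg_smul]
      exact eq_neg_of_add_eq_zero_left h1
  choose x hx using hx
  set X := Submodule.span ℂ (x '' {t | t ≠ 0}) with hXdef
  have hmem : ∀ t ≠ 0, x t ∈ X := fun t ht => Submodule.subset_span ⟨t, ht, rfl⟩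
  have hX : ∀ y ∈ X, M.fc y ∈ X.map h := by
    intro y hy
    have : X ≤ (X.map h).comap M.fc := by
      rw [hXdef, Submodule.span_le]
      rintro _ ⟨t, ht, rfl⟩
      change M.fc (x t) ∈ X.map h
      rw [(hx t ht).2]
      exact Submodule.smul_mem _ _ ⟨x t, hmem t ht, rfl⟩
    exact this hy
  have hinj := inj_of_king M hM X h (fun _ => rfl) hX
  obtain ⟨g, hg⟩ := LinearMap.exists_leftInverse_of_injective (h ∘ₗ X.subtype) (by
    rw [LinearMap.ker_eq_bot']
    rintro ⟨y, hy⟩ h0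
    exact Subtype.ext (hinj y hy h0))
  let N : Module.End ℂ X := g ∘ₗ M.fc ∘ₗ X.subtype
  have hN : ∀ t ≠ 0, N.HasEigenvalue (-t) := by
    intro t ht
    apply Module.End.hasEigenvalue_of_hasEigenvector (x := ⟨x t, hmem t ht⟩)
    rw [Module.End.hasEigenvector_iff, Module.End.mem_eigenspace_iff]
    constructor
    · change g (M.fc (x t)) = _
      rw [(hx t ht).2, map_smul]
      congr 1
      exact LinearMap.congr_fun hg ⟨x t, hmem t ht⟩
    · intro h0
      exact (hx t ht).1 (congrArg Subtype.val h0)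
  have hfin : (Set.univ : Set ℂ).Finite := by
    have : (Set.univ : Set ℂ) ⊆ {μ | N.HasEigenvalue μ} ∪ {0} := by
      intro s _
      by_cases hs : s = 0
      · right; exact hs
      · left
        have := hN (-s) (neg_ne_zero.2 hs)
        rwa [neg_neg] at this
    exact (Set.Finite.union (Module.End.finite_hasEigenvalue N) (Set.finite_singleton 0)).subset this
  exact Set.infinite_univ hfin

/-- Representations with both spaces equal to `V`. -/
def vrep (V : Type) [AddCommGroup V] [Module ℂ V] [FiniteDimensional ℂ V] (a b c : V →ₗ[ℂ] V)
    (ha : ∀ x, a (a x) = 0) (hb : ∀ x, b (b x) = 0) : BarbellRep where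
  V1 := V
  V2 := V
  fa := a
  fb := b
  fc := c
  rel_a := LinearMap.ext ha
  rel_b := LinearMap.ext hb

theorem nilp_case (V : Type) [AddCommGroup V] [Module ℂ V] [FiniteDimensional ℂ V]
    (a b c : V →ₗ[ℂ] V) (ha : ∀ x, a (a x) = 0) (hb : ∀ x, b (b x) = 0) (t : ℂ) (ht : t ≠ 0)
    (hc : ∀ x, c x = x - t • b (a x)) (P : Module.End ℂ V)
    (hPx : ∀ x, P x = x - t • (a (b x) + b (a x))) (hP : IsNilpotent P) :
    ∃ l : List ℕ, RepIso (vrep V a b c ha hb) (dsumList (l.map Mstring)) := by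
  have hu : IsUnit (1 - P) := hP.isUnit_one_sub
  obtain ⟨u, hu⟩ := hu
  have hux : ∀ x, (u : Module.End ℂ V) x = t • (a (b x) + b (a x)) := by
    intro x
    rw [hu, LinearMap.sub_apply, hPx]
    simp
  have hui : ∀ x, (u : Module.End ℂ V) ((↑u⁻¹ : Module.End ℂ V) x) = x := by
    intro x
    rw [← Module.End.mul_apply, Units.mul_inv]; rfl
  have hiu : ∀ x, (↑u⁻¹ : Module.End ℂ V) ((u : Module.End ℂ V) x) = x := by
    intro x
    rw [← Module.End.mul_apply, Units.inv_mul]; rfl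
  have hub : ∀ x, (u : Module.End ℂ V) (b x) = b ((u : Module.End ℂ V) x) := by
    intro x
    rw [hux, hux]
    simp [hb]
  have hib : ∀ x, (↑u⁻¹ : Module.End ℂ V) (b x) = b ((↑u⁻¹ : Module.End ℂ V) x) := by
    intro x
    rw [← hiu (b ((↑u⁻¹ : Module.End ℂ V) x)), hub, hui]
  have hPb : ∀ x, P (b x) = b (P x) := by
    intro x
    rw [hPx, hPx]
    simp [hb]
  let Q0 : Module.End ℂ V := t • ((↑u⁻¹ : Module.End ℂ V) * P)
  have hQ0 : IsNilpotent Q0 := by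
    apply IsNilpotent.smul
    apply Commute.isNilpotent_mul_left _ hP
    have : Commute (u : Module.End ℂ V) P := by
      rw [hu]
      exact (Commute.one_left P).sub_left (Commute.refl P)
    exact this.units_inv_left
  let U := LinearMap.ker b
  have hU : ∀ x ∈ U, Q0 x ∈ U := by
    intro x hx
    have hx' : b x = 0 := hx
    change b (t • (↑u⁻¹ : Module.End ℂ V) (P x)) = 0
    rw [map_smul, ← hib, ← hPb, hx']
    simp
  obtain ⟨l, hl⟩ := srep_strings _ U (Q0.restrict hU) (Module.End.isNilpotent.restrict hU hQ0) rfl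
  refine ⟨l, RepIso.trans (RepIso.symm ?_) hl⟩
  have hUb : ∀ w : U, b w = 0 := fun w => w.2
  have hinj : ∀ w : U, b (a w) = 0 → w = 0 := by
    intro w hw
    have h1 := hux w
    rw [hw, hUb, map_zero, add_zero, smul_zero] at h1
    have h2 := hiu w
    rw [h1, map_zero] at h2
    exact Subtype.ext h2.symm
  have hdec : ∀ x : V, ∃ p q : U, x = p + a q := by
    intro x
    refine ⟨⟨b (t • a ((↑u⁻¹ : Module.End ℂ V) x)), hb _⟩,
      ⟨b (t • (↑u⁻¹ : Module.End ℂ V) x), hb _⟩, ?_⟩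
    have h1 := hui x
    rw [hux] at h1
    conv_lhs => rw [← h1]
    simp only [map_smul, smul_add]
    rw [add_comm]
  have hba : ∀ p : U, ∃ v : U, b (a v) = p := by
    intro p
    have h0 : b (t • (↑u⁻¹ : Module.End ℂ V) p) = 0 := by
      rw [map_smul, ← hib, hUb, map_zero, smul_zero]
    refine ⟨⟨t • (↑u⁻¹ : Module.End ℂ V) p, h0⟩, ?_⟩
    have h1 := hux (t • (↑u⁻¹ : Module.End ℂ V) p)
    rw [h0, map_zero, zero_add, map_smul, hui] at h1
    exact (smul_right_injective V ht h1).symm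
  refine ⟨LinearEquiv.ofBijective (U.subtype.coprod (a ∘ₗ U.subtype)) ⟨?_, ?_⟩,
    LinearEquiv.ofBijective ((a ∘ₗ U.subtype).coprod (b ∘ₗ a ∘ₗ U.subtype)) ⟨?_, ?_⟩, ?_, ?_, ?_⟩
  · rw [injective_iff_map_eq_zero]
    rintro ⟨p, q⟩ h
    change (p : V) + a q = 0 at h
    have h1 : b (a q) = 0 := by
      have := congrArg b h
      rwa [map_add, hUb, zero_add, map_zero] at this
    have h2 := hinj q h1
    subst h2
    rw [Submodule.coe_zero, map_zero, add_zero] at h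
    exact Prod.ext (Subtype.ext h) rfl
  · intro x
    obtain ⟨p, q, rfl⟩ := hdec x
    exact ⟨(p, q), rfl⟩
  · rw [injective_iff_map_eq_zero]
    rintro ⟨p, q⟩ h
    change a p + b (a q) = 0 at h
    have h1 : b (a p) = 0 := by
      have := congrArg b h
      rwa [map_add, hb, add_zero, map_zero] at this
    have h2 := hinj p h1
    subst h2
    rw [Submodule.coe_zero, map_zero, zero_add] at h
    exact Prod.ext rfl (hinj q h)
  · intro x
    obtain ⟨p, q, rfl⟩ := hdec x
    obtain ⟨v, hv⟩ := hba p
    refine ⟨(q, v), ?_⟩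
    change a q + b (a v) = _
    rw [hv, add_comm]
  · rintro ⟨p, q⟩
    change ((0 : U) : V) + a p = a (p + a q)
    rw [map_add, ha]
    simp
  · rintro ⟨p, q⟩
    change a (0 : U) + b (a p) = b (a p + b (a q))
    rw [map_add, hb]
    simp
  · rintro ⟨p, q⟩
    change a q + b (a (Q0 p)) = c (p + a q)
    rw [hc, map_add, ha, add_zero]
    have h0 : b (Q0 p) = 0 := hU p p.2
    have h1 : (u : Module.End ℂ V) (Q0 p) = t • b (a (Q0 p)) := by
      rw [hux, h0, map_zero, zero_add]
    have h2 : (u : Module.End ℂ V) (Q0 p) = t • (p - t • b (a p)) := by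
      change (u : Module.End ℂ V) (t • (↑u⁻¹ : Module.End ℂ V) (P p)) = _
      rw [map_smul, hui, hPx, hUb, map_zero, zero_add]
    have h3 : b (a (Q0 p)) = p - t • b (a p) := smul_right_injective V ht (h1.symm.trans h2)
    rw [h3]
    abel

theorem bij_case (V : Type) [AddCommGroup V] [Module ℂ V] [FiniteDimensional ℂ V]
    (a b c : V →ₗ[ℂ] V) (hb : ∀ x, b (b x) = 0) (t : ℂ)
    (hc : ∀ x, c x = x - t • b (a x)) (P : Module.End ℂ V)
    (hPx : ∀ x, P x = x - t • (a (b x) + b (a x))) (hP : Function.Injective P) :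
    Function.Bijective c := by
  have : Function.Injective c := by
    rw [injective_iff_map_eq_zero] at *
    intro x hx
    rw [hc, sub_eq_zero] at hx
    apply hP
    have h1 : b x = 0 := by rw [hx, map_smul, hb, smul_zero]
    rw [hPx, h1, map_zero, zero_add, ← hx, sub_self]
  exact ⟨this, LinearMap.injective_iff_surjective.1 this⟩

theorem vrep_split (V : Type) [AddCommGroup V] [Module ℂ V] [FiniteDimensional ℂ V]
    (a b c : V →ₗ[ℂ] V) (ha : ∀ x, a (a x) = 0) (hb : ∀ x, b (b x) = 0)
    (A B : Submodule ℂ V) (hAB : IsCompl A B)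
    (aA : ∀ x ∈ A, a x ∈ A) (bA : ∀ x ∈ A, b x ∈ A) (cA : ∀ x ∈ A, c x ∈ A)
    (aB : ∀ x ∈ B, a x ∈ B) (bB : ∀ x ∈ B, b x ∈ B) (cB : ∀ x ∈ B, c x ∈ B) :
    RepIso (vrep V a b c ha hb)
      (dsum (vrep A (a.restrict aA) (b.restrict bA) (c.restrict cA)
          (fun x => Subtype.ext (ha x)) (fun x => Subtype.ext (hb x)))
        (vrep B (a.restrict aB) (b.restrict bB) (c.restrict cB)
          (fun x => Subtype.ext (ha x)) (fun x => Subtype.ext (hb x)))) := by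
  apply RepIso.symm
  refine ⟨Submodule.prodEquivOfIsCompl A B hAB, Submodule.prodEquivOfIsCompl A B hAB, ?_, ?_, ?_⟩
  · rintro ⟨⟨x, hx⟩, ⟨y, hy⟩⟩
    exact (map_add a x y).symm
  · rintro ⟨⟨x, hx⟩, ⟨y, hy⟩⟩
    exact (map_add b x y).symm
  · rintro ⟨⟨x, hx⟩, ⟨y, hy⟩⟩
    exact (map_add c x y).symm

theorem vrep_decomp (V : Type) [AddCommGroup V] [Module ℂ V] [FiniteDimensional ℂ V]
    (a b c : V →ₗ[ℂ] V) (ha : ∀ x, a (a x) = 0) (hb : ∀ x, b (b x) = 0) (t : ℂ) (ht : t ≠ 0)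
    (hc : ∀ x, c x = x - t • b (a x)) :
    ∃ (M' M'' : BarbellRep) (l : List ℕ),
          Function.Bijective M'.fc ∧
          RepIso M'' (dsumList (l.map Mstring)) ∧
          RepIso (vrep V a b c ha hb) (dsum M' M'') := by
  let P : Module.End ℂ V := 1 - t • (a * b + b * a)
  have hPx : ∀ x, P x = x - t • (a (b x) + b (a x)) := fun x => rfl
  have hPa : ∀ x, P (a x) = a (P x) := by
    intro x
    rw [hPx, hPx]
    simp [ha]
  have hPb : ∀ x, P (b x) = b (P x) := by
    intro x
    rw [hPx, hPx]
    simp [hb]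
  obtain ⟨k, hk, hk0⟩ := ((LinearMap.eventually_isCompl_ker_pow_range_pow P).and
    (Filter.eventually_gt_atTop 0)).exists
  have hkx : ∀ (f : Module.End ℂ V), (∀ x, P (f x) = f (P x)) →
      ∀ x, (P ^ k) (f x) = f ((P ^ k) x) := by
    intro f hf
    have h1 : Commute P f := LinearMap.ext hf
    have h2 := h1.pow_left k
    intro x
    exact LinearMap.congr_fun h2 x
  have hker : ∀ (f : Module.End ℂ V), (∀ x, P (f x) = f (P x)) →
      ∀ x ∈ LinearMap.ker (P ^ k), f x ∈ LinearMap.ker (P ^ k) := by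
    intro f hf x hx
    rw [LinearMap.mem_ker] at *
    rw [hkx f hf, hx, map_zero]
  have hran : ∀ (f : Module.End ℂ V), (∀ x, P (f x) = f (P x)) →
      ∀ x ∈ LinearMap.range (P ^ k), f x ∈ LinearMap.range (P ^ k) := by
    rintro f hf _ ⟨x, rfl⟩
    exact ⟨f x, hkx f hf x⟩
  have hPc : ∀ x, P (c x) = c (P x) := by
    intro x
    rw [hc, hc, map_sub, map_smul, hPb, hPa]
  have hPP : ∀ x, P (P x) = P (P x) := fun _ => rfl
  have hsplit := vrep_split V a b c ha hb _ _ hk.symm (hran a hPa) (hran b hPb) (hran c hPc)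
    (hker a hPa) (hker b hPb) (hker c hPc)
  obtain ⟨l, hl⟩ := nilp_case (LinearMap.ker (P ^ k)) (a.restrict (hker a hPa))
    (b.restrict (hker b hPb)) (c.restrict (hker c hPc)) (fun x => Subtype.ext (ha x))
    (fun x => Subtype.ext (hb x)) t ht (fun x => Subtype.ext (hc x))
    (P.restrict (hker P hPP)) (fun x => Subtype.ext (hPx x)) (by
      refine ⟨k, ?_⟩
      rw [Module.End.pow_restrict]
      ext x
      exact x.2)
  refine ⟨_, _, l, ?_, hl, hsplit⟩
  apply bij_case (LinearMap.range (P ^ k)) (a.restrict (hran a hPa))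
    (b.restrict (hran b hPb)) (c.restrict (hran c hPc))
    (fun x => Subtype.ext (hb x)) t (fun x => Subtype.ext (hc x))
    (P.restrict (hran P hPP)) (fun x => Subtype.ext (hPx x))
  rw [injective_iff_map_eq_zero]
  rintro ⟨x, hx⟩ h0
  have h1 : P x = 0 := congrArg Subtype.val h0
  have h2 : x ∈ LinearMap.ker (P ^ k) := by
    rw [LinearMap.mem_ker]
    obtain ⟨j, rfl⟩ := Nat.exists_eq_succ_of_ne_zero hk0.ne'
    rw [pow_succ, Module.End.mul_apply, h1, map_zero]
  exact Subtype.ext ((Submodule.disjoint_def.1 hk.disjoint) x h2 hx)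

theorem decomp_of_king (M : BarbellRep) (hM : King M)
    (hd : finrank ℂ M.V1 = finrank ℂ M.V2) :
    ∃ (M' M'' : BarbellRep) (l : List ℕ),
          Function.Bijective M'.fc ∧
          RepIso M'' (dsumList (l.map Mstring)) ∧
          RepIso M (dsum M' M'') := by
  have haa : ∀ x, M.fa (M.fa x) = 0 := fun x => LinearMap.congr_fun M.rel_a x
  have hbb : ∀ x, M.fb (M.fb x) = 0 := fun x => LinearMap.congr_fun M.rel_b x
  obtain ⟨t, ht, hinj⟩ := exists_regular M hM
  let g : M.V1 ≃ₗ[ℂ] M.V2 := LinearEquiv.ofInjectiveOfFinrankEq _ hinj hd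
  have hg : ∀ x, g x = M.fc x + t • M.fb (M.fc (M.fa x)) := fun x => rfl
  let b' : M.V1 →ₗ[ℂ] M.V1 := g.symm.toLinearMap ∘ₗ M.fb ∘ₗ g.toLinearMap
  let c' : M.V1 →ₗ[ℂ] M.V1 := g.symm.toLinearMap ∘ₗ M.fc
  have hb' : ∀ x, b' x = g.symm (M.fb (g x)) := fun _ => rfl
  have hc' : ∀ x, c' x = g.symm (M.fc x) := fun _ => rfl
  have hb2 : ∀ x, b' (b' x) = 0 := by
    intro x
    rw [hb', hb']
    simp [hbb]
  obtain ⟨M', M'', l, h1, h2, h3⟩ := vrep_decomp M.V1 M.fa b' c' haa hb2 t ht (by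
    intro x
    apply g.injective
    rw [hc', hb', map_sub, map_smul, LinearEquiv.apply_symm_apply, LinearEquiv.apply_symm_apply,
      hg, hg, haa]
    simp)
  refine ⟨M', M'', l, h1, h2, RepIso.trans ?_ h3⟩
  refine ⟨LinearEquiv.refl ℂ _, g.symm, fun _ => rfl, ?_, fun _ => rfl⟩
  intro y
  change g.symm (M.fb y) = b' (g.symm y)
  rw [hb']
  simp
/-- Fix a central charge `Z : ℤ² → ℂ` (values on the standard basis vectors
in `ℍ`) with `φ(0,1) < φ(1,0)`.  A representation `M` of the barbell quiver with potential
with dimension vector `(d, d)`, `d ≥ 1`, is semistable if and only if `M ≅ M' ⊕ M''` where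
`f_c` of `M'` is an isomorphism and `M''` is a finite (possibly empty) direct sum of string
modules `M(acb(c⁻¹acb)ⁿ)`, `n ≥ 0`.  In particular every nonzero representation with `f_c` an
isomorphism is semistable, and each `M(acb(c⁻¹acb)ⁿ)` is semistable. -/
theorem barbell_semistable_iff_direct_sum
    (Z : ℤ × ℤ →+ ℂ)
    (hZ10 : Z (1, 0) ∈ UpperH) (hZ01 : Z (0, 1) ∈ UpperH)
    (hph : phase (Z (0, 1)) < phase (Z (1, 0))) :
    (∀ d : ℕ, 1 ≤ d → ∀ M : BarbellRep, M.dimVec = (d, d) →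
      (IsSemistable Z M ↔
        ∃ (M' M'' : BarbellRep) (l : List ℕ),
          Function.Bijective M'.fc ∧
          RepIso M'' (dsumList (l.map Mstring)) ∧
          RepIso M (dsum M' M''))) ∧
    (∀ M : BarbellRep, M.dimVec ≠ (0, 0) → Function.Bijective M.fc → IsSemistable Z M) ∧
    (∀ n : ℕ, IsSemistable Z (Mstring n)) := by
  have key : ∀ M : BarbellRep, M.dimVec ≠ (0, 0) → Function.Bijective M.fc → IsSemistable Z M := by
    intro M h0 hb
    have e : finrank ℂ M.V1 = finrank ℂ M.V2 := (LinearEquiv.ofBijective M.fc hb).finrank_eq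
    have hdim : M.dimVec = (finrank ℂ M.V1, finrank ℂ M.V1) := by
      unfold BarbellRep.dimVec
      rw [← e]
    refine (semistable_iff_king Z hZ10 hZ01 hph M (finrank ℂ M.V1) ?_ hdim).2 (King.of_inj hb.1)
    intro h
    rw [h] at hdim
    exact h0 hdim
  refine ⟨?_, key, ?_⟩
  · intro d hd M hM
    rw [semistable_iff_king Z hZ10 hZ01 hph M d (by omega) hM]
    constructor
    · intro hK
      apply decomp_of_king M hK
      simp only [BarbellRep.dimVec, Prod.mk.injEq] at hM
      omega
    · rintro ⟨M', M'', l, h1, h2, h3⟩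
      exact King.of_iso h3 (King.dsum (King.of_inj h1.1) (King.of_iso h2 (King.list l)))
  · intro n
    refine (semistable_iff_king Z hZ10 hZ01 hph (Mstring n)
      (finrank ℂ ((Fin (n + 1) × Bool) → ℂ)) ?_ rfl).2
      (King.of_iso (Mstring_iso n) (King.srep _ _))
    rw [Module.finrank_fintype_fun_eq_card]
    simp
end
end

section
/- Let M be a representation of the barbell quiver with potential whose map f_c is an isomorphism, and let N be a finite direct sum of string modules M(acb(c⁻¹acb)ⁿ) with n ≥ 0. Then every short exact sequence of representations 0 → M → E → N → 0 splits, and every short exact sequence 0 → N → E → M → 0 splits; equivalently, Ext¹(N, M) = 0 and Ext¹(M, N) = 0. -/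
/-!
# Statement 7

Work over `ℂ`.  The barbell quiver has vertices `1` and `2`, a loop `a` at vertex `1`, a
loop `b` at vertex `2`, and an arrow `c : 1 → 2`; its potential is `W = a³ + b³`, whose
Jacobian relations are `a² = 0` and `b² = 0`.  Let `M` be a representation of the barbell
quiver with potential whose map `f_c` is an isomorphism, and let `N` be a finite direct sum
of string modules `M(acb(c⁻¹acb)ⁿ)` with `n ≥ 0`.  Then every short exact sequence of
representations `0 → M → E → N → 0` splits, and every short exact sequence
`0 → N → E → M → 0` splits; equivalently `Ext¹(N, M) = 0` and `Ext¹(M, N) = 0`.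
-/

noncomputable section
open Module

/-- A morphism of barbell representations: a pair of linear maps commuting with the
structure maps. -/
structure BHom (M N : BarbellRep) where
  g1 : M.V1 →ₗ[ℂ] N.V1
  g2 : M.V2 →ₗ[ℂ] N.V2
  comm_a : ∀ x, g1 (M.fa x) = N.fa (g1 x)
  comm_b : ∀ y, g2 (M.fb y) = N.fb (g2 y)
  comm_c : ∀ x, g2 (M.fc x) = N.fc (g1 x)

/-- A (componentwise) short exact sequence `0 → Y → E → X → 0` of barbell
representations. -/
structure BSES (Y X : BarbellRep) where
  E : BarbellRep
  i : BHom Y E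
  p : BHom E X
  inj1 : Function.Injective i.g1
  inj2 : Function.Injective i.g2
  surj1 : Function.Surjective p.g1
  surj2 : Function.Surjective p.g2
  exact1 : LinearMap.range i.g1 = LinearMap.ker p.g1
  exact2 : LinearMap.range i.g2 = LinearMap.ker p.g2

/-- A short exact sequence `0 → Y → E → X → 0` splits if the projection `p` admits a
section which is a morphism of representations. -/
def BSES.IsSplit {Y X : BarbellRep} (ξ : BSES Y X) : Prop :=
  ∃ s : BHom X ξ.E, (∀ x, ξ.p.g1 (s.g1 x) = x) ∧ (∀ y, ξ.p.g2 (s.g2 y) = y)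

/-- Vanishing of the cocycle description of `Ext¹(X, Y)`. -/
def ExtVan (X Y : BarbellRep) : Prop :=
  ∀ (ha : X.V1 →ₗ[ℂ] Y.V1) (hb : X.V2 →ₗ[ℂ] Y.V2) (hc : X.V1 →ₗ[ℂ] Y.V2),
    (∀ x, ha (X.fa x) + Y.fa (ha x) = 0) → (∀ x, hb (X.fb x) + Y.fb (hb x) = 0) →
    ∃ (s1 : X.V1 →ₗ[ℂ] Y.V1) (s2 : X.V2 →ₗ[ℂ] Y.V2),
      (∀ x, s1 (X.fa x) - Y.fa (s1 x) = ha x) ∧ (∀ x, s2 (X.fb x) - Y.fb (s2 x) = hb x) ∧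
      (∀ x, s2 (X.fc x) - Y.fc (s1 x) = hc x)

theorem faa (M : BarbellRep) (x : M.V1) : M.fa (M.fa x) = 0 := LinearMap.congr_fun M.rel_a x

theorem fbb (M : BarbellRep) (x : M.V2) : M.fb (M.fb x) = 0 := LinearMap.congr_fun M.rel_b x

theorem split_of_extVan {X Y : BarbellRep} (h : ExtVan X Y) (ξ : BSES Y X) : ξ.IsSplit := by
  obtain ⟨E, i, p, inj1, inj2, surj1, surj2, exact1, exact2⟩ := ξ
  obtain ⟨t1, ht1⟩ := p.g1.exists_rightInverse_of_surjective (LinearMap.range_eq_top.2 surj1)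
  obtain ⟨t2, ht2⟩ := p.g2.exists_rightInverse_of_surjective (LinearMap.range_eq_top.2 surj2)
  obtain ⟨r1, hr1⟩ := i.g1.exists_leftInverse_of_injective (LinearMap.ker_eq_bot.2 inj1)
  obtain ⟨r2, hr2⟩ := i.g2.exists_leftInverse_of_injective (LinearMap.ker_eq_bot.2 inj2)
  have pt1 : ∀ x, p.g1 (t1 x) = x := fun x => LinearMap.congr_fun ht1 x
  have pt2 : ∀ x, p.g2 (t2 x) = x := fun x => LinearMap.congr_fun ht2 x
  have ri1 : ∀ x, r1 (i.g1 x) = x := fun x => LinearMap.congr_fun hr1 x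
  have ri2 : ∀ x, r2 (i.g2 x) = x := fun x => LinearMap.congr_fun hr2 x
  have ir1 : ∀ e, p.g1 e = 0 → i.g1 (r1 e) = e := by
    intro e he
    have : e ∈ LinearMap.range i.g1 := by rw [exact1]; exact he
    obtain ⟨y, rfl⟩ := this
    rw [ri1]
  have ir2 : ∀ e, p.g2 e = 0 → i.g2 (r2 e) = e := by
    intro e he
    have : e ∈ LinearMap.range i.g2 := by rw [exact2]; exact he
    obtain ⟨y, rfl⟩ := this
    rw [ri2]
  have pi1 : ∀ y, p.g1 (i.g1 y) = 0 := by
    intro y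
    have : i.g1 y ∈ LinearMap.ker p.g1 := by rw [← exact1]; exact ⟨y, rfl⟩
    exact this
  have pi2 : ∀ y, p.g2 (i.g2 y) = 0 := by
    intro y
    have : i.g2 y ∈ LinearMap.ker p.g2 := by rw [← exact2]; exact ⟨y, rfl⟩
    exact this
  have ia : ∀ x, i.g1 (r1 (E.fa (t1 x) - t1 (X.fa x))) = E.fa (t1 x) - t1 (X.fa x) := by
    intro x; apply ir1; simp [p.comm_a, pt1]
  have ib : ∀ x, i.g2 (r2 (E.fb (t2 x) - t2 (X.fb x))) = E.fb (t2 x) - t2 (X.fb x) := by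
    intro x; apply ir2; simp [p.comm_b, pt2]
  have ic : ∀ x, i.g2 (r2 (E.fc (t1 x) - t2 (X.fc x))) = E.fc (t1 x) - t2 (X.fc x) := by
    intro x; apply ir2; simp [p.comm_c, pt1, pt2]
  obtain ⟨s1, s2, h1, h2, h3⟩ := h (r1 ∘ₗ (E.fa ∘ₗ t1 - t1 ∘ₗ X.fa))
    (r2 ∘ₗ (E.fb ∘ₗ t2 - t2 ∘ₗ X.fb)) (r2 ∘ₗ (E.fc ∘ₗ t1 - t2 ∘ₗ X.fc))
    (by
      intro x
      apply inj1
      simp only [LinearMap.comp_apply, LinearMap.sub_apply]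
      rw [map_add, i.comm_a, ia, ia, map_sub, faa, faa]
      simp)
    (by
      intro x
      apply inj2
      simp only [LinearMap.comp_apply, LinearMap.sub_apply]
      rw [map_add, i.comm_b, ib, ib, map_sub, fbb, fbb]
      simp)
  simp only [LinearMap.comp_apply, LinearMap.sub_apply] at h1 h2 h3
  refine ⟨⟨t1 + i.g1 ∘ₗ s1, t2 + i.g2 ∘ₗ s2, ?_, ?_, ?_⟩, ?_, ?_⟩
  · intro x
    have := ia x
    rw [← h1, map_sub, i.comm_a] at this
    simp only [LinearMap.add_apply, LinearMap.comp_apply, map_add]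
    rw [← sub_eq_zero] at this ⊢
    rw [← this]
    abel
  · intro x
    have := ib x
    rw [← h2, map_sub, i.comm_b] at this
    simp only [LinearMap.add_apply, LinearMap.comp_apply, map_add]
    rw [← sub_eq_zero] at this ⊢
    rw [← this]
    abel
  · intro x
    have := ic x
    rw [← h3, map_sub, i.comm_c] at this
    simp only [LinearMap.add_apply, LinearMap.comp_apply, map_add]
    rw [← sub_eq_zero] at this ⊢
    rw [← this]
    abel
  · intro x; simp [pt1, pi1]
  · intro x; simp [pt2, pi2]

theorem extVan_dsum_left {A B Y : BarbellRep} (hA : ExtVan A Y) (hB : ExtVan B Y) :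
    ExtVan (dsum A B) Y := by
  intro (ha : A.V1 × B.V1 →ₗ[ℂ] Y.V1) (hb : A.V2 × B.V2 →ₗ[ℂ] Y.V2)
    (hc : A.V1 × B.V1 →ₗ[ℂ] Y.V2) ca cb
  have ca' : ∀ x : A.V1 × B.V1, ha (A.fa x.1, B.fa x.2) + Y.fa (ha x) = 0 := ca
  have cb' : ∀ x : A.V2 × B.V2, hb (A.fb x.1, B.fb x.2) + Y.fb (hb x) = 0 := cb
  obtain ⟨s1, s2, h1, h2, h3⟩ := hA (ha ∘ₗ LinearMap.inl ℂ _ _) (hb ∘ₗ LinearMap.inl ℂ _ _)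
    (hc ∘ₗ LinearMap.inl ℂ _ _) (fun x => by simpa using ca' (x, 0))
    (fun x => by simpa using cb' (x, 0))
  obtain ⟨q1, q2, k1, k2, k3⟩ := hB (ha ∘ₗ LinearMap.inr ℂ _ _) (hb ∘ₗ LinearMap.inr ℂ _ _)
    (hc ∘ₗ LinearMap.inr ℂ _ _) (fun x => by simpa using ca' (0, x))
    (fun x => by simpa using cb' (0, x))
  simp only [LinearMap.comp_apply, LinearMap.inl_apply, LinearMap.inr_apply] at h1 h2 h3 k1 k2 k3
  refine ⟨s1.coprod q1, s2.coprod q2, ?_, ?_, ?_⟩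
  · rintro ⟨x, y⟩
    have e : ha (x, y) = ha (x, 0) + ha (0, y) := by rw [← map_add]; simp
    change (s1 (A.fa x) + q1 (B.fa y)) - Y.fa (s1 x + q1 y) = ha (x, y)
    rw [e, ← h1, ← k1, map_add]; abel
  · rintro ⟨x, y⟩
    have e : hb (x, y) = hb (x, 0) + hb (0, y) := by rw [← map_add]; simp
    change (s2 (A.fb x) + q2 (B.fb y)) - Y.fb (s2 x + q2 y) = hb (x, y)
    rw [e, ← h2, ← k2, map_add]; abel
  · rintro ⟨x, y⟩
    have e : hc (x, y) = hc (x, 0) + hc (0, y) := by rw [← map_add]; simp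
    change (s2 (A.fc x) + q2 (B.fc y)) - Y.fc (s1 x + q1 y) = hc (x, y)
    rw [e, ← h3, ← k3, map_add]; abel

theorem extVan_dsum_right {A B X : BarbellRep} (hA : ExtVan X A) (hB : ExtVan X B) :
    ExtVan X (dsum A B) := by
  intro (ha : X.V1 →ₗ[ℂ] A.V1 × B.V1) (hb : X.V2 →ₗ[ℂ] A.V2 × B.V2)
    (hc : X.V1 →ₗ[ℂ] A.V2 × B.V2) ca cb
  have ca' : ∀ x, ha (X.fa x) + (A.fa (ha x).1, B.fa (ha x).2) = 0 := ca
  have cb' : ∀ x, hb (X.fb x) + (A.fb (hb x).1, B.fb (hb x).2) = 0 := cb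
  obtain ⟨s1, s2, h1, h2, h3⟩ := hA (LinearMap.fst ℂ _ _ ∘ₗ ha) (LinearMap.fst ℂ _ _ ∘ₗ hb)
    (LinearMap.fst ℂ _ _ ∘ₗ hc) (fun x => congrArg Prod.fst (ca' x))
    (fun x => congrArg Prod.fst (cb' x))
  obtain ⟨q1, q2, k1, k2, k3⟩ := hB (LinearMap.snd ℂ _ _ ∘ₗ ha) (LinearMap.snd ℂ _ _ ∘ₗ hb)
    (LinearMap.snd ℂ _ _ ∘ₗ hc) (fun x => congrArg Prod.snd (ca' x))
    (fun x => congrArg Prod.snd (cb' x))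
  exact ⟨s1.prod q1, s2.prod q2, fun x => Prod.ext (h1 x) (k1 x),
    fun x => Prod.ext (h2 x) (k2 x), fun x => Prod.ext (h3 x) (k3 x)⟩

theorem extVan_zero_left (Y : BarbellRep) : ExtVan zeroRep Y := by
  intro ha hb hc _ _
  have z1 : ∀ x : zeroRep.V1, x = 0 := fun x => Subsingleton.elim (α := Fin 0 → ℂ) x 0
  have z2 : ∀ x : zeroRep.V2, x = 0 := fun x => Subsingleton.elim (α := Fin 0 → ℂ) x 0
  refine ⟨0, 0, fun x => ?_, fun x => ?_, fun x => ?_⟩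
  · rw [z1 x]; simp
  · rw [z2 x]; simp
  · rw [z1 x]; simp

theorem extVan_zero_right (X : BarbellRep) : ExtVan X zeroRep := by
  intro ha hb hc _ _
  exact ⟨0, 0, fun x => Subsingleton.elim (α := Fin 0 → ℂ) _ _,
    fun x => Subsingleton.elim (α := Fin 0 → ℂ) _ _,
    fun x => Subsingleton.elim (α := Fin 0 → ℂ) _ _⟩

/-- Basis vectors. -/
def zb (n : ℕ) (p : Fin (n + 1) × Bool) : (Fin (n + 1) × Bool) → ℂ := Pi.single p 1

theorem strFa_false (n : ℕ) (k : Fin (n + 1)) : strFa n (zb n (k, false)) = zb n (k, true) := by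
  funext ⟨j, b⟩
  cases b <;> simp [strFa, zb, Pi.single_apply]

theorem strFa_true (n : ℕ) (k : Fin (n + 1)) : strFa n (zb n (k, true)) = 0 := by
  funext ⟨j, b⟩
  cases b <;> simp [strFa, zb, Pi.single_apply]

theorem strFc_true (n : ℕ) (k : Fin (n + 1)) : strFc n (zb n (k, true)) = zb n (k, false) := by
  funext ⟨j, b⟩
  cases b
  · simp [strFc, zb, Pi.single_apply]
  · simp only [strFc, zb, Pi.single_apply, LinearMap.coe_mk, AddHom.coe_mk, Prod.mk.injEq]
    simp

theorem strFc_zero (n : ℕ) : strFc n (zb n (0, false)) = 0 := by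
  funext ⟨j, b⟩
  cases b
  · simp [strFc, zb]
  · simp only [strFc, zb, Pi.single_apply, LinearMap.coe_mk, AddHom.coe_mk, Prod.mk.injEq,
      if_true, and_true, Pi.zero_apply]
    split
    · exact if_neg (fun h => by simpa using congrArg Fin.val h)
    · rfl

theorem strFc_succ (n : ℕ) (k : ℕ) (h : k + 1 < n + 1) :
    strFc n (zb n (⟨k + 1, h⟩, false)) = zb n (⟨k, by omega⟩, true) := by
  funext ⟨j, b⟩
  cases b
  · simp [strFc, zb, Pi.single_apply]
  · simp only [strFc, zb, Pi.single_apply, LinearMap.coe_mk, AddHom.coe_mk, Prod.mk.injEq,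
      Fin.ext_iff, if_true, and_true]
    have := j.2
    split_ifs <;> first | rfl | omega

theorem ext_zb (n : ℕ) {W : Type} [AddCommGroup W] [Module ℂ W]
    (f g : ((Fin (n + 1) × Bool) → ℂ) →ₗ[ℂ] W)
    (h : ∀ p, f (zb n p) = g (zb n p)) : f = g := by
  refine (Pi.basisFun ℂ (Fin (n + 1) × Bool)).ext fun p => ?_
  simpa [zb] using h p

theorem exists_zb (n : ℕ) {W : Type} [AddCommGroup W] [Module ℂ W]
    (w : Fin (n + 1) × Bool → W) :
    ∃ f : ((Fin (n + 1) × Bool) → ℂ) →ₗ[ℂ] W, ∀ p, f (zb n p) = w p := by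
  refine ⟨(Pi.basisFun ℂ (Fin (n + 1) × Bool)).constr ℂ w, fun p => ?_⟩
  have := (Pi.basisFun ℂ (Fin (n + 1) × Bool)).constr_basis ℂ w p
  simpa [zb] using this

theorem extVan_string_left (M : BarbellRep) (hM : Function.Bijective M.fc) (n : ℕ) :
    ExtVan (Mstring n) M := by
  intro (ha : ((Fin (n + 1) × Bool) → ℂ) →ₗ[ℂ] M.V1)
    (hb : ((Fin (n + 1) × Bool) → ℂ) →ₗ[ℂ] M.V2)
    (hc : ((Fin (n + 1) × Bool) → ℂ) →ₗ[ℂ] M.V2) ca cb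
  have ca' : ∀ x, ha (strFa n x) + M.fa (ha x) = 0 := ca
  have cb' : ∀ x, hb (strFa n x) + M.fb (hb x) = 0 := cb
  obtain ⟨ci, hci⟩ := hM.2.hasRightInverse
  let z : ℕ → Bool → (Fin (n + 1) × Bool) → ℂ := fun k b =>
    if h : k < n + 1 then zb n (⟨k, h⟩, b) else 0
  let V : ℕ → M.V1 → M.V2 := fun k u =>
    M.fc (M.fa u + ha (z k false)) + hc (z k true)
  let u : ℕ → M.V1 := fun k => Nat.rec (ci (-hc (z 0 false)))
    (fun k u => ci (M.fb (V k u) + hb (z k false) - hc (z (k + 1) false))) k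
  have u0 : M.fc (u 0) = -hc (z 0 false) := hci _
  have us : ∀ k, M.fc (u (k + 1)) = M.fb (V k (u k)) + hb (z k false) - hc (z (k + 1) false) :=
    fun k => hci _
  have zz : ∀ (k : Fin (n + 1)) b, z k b = zb n (k, b) := by
    intro k b; exact dif_pos k.2
  obtain ⟨s1, hs1⟩ := exists_zb n (fun p => if p.2 then M.fa (u p.1) + ha (zb n (p.1, false))
    else u p.1)
  obtain ⟨s2, hs2⟩ := exists_zb n (fun p => if p.2 then
    M.fb (V p.1 (u p.1)) + hb (zb n (p.1, false)) else V p.1 (u p.1))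
  refine ⟨s1, s2, ?_, ?_, ?_⟩
  · refine fun x => LinearMap.congr_fun (ext_zb n (s1 ∘ₗ strFa n - M.fa ∘ₗ s1) ha ?_) x
    rintro ⟨k, b⟩
    have := ca' (zb n (k, false))
    rw [strFa_false] at this
    cases b
    · simp [strFa_false, hs1]
    · simp [strFa_true, hs1, faa]
      rw [eq_neg_of_add_eq_zero_left this]
  · refine fun x => LinearMap.congr_fun (ext_zb n (s2 ∘ₗ strFa n - M.fb ∘ₗ s2) hb ?_) x
    rintro ⟨k, b⟩
    have := cb' (zb n (k, false))
    rw [strFa_false] at this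
    cases b
    · simp [strFa_false, hs2]
    · simp [strFa_true, hs2, fbb]
      rw [eq_neg_of_add_eq_zero_left this]
  · refine fun x => LinearMap.congr_fun (ext_zb n (s2 ∘ₗ strFc n - M.fc ∘ₗ s1) hc ?_) x
    rintro ⟨⟨k, hk⟩, b⟩
    cases b
    · rcases k with _ | k
      · have e : zb n (⟨0, hk⟩, false) = z 0 false := (zz 0 false).symm
        have := strFc_zero n
        simp only [LinearMap.sub_apply, LinearMap.comp_apply]
        rw [hs1]
        change s2 (strFc n (zb n (0, false))) - _ = _
        rw [this, e]
        simp [u0]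
      · have hk' : k < n + 1 := by omega
        have e : zb n (⟨k + 1, hk⟩, false) = z (k + 1) false := (zz ⟨k + 1, hk⟩ false).symm
        have e' : zb n (⟨k, hk'⟩, false) = z k false := (zz ⟨k, hk'⟩ false).symm
        simp only [LinearMap.sub_apply, LinearMap.comp_apply]
        rw [strFc_succ, hs1, hs2]
        simp [us, e, e']
    · simp only [LinearMap.sub_apply, LinearMap.comp_apply]
      rw [strFc_true, hs1, hs2]
      simp only [V]
      have e1 := zz ⟨k, hk⟩ true
      have e2 := zz ⟨k, hk⟩ false
      simp only at e1 e2
      simp [e1, e2]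

theorem extVan_string_right (M : BarbellRep) (hM : Function.Bijective M.fc) (n : ℕ) :
    ExtVan M (Mstring n) := by
  intro (ha : M.V1 →ₗ[ℂ] ((Fin (n + 1) × Bool) → ℂ))
    (hb : M.V2 →ₗ[ℂ] ((Fin (n + 1) × Bool) → ℂ))
    (hc : M.V1 →ₗ[ℂ] ((Fin (n + 1) × Bool) → ℂ)) ca cb
  have ca' : ∀ x, ha (M.fa x) + strFa n (ha x) = 0 := ca
  have cb' : ∀ x, hb (M.fb x) + strFa n (hb x) = 0 := cb
  let C : M.V1 ≃ₗ[ℂ] M.V2 := LinearEquiv.ofBijective M.fc hM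
  have hC : ∀ x, C.symm (M.fc x) = x := fun x => C.symm_apply_apply x
  let π : ℕ → Bool → ((Fin (n + 1) × Bool) → ℂ) →ₗ[ℂ] ℂ := fun k b =>
    if h : k < n + 1 then LinearMap.proj (⟨k, h⟩, b) else 0
  have hπ : ∀ (k : ℕ) (h : k < n + 1) b v, π k b v = v (⟨k, h⟩, b) := by
    intro k h b v; simp only [π, dif_pos h]; rfl
  -- `ψ_k` in terms of `φ_{k+1}`
  let Ψ : ℕ → (M.V1 →ₗ[ℂ] ℂ) → (M.V2 →ₗ[ℂ] ℂ) := fun k φ =>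
    (π k true ∘ₗ hc + (φ ∘ₗ M.fa - π (k + 1) true ∘ₗ ha)) ∘ₗ C.symm.toLinearMap
  let G : ℕ → (M.V1 →ₗ[ℂ] ℂ) → (M.V1 →ₗ[ℂ] ℂ) := fun k φ =>
    Ψ k φ ∘ₗ M.fb ∘ₗ M.fc - π k true ∘ₗ hb ∘ₗ M.fc - π k false ∘ₗ hc
  let F : ℕ → (M.V1 →ₗ[ℂ] ℂ) := fun j => Nat.rec 0 (fun j f => G (n - j) f) j
  have F0 : F 0 = 0 := rfl
  have FS : ∀ j, F (j + 1) = G (n - j) (F j) := fun j => rfl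
  let φ : ℕ → (M.V1 →ₗ[ℂ] ℂ) := fun k => F (n + 1 - k)
  have φtop : φ (n + 1) = 0 := by simp [φ, F0]
  have φs : ∀ k, k < n + 1 → φ k = G k (φ (k + 1)) := by
    intro k hk
    have e1 : n + 1 - k = (n - k) + 1 := by omega
    have e2 : n + 1 - (k + 1) = n - k := by omega
    have e3 : n - (n - k) = k := by omega
    simp only [φ]
    rw [e1, FS, e2, e3]
  let ψ : ℕ → (M.V2 →ₗ[ℂ] ℂ) := fun k => Ψ k (φ (k + 1))
  have hψ : ∀ k x, ψ k (M.fc x) = π k true (hc x) + (φ (k + 1) (M.fa x) - π (k + 1) true (ha x)) := by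
    intro k x
    simp [ψ, Ψ, hC]
  have hφ : ∀ k, k < n + 1 → ∀ x, φ k x =
      ψ k (M.fb (M.fc x)) - π k true (hb (M.fc x)) - π k false (hc x) := by
    intro k hk x
    rw [φs k hk]
    rfl
  let s1 : M.V1 →ₗ[ℂ] ((Fin (n + 1) × Bool) → ℂ) := LinearMap.pi fun p =>
    if p.2 then φ p.1 else φ p.1 ∘ₗ M.fa - π p.1 true ∘ₗ ha
  let s2 : M.V2 →ₗ[ℂ] ((Fin (n + 1) × Bool) → ℂ) := LinearMap.pi fun p =>
    if p.2 then ψ p.1 else ψ p.1 ∘ₗ M.fb - π p.1 true ∘ₗ hb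
  have s1t : ∀ k x, s1 x (k, true) = φ k x := fun k x => by simp [s1]
  have s1f : ∀ k x, s1 x (k, false) = φ k (M.fa x) - ha x (k, true) := fun k x => by
    simp [s1, hπ k k.2]
  have s2t : ∀ k x, s2 x (k, true) = ψ k x := fun k x => by simp [s2]
  have s2f : ∀ k x, s2 x (k, false) = ψ k (M.fb x) - hb x (k, true) := fun k x => by
    simp [s2, hπ k k.2]
  have at' : ∀ v k, strFa n v (k, true) = v (k, false) := fun v k => by simp [strFa]
  have af' : ∀ v k, strFa n v (k, false) = 0 := fun v k => by simp [strFa]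
  have cf' : ∀ v k, strFc n v (k, false) = v (k, true) := fun v k => by simp [strFc]
  refine ⟨s1, s2, ?_, ?_, ?_⟩
  · intro x
    change s1 (M.fa x) - strFa n (s1 x) = ha x
    funext ⟨k, b⟩
    have := congrFun (ca' x) (k, true)
    simp only [Pi.add_apply, Pi.zero_apply, at'] at this
    cases b
    · simp only [Pi.sub_apply, s1f, af', faa, map_zero]
      linear_combination -this
    · simp only [Pi.sub_apply, s1t, at', s1f]
      ring
  · intro x
    change s2 (M.fb x) - strFa n (s2 x) = hb x
    funext ⟨k, b⟩
    have := congrFun (cb' x) (k, true)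
    simp only [Pi.add_apply, Pi.zero_apply, at'] at this
    cases b
    · simp only [Pi.sub_apply, s2f, af', fbb, map_zero]
      linear_combination -this
    · simp only [Pi.sub_apply, s2t, at', s2f]
      ring
  · intro x
    change s2 (M.fc x) - strFc n (s1 x) = hc x
    funext ⟨k, b⟩
    cases b
    · simp only [Pi.sub_apply, s2f, cf', s1t]
      rw [hφ k k.2, hπ k k.2, hπ k k.2]
      ring
    · simp only [Pi.sub_apply, s2t]
      rw [hψ, hπ k k.2]
      by_cases h : (k : ℕ) + 1 < n + 1
      · have : strFc n (s1 x) (k, true) = s1 x (⟨k + 1, h⟩, false) := by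
          simp only [strFc, LinearMap.coe_mk, AddHom.coe_mk, if_true, dif_pos h]
        rw [this, s1f, hπ (k + 1) h]
        ring
      · have : strFc n (s1 x) (k, true) = 0 := by
          simp only [strFc, LinearMap.coe_mk, AddHom.coe_mk, if_true, dif_neg h]
        have hk : (k : ℕ) + 1 = n + 1 := by have := k.2; omega
        rw [this, hk, φtop]
        simp [π]

/-- Let `M` be a representation of the barbell quiver with potential whose
map `f_c` is an isomorphism, and let `N = ⊕_{n ∈ l} M(acb(c⁻¹acb)ⁿ)` be a finite direct sum
of the string modules.  Then every short exact sequence `0 → M → E → N → 0` splits and every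
short exact sequence `0 → N → E → M → 0` splits; equivalently, `Ext¹(N, M) = 0` and
`Ext¹(M, N) = 0`. -/
theorem barbell_no_extensions
    (M : BarbellRep) (hM : Function.Bijective M.fc) (l : List ℕ) :
    (∀ ξ : BSES M (dsumList (l.map Mstring)), ξ.IsSplit) ∧
    (∀ ξ : BSES (dsumList (l.map Mstring)) M, ξ.IsSplit) := by
  have h : ExtVan (dsumList (l.map Mstring)) M ∧ ExtVan M (dsumList (l.map Mstring)) := by
    induction l with
    | nil => exact ⟨extVan_zero_left M, extVan_zero_right M⟩
    | cons n l ih => exact ⟨extVan_dsum_left (extVan_string_left M hM n) ih.1,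
        extVan_dsum_right (extVan_string_right M hM n) ih.2⟩
  exact ⟨split_of_extVan h.1, split_of_extVan h.2⟩
end
end
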